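/- arXiv:2211.09465 — 2 statements merged into one kernel-verified Lean document; each statement's English description precedes it below -/
import Mathlib

section
/- There is an absolute constant c > 0 such that the following holds for every prime p. Let P be a finite set of points in F_p^2 with |P| ≤ p^{15/13}, let C be a finite set of irreducible cubic curves in F_p^2, and let k ≥ 11 be an integer. Then the number of k-rich curves satisfies |C_k| ≤ c·( |P|^{39/4}/k^{43/4} + |P|^8/k^8 ). -/
/-!
The proof has two halves: a bound for rich lines in the projective plane over `ZMod p`, and a
reduction of cubic curves to lines through linear systems.

**From cubics to lines.** Each rich curve is represented by one of its equations, an element of the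
ten-dimensional space of polynomials of degree at most three. Fixing a point of `P` on the curves
lowers the dimension of the linear system by one, and by Bézout an irreducible cubic has at most
nine points in the base locus of a system that contains another, non-proportional cubic. Double
counting therefore costs a factor `|P| / (k - 9)` per dimension (`CubicFamily.step`), and seven steps
lead to nets. A net of cubics is a rational map to the projective plane which turns its members into
lines and has at most nine points of a given irreducible member in a fibre, so `k`-rich cubics
become lines with at least `max 2 (k / 50)` points (`CubicFamily.exists_richConfig`). Multiplying
`(|P| / k) ^ 7` by the bound of `rich_lines` gives the theorem. The hypothesis `k ≥ 11` guarantees two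
distinct image points on each line.

**Rich lines** (`rich_lines`): `N ≤ p ^ (15 / 13)` points determine
`O(N ^ (11 / 4) / κ ^ (15 / 4) + N / κ)` lines with at least `κ` points each, `κ ≥ 2`. For two points
`q₁, q₂`, the incidences `(x, u)` for which `x` is on a line of the family through `q₁` and on another
one through `q₂` are, after moving `q₁, q₂` to infinity, incidences of lines `Y = m X + c` with a
Cartesian product `A × B`. By Cauchy–Schwarz their number is controlled by the energy, the number of
solutions of `m a + c = m' a' + c'` (`card_gridPairs_sq`, `energy_bound`). Summing over `q₁, q₂`
counts triples of concurrent lines weighted by the points on two of them (`RichConfig.star_count`),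
which gives the lower bound; comparison of the two yields the estimate.

**Energy.** The equation `m a' + c = m' a + c'` says that two lines in three-space meet, where the
lines have directions `(1, t, t²)` and are parametrised by `(t, y, w)` (`lineMap`, `Meets`). After
twisting by a transcendental `θ`, red and blue lines are never parallel and blue lines are pairwise
disjoint (`admissible_grid`). The incidence bound `inc_bound` follows by the polynomial method: a
chunk of `D²` blue lines lies on a surface of degree `O(D)` (`exists_surface`), and on an irreducible
surface all but `O(D²)` red lines meet only `O(D + k)` of the blue lines on it
(`irreducible_surface`). For the latter, slopes at a crossing are the roots of the quadratic
`F_x + t F_y + t² F_z` and also roots of the quartic `∂_t² F`, so the remainder of a division vanishes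
at crossings. If that remainder does not vanish on the surface, Bézout for lines (`bezout_lines`)
bounds the number of red lines with many crossings; if it does, the second slope along a red line is a
Möbius function of the position, and the blue lines through that red line have collinear parameters
(`card_edges_ruled`), of which there are at most `k`. The red lines along which the quadratic
degenerates are again bounded by Bézout, or else every crossing is a singular point. Derivatives behave as in characteristic zero
because the degrees stay below `p`. The exceptional red lines are treated by recursion (`inc_rec`).
-/

open scoped Classical

noncomputable section

def zeroSet {p : ℕ} (f : MvPolynomial (Fin 2) (ZMod p)) : Set (Fin 2 → ZMod p) :=
  {x | MvPolynomial.eval x f = 0}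

def IsIrredCubic {p : ℕ} (γ : Set (Fin 2 → ZMod p)) : Prop :=
  ∃ f : MvPolynomial (Fin 2) (ZMod p), Irreducible f ∧ f.totalDegree = 3 ∧ γ = zeroSet f

/-- `C_k`: the set of `k`-rich curves of `C`. -/
def richCurves {p : ℕ} (P : Finset (Fin 2 → ZMod p)) (C : Finset (Set (Fin 2 → ZMod p)))
    (k : ℕ) : Finset (Set (Fin 2 → ZMod p)) :=
  C.filter fun γ => k ≤ (P.filter fun q => q ∈ γ).card ∧ (P.filter fun q => q ∈ γ).card < 2 * k

/-! ### Bézout's inequality in the plane -/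

theorem finrank_restrictTotalDegree_two {k : Type*} [Field k] (n : ℕ) :
    2 * Module.finrank k (MvPolynomial.restrictTotalDegree (Fin 2) k n) = (n + 1) * (n + 2) := by
  have hb := Module.finrank_eq_nat_card_basis
    (MvPolynomial.basisRestrictSupport k {m : Fin 2 →₀ ℕ | m.degree ≤ n})
  let F : Finset (ℕ × ℕ) := (Finset.range (n + 1)).biUnion
    fun i => Finset.HasAntidiagonal.antidiagonal i
  have hF : ∀ x : ℕ × ℕ, x ∈ F ↔ x.1 + x.2 ≤ n := by
    intro x
    simp [F]
  have hcard : F.card = ∑ i ∈ Finset.range (n + 1), (i + 1) := by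
    rw [Finset.card_biUnion]
    · simp
    · intro i _ j _ hij
      rw [Function.onFun, Finset.disjoint_left]
      intro x hx hx'
      simp at hx hx'
      omega
  let eqv : {m : Fin 2 →₀ ℕ | m.degree ≤ n} ≃ F :=
    { toFun := fun m => ⟨(m.1 0, m.1 1), by
        have := m.2
        rw [hF]
        simpa [Finsupp.degree_eq_sum] using this⟩
      invFun := fun x => ⟨Finsupp.equivFunOnFinite.symm ![x.1.1, x.1.2], by
        have := (hF _).mp x.2
        simpa [Finsupp.degree_eq_sum] using this⟩
      left_inv := by
        intro m
        ext i
        fin_cases i <;> simp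
      right_inv := by
        intro x
        simp }
  have h2 : Nat.card {m : Fin 2 →₀ ℕ | m.degree ≤ n} = F.card := by
    rw [Nat.card_congr eqv, Nat.card_eq_fintype_card, Fintype.card_coe]
  have h3 : 2 * ∑ i ∈ Finset.range (n + 1), (i + 1) = (n + 1) * (n + 2) := by
    clear * -
    induction n with
    | zero => simp
    | succ n ih => rw [Finset.sum_range_succ, mul_add, ih]; ring
  rw [← h3, ← hcard, ← h2, ← hb]
  rfl

theorem exists_separating_poly {k : Type*} [Field k] (S : Finset (Fin 2 → k)) (s : Fin 2 → k) :
    ∃ L : MvPolynomial (Fin 2) k, L.totalDegree ≤ S.card ∧ MvPolynomial.eval s L ≠ 0 ∧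
      ∀ u ∈ S, u ≠ s → MvPolynomial.eval u L = 0 := by
  induction S using Finset.induction_on with
  | empty => exact ⟨1, by simp, by simp, by simp⟩
  | insert a S ha ih =>
    obtain ⟨L, h1, h2, h3⟩ := ih
    rw [Finset.card_insert_of_notMem ha]
    by_cases has : a = s
    · refine ⟨L, by omega, h2, ?_⟩
      intro u hu hus
      rcases Finset.mem_insert.mp hu with rfl | hu
      · exact absurd has hus
      · exact h3 u hu hus
    · obtain ⟨i, hi⟩ := Function.ne_iff.mp has
      refine ⟨L * (MvPolynomial.X i - MvPolynomial.C (a i)), ?_, ?_, ?_⟩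
      · refine (MvPolynomial.totalDegree_mul _ _).trans ?_
        refine add_le_add h1 ((MvPolynomial.totalDegree_sub_C_le _ _).trans ?_)
        simp
      · simp only [map_mul, map_sub, MvPolynomial.eval_X, MvPolynomial.eval_C]
        exact mul_ne_zero h2 (sub_ne_zero.mpr (Ne.symm hi))
      · intro u hu hus
        rcases Finset.mem_insert.mp hu with rfl | hu
        · simp
        · simp [h3 u hu hus]

/-- Bézout's inequality for plane curves, by counting dimensions: for large `n` the polynomials
`A f + B g` of degree at most `n` have codimension at most `deg f * e` among all polynomials of
degree at most `n`, and they all vanish on the common zeros. -/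
theorem bezout_plane {k : Type*} [Field k] (f g : MvPolynomial (Fin 2) k) (hf : Prime f)
    (hfg : ¬ f ∣ g) (e : ℕ) (he : g.totalDegree ≤ e) (S : Finset (Fin 2 → k))
    (hS : ∀ x ∈ S, MvPolynomial.eval x f = 0 ∧ MvPolynomial.eval x g = 0) :
    S.card ≤ f.totalDegree * e := by
  set d := f.totalDegree with hd
  set m := S.card with hm
  let T := fun n => MvPolynomial.restrictTotalDegree (Fin 2) k n
  let φ : (T (e + m) × T (d + m)) →ₗ[k] T (d + e + m) :=
    LinearMap.codRestrict (T (d + e + m))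
      (LinearMap.coprod ((LinearMap.mulLeft k f).comp (T (e + m)).subtype)
        ((LinearMap.mulLeft k g).comp (T (d + m)).subtype)) (by
      rintro ⟨⟨A, hA⟩, ⟨B, hB⟩⟩
      rw [MvPolynomial.mem_restrictTotalDegree] at hA hB ⊢
      simp only [LinearMap.coprod_apply, LinearMap.comp_apply, Submodule.subtype_apply,
        LinearMap.mulLeft_apply]
      refine (MvPolynomial.totalDegree_add _ _).trans (max_le ?_ ?_)
      · refine (MvPolynomial.totalDegree_mul _ _).trans ?_; omega
      · refine (MvPolynomial.totalDegree_mul _ _).trans ?_; omega)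
  have hφ : ∀ v, ((φ v : T (d + e + m)) : MvPolynomial (Fin 2) k) = f * v.1 + g * v.2 :=
    fun v => rfl
  let ψ : T m →ₗ[k] (T (e + m) × T (d + m)) :=
    LinearMap.prod
      (LinearMap.codRestrict (T (e + m)) ((LinearMap.mulLeft k (-g)).comp (T m).subtype) (by
        rintro ⟨A, hA⟩
        rw [MvPolynomial.mem_restrictTotalDegree] at hA ⊢
        simp only [LinearMap.comp_apply, Submodule.subtype_apply, LinearMap.mulLeft_apply]
        refine (MvPolynomial.totalDegree_mul _ _).trans ?_
        rw [MvPolynomial.totalDegree_neg]; omega))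
      (LinearMap.codRestrict (T (d + m)) ((LinearMap.mulLeft k f).comp (T m).subtype) (by
        rintro ⟨A, hA⟩
        rw [MvPolynomial.mem_restrictTotalDegree] at hA ⊢
        simp only [LinearMap.comp_apply, Submodule.subtype_apply, LinearMap.mulLeft_apply]
        refine (MvPolynomial.totalDegree_mul _ _).trans ?_; omega))
  let ev : T (d + e + m) →ₗ[k] (S → k) :=
    (LinearMap.pi fun s : S => (MvPolynomial.aeval (s : Fin 2 → k)).toLinearMap).comp
      (T (d + e + m)).subtype
  have hev : ∀ v s, ev v s = MvPolynomial.eval (s : Fin 2 → k) (v : MvPolynomial (Fin 2) k) := by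
    intro v s
    simp [ev, MvPolynomial.aeval_eq_eval]
  have hsurj : Function.Surjective ev := by
    intro c
    choose L h1 h2 h3 using exists_separating_poly S
    refine ⟨⟨∑ s : S, MvPolynomial.C (c s / MvPolynomial.eval (s : Fin 2 → k) (L s)) * L s, ?_⟩, ?_⟩
    · refine Submodule.sum_mem _ fun s _ => ?_
      rw [MvPolynomial.mem_restrictTotalDegree]
      refine (MvPolynomial.totalDegree_mul _ _).trans ?_
      have := h1 s
      rw [MvPolynomial.totalDegree_C]; omega
    · ext s
      rw [hev]
      simp only [map_sum, map_mul, MvPolynomial.eval_C]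
      rw [Finset.sum_eq_single s]
      · exact div_mul_cancel₀ _ (h2 s)
      · intro b _ hb
        rw [h3 b s s.2 (fun h => hb (Subtype.ext h.symm)), mul_zero]
      · simp
  have hker : LinearMap.ker φ ≤ LinearMap.range ψ := by
    rintro ⟨⟨A, hA⟩, ⟨B, hB⟩⟩ hv
    have h0 : f * A + g * B = 0 := by
      have := congrArg (Subtype.val) (LinearMap.mem_ker.mp hv)
      rw [hφ] at this
      exact this
    have hdvd : f ∣ g * B := ⟨-A, by linear_combination h0⟩
    obtain ⟨Cc, rfl⟩ := (hf.dvd_or_dvd hdvd).resolve_left hfg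
    have hA' : A = -g * Cc := mul_left_cancel₀ hf.ne_zero (by linear_combination h0)
    refine ⟨⟨Cc, ?_⟩, ?_⟩
    · rw [MvPolynomial.mem_restrictTotalDegree] at hB ⊢
      by_cases hC : Cc = 0
      · simp [hC]
      · rw [MvPolynomial.totalDegree_mul_of_isDomain hf.ne_zero hC] at hB
        omega
    · ext1
      · exact Subtype.ext hA'.symm
      · rfl
  have hrange : LinearMap.range φ ≤ LinearMap.ker ev := by
    rintro _ ⟨v, rfl⟩
    rw [LinearMap.mem_ker]
    ext s
    rw [hev, hφ]
    simp [hS s s.2]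
  have e1 := LinearMap.finrank_range_add_finrank_ker φ
  have e2 := LinearMap.finrank_range_add_finrank_ker ev
  have e3 := Submodule.finrank_mono hker
  have e4 := Submodule.finrank_mono hrange
  have e5 := LinearMap.finrank_range_le ψ
  rw [LinearMap.range_eq_top.mpr hsurj, finrank_top, Module.finrank_fintype_fun_eq_card,
    Fintype.card_coe] at e2
  rw [Module.finrank_prod] at e1
  have t1 : 2 * Module.finrank k (T (e + m)) = _ := finrank_restrictTotalDegree_two (e + m)
  have t2 : 2 * Module.finrank k (T (d + m)) = _ := finrank_restrictTotalDegree_two (d + m)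
  have t3 : 2 * Module.finrank k (T m) = _ := finrank_restrictTotalDegree_two m
  have t4 : 2 * Module.finrank k (T (d + e + m)) = _ :=
    finrank_restrictTotalDegree_two (d + e + m)
  nlinarith

/-! ### Polynomials in three variables vanishing on null lines -/

/-- The parametrised line `x ↦ (x, y + t x, (w + t y) + t² x)` attached to `v = (t, y, w)`. -/
def lineMap {K : Type*} [Field K] (v : K × K × K) : Fin 3 → Polynomial K :=
  ![Polynomial.X, Polynomial.C v.2.1 + Polynomial.C v.1 * Polynomial.X,
    Polynomial.C (v.2.2 + v.1 * v.2.1) + Polynomial.C (v.1 ^ 2) * Polynomial.X]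

/-- Restriction of a polynomial in three variables to the line attached to `v`. -/
def res {K : Type*} [Field K] (v : K × K × K) : MvPolynomial (Fin 3) K →ₐ[K] Polynomial K :=
  MvPolynomial.aeval (lineMap v)

theorem natDegree_lineMap_le {K : Type*} [Field K] (v : K × K × K) (i : Fin 3) :
    (lineMap v i).natDegree ≤ 1 := by
  fin_cases i
  · simp [lineMap]
  · change (Polynomial.C _ + Polynomial.C _ * Polynomial.X).natDegree ≤ 1
    rw [add_comm]
    exact Polynomial.natDegree_linear_le
  · change (Polynomial.C _ + Polynomial.C _ * Polynomial.X).natDegree ≤ 1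
    rw [add_comm]
    exact Polynomial.natDegree_linear_le

theorem natDegree_res_le {K : Type*} [Field K] (v : K × K × K) (F : MvPolynomial (Fin 3) K) :
    (res v F).natDegree ≤ F.totalDegree := by
  simpa [res] using MvPolynomial.aeval_natDegree_le F le_rfl (lineMap v) (natDegree_lineMap_le v)

theorem totalDegree_map_le' {σ R S : Type*} [CommRing R] [CommRing S] (φ : R →+* S)
    (G : MvPolynomial σ R) : (MvPolynomial.map φ G).totalDegree ≤ G.totalDegree := by
  refine Finset.sup_le fun m hm => ?_
  exact MvPolynomial.le_totalDegree (MvPolynomial.support_map_subset _ _ hm)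

/-- Polynomials in three variables, viewed as polynomials in the last two variables with
coefficients in the polynomial ring of the first. -/
def splitFirst (K : Type*) [Field K] :
    MvPolynomial (Fin 3) K ≃ₐ[K] MvPolynomial (Fin 2) (Polynomial K) :=
  (MvPolynomial.renameEquiv K (finSuccEquiv 2)).trans (MvPolynomial.optionEquivRight K (Fin 2))

theorem splitFirst_X {K : Type*} [Field K] (i : Fin 3) :
    splitFirst K (MvPolynomial.X i) =
      ![MvPolynomial.C Polynomial.X, MvPolynomial.X 0, MvPolynomial.X 1] i := by
  fin_cases i
  · simp [splitFirst]
  · have : finSuccEquiv 2 1 = some 0 := by decide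
    simp [splitFirst, this]
  · have : finSuccEquiv 2 2 = some 1 := by decide
    simp [splitFirst, this]

theorem totalDegree_splitFirst_le {K : Type*} [Field K] (F : MvPolynomial (Fin 3) K) :
    (splitFirst K F).totalDegree ≤ F.totalDegree := by
  conv_lhs => rw [F.as_sum]
  rw [map_sum]
  refine (MvPolynomial.totalDegree_finsetSum _ _).trans (Finset.sup_le fun m hm => ?_)
  rw [MvPolynomial.monomial_eq, map_mul, Finsupp.prod, map_prod]
  refine (MvPolynomial.totalDegree_mul _ _).trans ?_
  have hC : ∀ a : K, splitFirst K (MvPolynomial.C a) = MvPolynomial.C (Polynomial.C a) := by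
    intro a
    simp [splitFirst]
  rw [hC, MvPolynomial.totalDegree_C, zero_add]
  refine (MvPolynomial.totalDegree_finsetProd _ _).trans ?_
  have h1 : ∀ i : Fin 3, (splitFirst K (MvPolynomial.X i)).totalDegree ≤ 1 := by
    intro i
    rw [splitFirst_X]
    fin_cases i <;> simp
  refine le_trans (Finset.sum_le_sum (g := fun i => m i) fun i _ => ?_)
    (MvPolynomial.le_totalDegree hm)
  rw [map_pow]
  refine (MvPolynomial.totalDegree_pow _ _).trans ?_
  nlinarith [h1 i]

theorem eval_splitFirst {K : Type*} [Field K] (v : K × K × K) (F : MvPolynomial (Fin 3) K) :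
    MvPolynomial.eval ![lineMap v 1, lineMap v 2] (splitFirst K F) = res v F := by
  have : ((MvPolynomial.eval ![lineMap v 1, lineMap v 2]).comp
      (splitFirst K : MvPolynomial (Fin 3) K →+* MvPolynomial (Fin 2) (Polynomial K))) =
      (res v : MvPolynomial (Fin 3) K →+* Polynomial K) := by
    apply MvPolynomial.ringHom_ext
    · intro a
      simp [splitFirst, res]
    · intro i
      simp only [RingHom.comp_apply, RingHom.coe_coe, splitFirst_X]
      fin_cases i <;> simp [res, lineMap]
  exact congrArg (fun φ => φ F) this

theorem lineMap_injective {K : Type*} [Field K] {v u : K × K × K}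
    (h1 : lineMap v 1 = lineMap u 1) (h2 : lineMap v 2 = lineMap u 2) : v = u := by
  obtain ⟨t, y, w⟩ := v
  obtain ⟨t', y', w'⟩ := u
  simp only [lineMap, Matrix.cons_val] at h1 h2
  have a0 := congrArg (fun P => Polynomial.coeff P 0) h1
  have a1 := congrArg (fun P => Polynomial.coeff P 1) h1
  have b0 := congrArg (fun P => Polynomial.coeff P 0) h2
  simp [Polynomial.coeff_X, Polynomial.coeff_C] at a0 a1 b0
  subst a0 a1
  simpa using b0

/-- A surface and an irreducible surface not contained in it share at most `deg F * e` of the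
lines `lineMap v`: over the function field of the first coordinate the lines are distinct points
of the plane, and Bézout's inequality applies. -/
theorem bezout_lines {K : Type*} [Field K] (F E : MvPolynomial (Fin 3) K) (hF : Irreducible F)
    (hFE : ¬ F ∣ E) (e : ℕ) (he : E.totalDegree ≤ e) (S : Finset (K × K × K))
    (hS : ∀ v ∈ S, res v F = 0 ∧ res v E = 0) : S.card ≤ F.totalDegree * e := by
  rcases S.eq_empty_or_nonempty with rfl | ⟨v0, hv0⟩
  · simp
  let R := MvPolynomial (Fin 2) (Polynomial K)
  let Lf := FractionRing (Polynomial K)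
  let R' := MvPolynomial (Fin 2) Lf
  let M : Submonoid R := (nonZeroDivisors (Polynomial K)).map (MvPolynomial.C : Polynomial K →+* R)
  let _ : Algebra R R' := MvPolynomial.algebraMvPolynomial
  have : IsLocalization M R' := MvPolynomial.isLocalization _ _
  have halg : ∀ G : R, algebraMap R R' G = MvPolynomial.map (algebraMap (Polynomial K) Lf) G :=
    fun G => rfl
  have hprime : Prime (splitFirst K F) := by
    rw [MulEquiv.prime_iff (splitFirst K)]
    exact hF.prime
  have hidp : (Ideal.span {splitFirst K F}).IsPrime :=
    (Ideal.span_singleton_prime hprime.ne_zero).mpr hprime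
  have hdisj : Disjoint (M : Set R) (Ideal.span {splitFirst K F} : Ideal R) := by
    rw [Set.disjoint_left]
    rintro _ ⟨a, ha, rfl⟩ hmem
    rw [SetLike.mem_coe, Ideal.mem_span_singleton] at hmem
    obtain ⟨G, hG⟩ := hmem
    have := congrArg (MvPolynomial.eval ![lineMap v0 1, lineMap v0 2]) hG
    rw [map_mul, eval_splitFirst, (hS v0 hv0).1, zero_mul] at this
    simp at this
    exact nonZeroDivisors.ne_zero ha this
  have hp' := IsLocalization.isPrime_of_isPrime_disjoint M R' _ hidp hdisj
  have hu := IsLocalization.under_map_of_isPrime_disjoint M R' hidp hdisj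
  rw [Ideal.map_span, Set.image_singleton] at hp' hu
  have hinj : Function.Injective (algebraMap R R') :=
    MvPolynomial.map_injective _ (IsFractionRing.injective _ _)
  have hne : algebraMap R R' (splitFirst K F) ≠ 0 := by
    rw [Ne, map_eq_zero_iff _ hinj]
    exact hprime.ne_zero
  have hprime' : Prime (algebraMap R R' (splitFirst K F)) :=
    (Ideal.span_singleton_prime hne).mp hp'
  have hnd : ¬ algebraMap R R' (splitFirst K F) ∣ algebraMap R R' (splitFirst K E) := by
    intro h
    have : splitFirst K E ∈ (Ideal.span {algebraMap R R' (splitFirst K F)}).under R := by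
      rw [Ideal.mem_comap]
      exact Ideal.mem_span_singleton.mpr h
    rw [hu, Ideal.mem_span_singleton] at this
    exact hFE ((map_dvd_iff (splitFirst K)).mp this)
  have hdeg : ∀ G : MvPolynomial (Fin 3) K,
      (algebraMap R R' (splitFirst K G)).totalDegree ≤ G.totalDegree := by
    intro G
    rw [halg]
    exact (totalDegree_map_le' _ _).trans (totalDegree_splitFirst_le G)
  let pt : K × K × K → Fin 2 → Lf := fun v i =>
    algebraMap (Polynomial K) Lf (![lineMap v 1, lineMap v 2] i)
  have hpt : ∀ v G, MvPolynomial.eval (pt v) (algebraMap R R' (splitFirst K G)) =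
      algebraMap (Polynomial K) Lf (res v G) := by
    intro v G
    rw [← eval_splitFirst, halg, MvPolynomial.eval_map, MvPolynomial.eval,
      MvPolynomial.coe_eval₂Hom, MvPolynomial.eval₂_comp_left]
    rfl
  have hptinj : Function.Injective pt := by
    intro v u h
    have hi := IsFractionRing.injective (Polynomial K) Lf
    exact lineMap_injective (hi (congrFun h 0)) (hi (congrFun h 1))
  have := bezout_plane _ _ hprime' hnd e ((hdeg E).trans he) (S.image pt) (by
    intro x hx
    obtain ⟨v, hv, rfl⟩ := Finset.mem_image.mp hx
    rw [hpt, hpt, (hS v hv).1, (hS v hv).2]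
    simp)
  rw [Finset.card_image_of_injective _ hptinj] at this
  exact this.trans (Nat.mul_le_mul_right _ (hdeg F))

/-! ### Derivatives along null lines -/

section Derivatives

variable {K : Type*} [Field K]

theorem totalDegree_pderiv_le (i : Fin 3) (F : MvPolynomial (Fin 3) K) :
    (MvPolynomial.pderiv i F).totalDegree ≤ F.totalDegree - 1 := by
  refine Finset.sup_le fun m hm => ?_
  rw [MvPolynomial.mem_support_iff, MvPolynomial.coeff_pderiv] at hm
  have h : m + Finsupp.single i 1 ∈ F.support :=
    MvPolynomial.mem_support_iff.mpr (left_ne_zero_of_mul hm)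
  have := MvPolynomial.le_totalDegree h
  rw [Finsupp.sum_add_index' (fun _ => rfl) (fun _ _ _ => rfl), Finsupp.sum_single_index rfl] at this
  omega

theorem pderiv_comm' (i j : Fin 3) (F : MvPolynomial (Fin 3) K) :
    MvPolynomial.pderiv i (MvPolynomial.pderiv j F) =
      MvPolynomial.pderiv j (MvPolynomial.pderiv i F) := by
  by_cases hij : i = j
  · rw [hij]
  · ext m
    simp only [MvPolynomial.coeff_pderiv, Finsupp.add_apply, Finsupp.single_apply, if_neg hij,
      if_neg (Ne.symm hij), add_zero]
    rw [add_right_comm]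
    ring

/-- A nonconstant polynomial of degree less than the characteristic has a nonzero partial. -/
theorem exists_pderiv_ne_zero (p : ℕ) [CharP K p] (F : MvPolynomial (Fin 3) K)
    (hF : F.totalDegree ≠ 0) (hp : F.totalDegree < p) : ∃ i, MvPolynomial.pderiv i F ≠ 0 := by
  by_contra! h
  apply hF
  refine Nat.le_zero.mp (Finset.sup_le fun m hm => ?_)
  have hm0 : m = 0 := by
    by_contra hne
    obtain ⟨i, hi⟩ := Finsupp.ne_iff.mp hne
    have hi' : m i ≠ 0 := hi
    have hc := congrArg (MvPolynomial.coeff (m - Finsupp.single i 1)) (h i)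
    rw [MvPolynomial.coeff_pderiv, MvPolynomial.coeff_zero] at hc
    have hle : Finsupp.single i 1 ≤ m := by
      rw [Finsupp.single_le_iff]; omega
    rw [tsub_add_cancel_of_le hle] at hc
    have hc2 := (mul_eq_zero.mp hc).resolve_left (MvPolynomial.mem_support_iff.mp hm)
    have hval : (((m - Finsupp.single i 1 : Fin 3 →₀ ℕ) i : ℕ) : K) + 1 = ((m i : ℕ) : K) := by
      have : (m - Finsupp.single i 1 : Fin 3 →₀ ℕ) i + 1 = m i := by
        simp; omega
      exact_mod_cast congrArg (Nat.cast : ℕ → K) this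
    rw [hval, CharP.cast_eq_zero_iff K p] at hc2
    have h1 := Nat.le_of_dvd (Nat.pos_of_ne_zero hi') hc2
    have h2 := MvPolynomial.le_totalDegree hm
    have h3 : m i ≤ m.sum fun _ e => e := Finset.single_le_sum (f := fun j => m j)
      (fun _ _ => Nat.zero_le _) (Finsupp.mem_support_iff.mpr hi')
    omega
  simp [hm0]

/-- The derivative in the direction `(1, t, t²)`. -/
def dir (t : K) (F : MvPolynomial (Fin 3) K) : MvPolynomial (Fin 3) K :=
  MvPolynomial.pderiv 0 F + MvPolynomial.C t * MvPolynomial.pderiv 1 F +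
    MvPolynomial.C t ^ 2 * MvPolynomial.pderiv 2 F

theorem derivative_res (v : K × K × K) (F : MvPolynomial (Fin 3) K) :
    Polynomial.derivative (res v F) = res v (dir v.1 F) := by
  induction F using MvPolynomial.induction_on with
  | C a => simp [dir, res]
  | add f g hf hg =>
    rw [map_add, map_add, hf, hg, ← map_add]
    congr 1
    simp only [dir, map_add]
    ring
  | mul_X f i hf =>
    have hX : Polynomial.derivative (res v (MvPolynomial.X i)) = res v (dir v.1 (.X i)) := by
      fin_cases i <;> simp [res, dir, lineMap, MvPolynomial.pderiv_X, Polynomial.derivative_pow]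
    rw [map_mul, Polynomial.derivative_mul, hf, hX, ← map_mul, ← map_mul, ← map_add]
    congr 1
    simp only [dir, MvPolynomial.pderiv_mul]
    ring

theorem pderiv_dir (i : Fin 3) (t : K) (F : MvPolynomial (Fin 3) K) :
    MvPolynomial.pderiv i (dir t F) = dir t (MvPolynomial.pderiv i F) := by
  simp only [dir, map_add, MvPolynomial.pderiv_C_mul, ← map_pow, pderiv_comm' i]

end Derivatives

/-- If the Wronskian of `u` and `v` vanishes and the degrees are smaller than the characteristic,
then `u` is a constant multiple of `v`. -/
theorem eq_smul_of_wronskian_eq_zero {K : Type*} [Field K] (p : ℕ) [CharP K p]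
    (u v : Polynomial K) (hv : v ≠ 0) (hu : u.natDegree < p) (hvp : v.natDegree < p)
    (h : u * Polynomial.derivative v = Polynomial.derivative u * v) :
    ∃ c : K, u = Polynomial.C c * v := by
  set c := u.coeff v.natDegree / v.leadingCoeff with hc
  refine ⟨c, ?_⟩
  by_contra hne
  set w := u - Polynomial.C c * v with hw
  have hw0 : w ≠ 0 := sub_ne_zero.mpr hne
  have hwv : w * Polynomial.derivative v = Polynomial.derivative w * v := by
    simp only [hw, Polynomial.derivative_sub, Polynomial.derivative_C_mul]
    linear_combination h
  have hcoeff : w.coeff v.natDegree = 0 := by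
    simp only [hw, Polynomial.coeff_sub, Polynomial.coeff_C_mul, hc, Polynomial.coeff_natDegree]
    rw [div_mul_cancel₀ _ (Polynomial.leadingCoeff_ne_zero.mpr hv), sub_self]
  have hwp : w.natDegree < p := by
    refine lt_of_le_of_lt (Polynomial.natDegree_sub_le _ _) (max_lt hu ?_)
    exact lt_of_le_of_lt (Polynomial.natDegree_C_mul_le _ _) hvp
  have hdeg : w.natDegree ≠ v.natDegree := by
    intro he
    rw [← he] at hcoeff
    exact hw0 (Polynomial.leadingCoeff_eq_zero.mp hcoeff)
  have key : ∀ a : Polynomial K, (Polynomial.X * Polynomial.derivative a).natDegree ≤ a.natDegree ∧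
      (Polynomial.X * Polynomial.derivative a).coeff a.natDegree =
        a.leadingCoeff * (a.natDegree : K) := by
    intro a
    constructor
    · by_cases ha : a.natDegree = 0
      · rw [Polynomial.eq_C_of_natDegree_eq_zero ha]; simp
      · refine Polynomial.natDegree_mul_le.trans ?_
        have := Polynomial.natDegree_derivative_le a
        rw [Polynomial.natDegree_X]; omega
    · rcases hn : a.natDegree with _ | n
      · simp
      · rw [Polynomial.coeff_X_mul, Polynomial.coeff_derivative, Polynomial.leadingCoeff, hn]
        push_cast; rfl
  have e1 := congrArg (fun q => (Polynomial.X * q).coeff (w.natDegree + v.natDegree)) hwv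
  have l1 : Polynomial.X * (w * Polynomial.derivative v) =
      w * (Polynomial.X * Polynomial.derivative v) := by ring
  have l2 : Polynomial.X * (Polynomial.derivative w * v) =
      (Polynomial.X * Polynomial.derivative w) * v := by ring
  rw [l1, l2, Polynomial.coeff_mul_add_eq_of_natDegree_le le_rfl (key v).1,
    Polynomial.coeff_mul_add_eq_of_natDegree_le (key w).1 le_rfl, (key v).2, (key w).2,
    Polynomial.coeff_natDegree, Polynomial.coeff_natDegree] at e1
  have e2 : w.leadingCoeff * v.leadingCoeff * ((v.natDegree : K) - w.natDegree) = 0 := by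
    linear_combination e1
  have hl := mul_ne_zero (Polynomial.leadingCoeff_ne_zero.mpr hw0)
    (Polynomial.leadingCoeff_ne_zero.mpr hv)
  have e3 := sub_eq_zero.mp ((mul_eq_zero.mp e2).resolve_left hl)
  have e4 := (CharP.natCast_eq_natCast K p).mp e3
  exact hdeg (Nat.ModEq.eq_of_lt_of_lt e4 hvp hwp).symm

/-! ### Crossings of lines on an irreducible surface -/

/-- The lines attached to `v` and `u` intersect (when their slopes differ). -/
def Meets {K : Type*} [Field K] (v u : K × K × K) : Prop :=
  v.2.2 - u.2.2 = u.1 * v.2.1 - v.1 * u.2.1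

/-- The first coordinate of the intersection point of the lines attached to `v` and `u`. -/
def xing {K : Type*} [Field K] (v u : K × K × K) : K := (u.2.1 - v.2.1) / (v.1 - u.1)

/-- The standing assumptions on a family `R` of red lines and a family `B` of blue lines: no red
line is parallel to a blue one, blue lines are pairwise disjoint, and at most `k` blue parameters
lie on a common line of the parameter space that is not vertical. -/
structure Admissible {K : Type*} [Field K] (R B : Finset (K × K × K)) (k : ℕ) : Prop where
  slope : ∀ r ∈ R, ∀ u ∈ B, r.1 ≠ u.1
  skew : ∀ u ∈ B, ∀ u' ∈ B, Meets u u' → u = u'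
  coll : ∀ c₁ c₀ e l₁ l₂ l₃ : K, (c₁ ≠ 0 ∨ c₀ ≠ 0) →
    (B.filter fun u => c₁ * u.1 + c₀ * u.2.1 = e ∧ u.2.2 = l₁ * u.1 + l₂ * u.2.1 + l₃).card ≤ k

section Surface

variable {K : Type*} [Field K]

theorem Admissible.mono {R B R' B' : Finset (K × K × K)} {k : ℕ} (h : Admissible R B k)
    (hR : R' ⊆ R) (hB : B' ⊆ B) : Admissible R' B' k :=
  ⟨fun r hr u hu => h.slope r (hR hr) u (hB hu), fun u hu u' hu' => h.skew u (hB hu) u' (hB hu'),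
    fun c₁ c₀ e l₁ l₂ l₃ hc => (Finset.card_le_card (Finset.filter_subset_filter _ hB)).trans
      (h.coll c₁ c₀ e l₁ l₂ l₃ hc)⟩

theorem eval_lineMap_eq {v u : K × K × K} (ht : v.1 ≠ u.1) (h : Meets v u) (i : Fin 3) :
    (lineMap v i).eval (xing v u) = (lineMap u i).eval (xing v u) := by
  have h1 : v.1 - u.1 ≠ 0 := sub_ne_zero.mpr ht
  have hx : xing v u * (v.1 - u.1) = u.2.1 - v.2.1 := div_mul_cancel₀ _ h1
  unfold Meets at h
  fin_cases i
  · simp [lineMap]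
  · simp only [lineMap, Fin.mk_one, Matrix.cons_val, Polynomial.eval_add, Polynomial.eval_C,
      Polynomial.eval_mul, Polynomial.eval_X]
    linear_combination hx
  · simp only [lineMap, Fin.reduceFinMk, Matrix.cons_val, Polynomial.eval_add, Polynomial.eval_C,
      Polynomial.eval_mul, Polynomial.eval_X]
    linear_combination h + (v.1 + u.1) * hx

theorem eval_res_eq {v u : K × K × K} (ht : v.1 ≠ u.1) (h : Meets v u)
    (G : MvPolynomial (Fin 3) K) :
    (res v G).eval (xing v u) = (res u G).eval (xing v u) := by
  have hgen : ∀ w : K × K × K, ∀ x : K, (res w G).eval x =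
      MvPolynomial.eval (fun i => (lineMap w i).eval x) G := by
    intro w x
    rw [res, MvPolynomial.aeval_def, ← Polynomial.coe_evalRingHom, MvPolynomial.eval,
      MvPolynomial.coe_eval₂Hom, MvPolynomial.eval₂_comp_left]
    congr 1
    ext a
    simp
  rw [hgen, hgen]
  congr 1
  exact congrArg _ (funext (eval_lineMap_eq ht h))

theorem meets_of_xing_eq {r u u' : K × K × K} (h1 : r.1 ≠ u.1) (h2 : r.1 ≠ u'.1)
    (m1 : Meets r u) (m2 : Meets r u') (hx : xing r u = xing r u') : Meets u u' := by
  have a1 : xing r u * (r.1 - u.1) = u.2.1 - r.2.1 := div_mul_cancel₀ _ (sub_ne_zero.mpr h1)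
  have a2 : xing r u' * (r.1 - u'.1) = u'.2.1 - r.2.1 := div_mul_cancel₀ _ (sub_ne_zero.mpr h2)
  rw [← hx] at a2
  unfold Meets at *
  linear_combination m2 - m1 - (r.1 - u'.1) * a1 + (r.1 - u.1) * a2

theorem card_le_of_eval_zero {R B : Finset (K × K × K)} {k : ℕ} (h : Admissible R B k)
    {r : K × K × K} (hr : r ∈ R) {G : Polynomial K} (hG : G ≠ 0) (T : Finset (K × K × K))
    (hT : T ⊆ B) (hm : ∀ u ∈ T, Meets r u ∧ G.eval (xing r u) = 0) : T.card ≤ G.natDegree := by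
  refine le_trans ?_ ((Multiset.toFinset_card_le _).trans (Polynomial.card_roots' G))
  refine Finset.card_le_card_of_injOn (xing r) ?_ ?_
  · intro u hu
    simp only [Finset.mem_coe, Multiset.mem_toFinset, Polynomial.mem_roots hG]
    exact (hm u hu).2
  · intro u hu u' hu' hx
    exact h.skew u (hT hu) u' (hT hu') (meets_of_xing_eq (h.slope r hr u (hT hu))
      (h.slope r hr u' (hT hu')) (hm u hu).1 (hm u' hu').1 hx)

/-- The blue lines on the surface `F = 0` that meet `r`. -/
def edges (B : Finset (K × K × K)) (r : K × K × K) (F : MvPolynomial (Fin 3) K) :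
    Finset (K × K × K) := B.filter fun u => Meets r u ∧ res u F = 0

theorem card_edges_of_res_ne_zero {R B : Finset (K × K × K)} {k : ℕ} (h : Admissible R B k)
    {r : K × K × K} (hr : r ∈ R) {F : MvPolynomial (Fin 3) K} (hF : res r F ≠ 0) :
    (edges B r F).card ≤ F.totalDegree := by
  refine (card_le_of_eval_zero h hr hF (edges B r F) (Finset.filter_subset _ _) ?_).trans
    (natDegree_res_le r F)
  intro u hu
  obtain ⟨hB, hm, h0⟩ := Finset.mem_filter.mp hu
  refine ⟨hm, ?_⟩
  rw [eval_res_eq (h.slope r hr u hB) hm, h0, Polynomial.eval_zero]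

/-- The discriminant of the quadratic form `F_x + t F_y + t² F_z` in the direction `t`. -/
def discP (F : MvPolynomial (Fin 3) K) : MvPolynomial (Fin 3) K :=
  MvPolynomial.pderiv 1 F ^ 2 - 4 * MvPolynomial.pderiv 0 F * MvPolynomial.pderiv 2 F

/-- The linear coefficient of the quotient in `quartic_division`. -/
def quotOne (F : MvPolynomial (Fin 3) K) : MvPolynomial (Fin 3) K :=
  2 * MvPolynomial.pderiv 1 (MvPolynomial.pderiv 2 F) * MvPolynomial.pderiv 2 F ^ 2 -
    MvPolynomial.pderiv 2 (MvPolynomial.pderiv 2 F) * MvPolynomial.pderiv 2 F *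
      MvPolynomial.pderiv 1 F

/-- The constant coefficient of the quotient in `quartic_division`. -/
def quotZero (F : MvPolynomial (Fin 3) K) : MvPolynomial (Fin 3) K :=
  (MvPolynomial.pderiv 1 (MvPolynomial.pderiv 1 F) +
      2 * MvPolynomial.pderiv 0 (MvPolynomial.pderiv 2 F)) * MvPolynomial.pderiv 2 F ^ 2 -
    MvPolynomial.pderiv 2 (MvPolynomial.pderiv 2 F) * MvPolynomial.pderiv 2 F *
      MvPolynomial.pderiv 0 F -
    2 * MvPolynomial.pderiv 1 (MvPolynomial.pderiv 2 F) * MvPolynomial.pderiv 2 F *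
      MvPolynomial.pderiv 1 F +
    MvPolynomial.pderiv 2 (MvPolynomial.pderiv 2 F) * MvPolynomial.pderiv 1 F ^ 2

/-- The linear coefficient of the remainder in `quartic_division`. -/
def remOne (F : MvPolynomial (Fin 3) K) : MvPolynomial (Fin 3) K :=
  2 * MvPolynomial.pderiv 0 (MvPolynomial.pderiv 1 F) * MvPolynomial.pderiv 2 F ^ 3 -
    quotOne F * MvPolynomial.pderiv 0 F - quotZero F * MvPolynomial.pderiv 1 F

/-- The constant coefficient of the remainder in `quartic_division`. -/
def remZero (F : MvPolynomial (Fin 3) K) : MvPolynomial (Fin 3) K :=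
  MvPolynomial.pderiv 0 (MvPolynomial.pderiv 0 F) * MvPolynomial.pderiv 2 F ^ 3 -
    quotZero F * MvPolynomial.pderiv 0 F

/-- The quotient in `quartic_division`. -/
def quotP (t : K) (F : MvPolynomial (Fin 3) K) : MvPolynomial (Fin 3) K :=
  MvPolynomial.pderiv 2 (MvPolynomial.pderiv 2 F) * MvPolynomial.pderiv 2 F ^ 2 *
    MvPolynomial.C t ^ 2 + quotOne F * MvPolynomial.C t + quotZero F

theorem dir_dir (t : K) (F : MvPolynomial (Fin 3) K) :
    dir t (dir t F) = MvPolynomial.pderiv 0 (MvPolynomial.pderiv 0 F) +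
      2 * MvPolynomial.C t * MvPolynomial.pderiv 0 (MvPolynomial.pderiv 1 F) +
      MvPolynomial.C t ^ 2 * (MvPolynomial.pderiv 1 (MvPolynomial.pderiv 1 F) +
        2 * MvPolynomial.pderiv 0 (MvPolynomial.pderiv 2 F)) +
      2 * MvPolynomial.C t ^ 3 * MvPolynomial.pderiv 1 (MvPolynomial.pderiv 2 F) +
      MvPolynomial.C t ^ 4 * MvPolynomial.pderiv 2 (MvPolynomial.pderiv 2 F) := by
  have h1 : dir t (dir t F) = dir t (MvPolynomial.pderiv 0 F) +
      MvPolynomial.C t * dir t (MvPolynomial.pderiv 1 F) +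
      MvPolynomial.C t ^ 2 * dir t (MvPolynomial.pderiv 2 F) := by
    rw [← pderiv_dir, ← pderiv_dir, ← pderiv_dir]
    rfl
  rw [h1]
  simp only [dir]
  rw [pderiv_comm' 1 0, pderiv_comm' 2 0, pderiv_comm' 2 1]
  ring

/-- Division of the quartic `∂_t² F` by the quadratic `∂_t F`, both as polynomials in `t`. -/
theorem quartic_division (t : K) (F : MvPolynomial (Fin 3) K) :
    MvPolynomial.pderiv 2 F ^ 3 * dir t (dir t F) =
      dir t F * quotP t F + (remOne F * MvPolynomial.C t + remZero F) := by
  rw [dir_dir]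
  simp only [dir, quotP, remOne, remZero, quotOne, quotZero]
  ring

/-- At a crossing of two lines on the surface, the slopes are the two roots of `∂_t F`, and they
are roots of `∂_t² F` too; so the remainder of the division vanishes there. -/
theorem crossing_values {r u : K × K × K} (ht : r.1 ≠ u.1) (hm : Meets r u)
    {F : MvPolynomial (Fin 3) K} (hr : res r F = 0) (hu : res u F = 0) :
    let V := fun G => (res r G).eval (xing r u)
    V (MvPolynomial.pderiv 1 F) = -(r.1 + u.1) * V (MvPolynomial.pderiv 2 F) ∧
    V (MvPolynomial.pderiv 0 F) = r.1 * u.1 * V (MvPolynomial.pderiv 2 F) ∧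
    V (remOne F) = 0 ∧ V (remZero F) = 0 := by
  intro V
  have hV : ∀ G, V G = (res u G).eval (xing r u) := fun G => eval_res_eq ht hm G
  have hadd : ∀ G H, V (G + H) = V G + V H := fun G H => by simp [V]
  have hmul : ∀ G H, V (G * H) = V G * V H := fun G H => by simp [V]
  have hpow : ∀ G n, V (G ^ n) = V G ^ n := fun G n => by simp [V]
  have hC : ∀ a, V (MvPolynomial.C a) = a := fun a => by simp [V, res]
  have d1 : V (dir r.1 F) = 0 := by simp [V, ← derivative_res, hr]
  have d2 : V (dir u.1 F) = 0 := by rw [hV, ← derivative_res, hu]; simp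
  have e1 : V (dir r.1 (dir r.1 F)) = 0 := by simp [V, ← derivative_res, hr]
  have e2 : V (dir u.1 (dir u.1 F)) = 0 := by
    rw [hV, ← derivative_res, ← derivative_res, hu]; simp
  have s1 := congrArg V (quartic_division r.1 F)
  have s2 := congrArg V (quartic_division u.1 F)
  rw [hadd, hmul, hmul, hadd, hmul, hC, e1, d1, mul_zero, zero_mul, zero_add] at s1
  rw [hadd, hmul, hmul, hadd, hmul, hC, e2, d2, mul_zero, zero_mul, zero_add] at s2
  simp only [dir, hadd, hmul, hpow, hC] at d1 d2
  have hne : r.1 - u.1 ≠ 0 := sub_ne_zero.mpr ht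
  have hα : V (remOne F) = 0 := by
    have : V (remOne F) * (r.1 - u.1) = 0 := by linear_combination s2 - s1
    exact (mul_eq_zero.mp this).resolve_right hne
  have hy : V (MvPolynomial.pderiv 1 F) = -(r.1 + u.1) * V (MvPolynomial.pderiv 2 F) := by
    apply mul_right_cancel₀ hne
    linear_combination d1 - d2
  refine ⟨hy, ?_, hα, ?_⟩
  · rw [hy] at d1
    linear_combination d1
  · rw [hα] at s1
    linear_combination -s1

end Surface

section Surface

variable {K : Type*} [Field K]

theorem totalDegree_mul_le' {G H : MvPolynomial (Fin 3) K} {a b : ℕ} (hG : G.totalDegree ≤ a)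
    (hH : H.totalDegree ≤ b) : (G * H).totalDegree ≤ a + b :=
  (MvPolynomial.totalDegree_mul G H).trans (add_le_add hG hH)

theorem totalDegree_two_mul_le {G : MvPolynomial (Fin 3) K} {a : ℕ} (hG : G.totalDegree ≤ a) :
    (2 * G).totalDegree ≤ a := by
  rw [two_mul]
  exact (MvPolynomial.totalDegree_add _ _).trans (max_le hG hG)

theorem totalDegree_sub_le' {G H : MvPolynomial (Fin 3) K} {a : ℕ} (hG : G.totalDegree ≤ a)
    (hH : H.totalDegree ≤ a) : (G - H).totalDegree ≤ a :=
  (MvPolynomial.totalDegree_sub _ _).trans (max_le hG hH)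

theorem totalDegree_add_le' {G H : MvPolynomial (Fin 3) K} {a : ℕ} (hG : G.totalDegree ≤ a)
    (hH : H.totalDegree ≤ a) : (G + H).totalDegree ≤ a :=
  (MvPolynomial.totalDegree_add _ _).trans (max_le hG hH)

theorem totalDegree_rem_le (F : MvPolynomial (Fin 3) K) :
    (remOne F).totalDegree ≤ 4 * F.totalDegree ∧ (remZero F).totalDegree ≤ 4 * F.totalDegree ∧
      (discP F * MvPolynomial.pderiv 2 F).totalDegree ≤ 4 * F.totalDegree := by
  set d := F.totalDegree with hd
  have h1 : ∀ i, (MvPolynomial.pderiv i F).totalDegree ≤ d := fun i =>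
    (totalDegree_pderiv_le i F).trans (Nat.sub_le _ _)
  have h2 : ∀ i j, (MvPolynomial.pderiv i (MvPolynomial.pderiv j F)).totalDegree ≤ d := fun i j =>
    (totalDegree_pderiv_le i _).trans ((Nat.sub_le _ _).trans (h1 j))
  have hq1 : (quotOne F).totalDegree ≤ d + d + d := by
    refine totalDegree_sub_le' ?_ ?_
    · rw [mul_assoc, add_assoc, pow_two]
      exact totalDegree_two_mul_le (totalDegree_mul_le' (h2 _ _) (totalDegree_mul_le' (h1 _) (h1 _)))
    · exact totalDegree_mul_le' (totalDegree_mul_le' (h2 _ _) (h1 _)) (h1 _)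
  have hq0 : (quotZero F).totalDegree ≤ d + d + d := by
    refine totalDegree_add_le' (totalDegree_sub_le' (totalDegree_sub_le' ?_ ?_) ?_) ?_
    · rw [add_assoc, pow_two]
      exact totalDegree_mul_le' (totalDegree_add_le' (h2 _ _) (totalDegree_two_mul_le (h2 _ _)))
        (totalDegree_mul_le' (h1 _) (h1 _))
    · exact totalDegree_mul_le' (totalDegree_mul_le' (h2 _ _) (h1 _)) (h1 _)
    · exact totalDegree_mul_le' (totalDegree_mul_le' (totalDegree_two_mul_le (h2 _ _)) (h1 _)) (h1 _)
    · rw [add_assoc, pow_two]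
      exact totalDegree_mul_le' (h2 _ _) (totalDegree_mul_le' (h1 _) (h1 _))
  have hz3 : (MvPolynomial.pderiv 2 F ^ 3).totalDegree ≤ d + d + d := by
    rw [pow_succ, pow_two]
    exact totalDegree_mul_le' (totalDegree_mul_le' (h1 _) (h1 _)) (h1 _)
  have e4 : 4 * d = d + d + d + d := by ring
  have e4' : 4 * d = d + (d + d + d) := by ring
  refine ⟨?_, ?_, ?_⟩
  · refine totalDegree_sub_le' (totalDegree_sub_le' ?_ ?_) ?_
    · rw [e4']
      exact totalDegree_mul_le' (totalDegree_two_mul_le (h2 _ _)) hz3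
    · rw [e4]
      exact totalDegree_mul_le' hq1 (h1 _)
    · rw [e4]
      exact totalDegree_mul_le' hq0 (h1 _)
  · refine totalDegree_sub_le' ?_ ?_
    · rw [e4']
      exact totalDegree_mul_le' (h2 _ _) hz3
    · rw [e4]
      exact totalDegree_mul_le' hq0 (h1 _)
  · have : (discP F).totalDegree ≤ d + d := by
      refine totalDegree_sub_le' ?_ ?_
      · rw [pow_two]
        exact totalDegree_mul_le' (h1 _) (h1 _)
      · have : (4 : MvPolynomial (Fin 3) K) = 2 * 2 := by norm_num
        rw [this, mul_assoc, mul_assoc]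
        exact totalDegree_two_mul_le (totalDegree_two_mul_le (totalDegree_mul_le' (h1 _) (h1 _)))
    have := totalDegree_mul_le' this (h1 2)
    omega

/-- The number of blue lines of an irreducible surface that meet a red line on it, when the
remainders `remOne` and `remZero` vanish identically on the surface. On such a surface the second
slope at the points of a line is a Möbius function of the position, so that the blue lines
meeting it at general points have collinear parameters. -/
theorem card_edges_ruled (p : ℕ) [CharP K p] {R B : Finset (K × K × K)} {k : ℕ}
    (h : Admissible R B k) {r : K × K × K} (hr : r ∈ R) {F : MvPolynomial (Fin 3) K}
    (hp : 2 * F.totalDegree + 2 < p) (h1 : F ∣ remOne F) (h0 : F ∣ remZero F)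
    (hrF : res r F = 0) (hD : res r (discP F * MvPolynomial.pderiv 2 F) ≠ 0) :
    (edges B r F).card ≤ F.totalDegree + k := by
  obtain ⟨G1, hG1⟩ := h1
  obtain ⟨G0, hG0⟩ := h0
  set t := r.1 with htdef
  set d := F.totalDegree with hd
  set b := res r (MvPolynomial.pderiv 2 F) with hb
  set fy := res r (MvPolynomial.pderiv 1 F) with hfy
  set a := fy + 2 * Polynomial.C t * b with ha
  have hCt : res r (MvPolynomial.C t) = Polynomial.C t := by simp [res]
  have hq : res r (dir t F) = 0 := by rw [← derivative_res, hrF]; simp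
  have hqq : res r (dir t (dir t F)) = 0 := by rw [← derivative_res, hq]; simp
  have hfx : res r (MvPolynomial.pderiv 0 F) = -(Polynomial.C t * fy) - Polynomial.C t ^ 2 * b := by
    have := hq
    simp only [dir, map_add, map_mul, map_pow, hCt] at this
    linear_combination this
  have hbne : b ≠ 0 := by
    intro h'
    apply hD
    rw [map_mul, ← hb, h', mul_zero]
  have hane : a ≠ 0 := by
    intro h'
    apply hD
    have : res r (discP F) = a ^ 2 := by
      have h4 : res r (4 : MvPolynomial (Fin 3) K) = 4 := map_ofNat _ _
      simp only [discP, map_sub, map_mul, map_pow, h4, hfx, ← hfy, ← hb, ha]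
      ring
    rw [map_mul, this, h']
    simp
  -- the linear differential equation satisfied by both partials along the line
  set Q := res r (quotP t F) with hQ
  set hh := res r (G1 * MvPolynomial.C t + G0) with hhh
  have hstar : MvPolynomial.pderiv 2 F ^ 3 * dir t (dir t F) =
      dir t F * quotP t F + F * (G1 * MvPolynomial.C t + G0) := by
    rw [quartic_division]
    linear_combination MvPolynomial.C t * hG1 + hG0
  have hode : ∀ i, b ^ 3 * Polynomial.derivative (Polynomial.derivative
      (res r (MvPolynomial.pderiv i F))) =
      Polynomial.derivative (res r (MvPolynomial.pderiv i F)) * Q +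
        res r (MvPolynomial.pderiv i F) * hh := by
    intro i
    have := congrArg (fun G => res r (MvPolynomial.pderiv i G)) hstar
    simp only [map_add, MvPolynomial.pderiv_mul, map_mul, pderiv_dir, hrF, hq, hqq] at this
    rw [derivative_res, derivative_res]
    simp only [map_pow] at this
    simp only [hhh, map_add, map_mul]
    linear_combination this
  have hode1 := hode 1
  have hode2 := hode 2
  rw [← hfy] at hode1
  rw [← hb] at hode2
  have hda : Polynomial.derivative a =
      Polynomial.derivative fy + 2 * Polynomial.C t * Polynomial.derivative b := by
    have h2 : (2 : Polynomial K) = Polynomial.C 2 := rfl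
    rw [ha, h2, ← Polynomial.C_mul, Polynomial.derivative_add, Polynomial.derivative_C_mul]
  have hdda : Polynomial.derivative (Polynomial.derivative a) =
      Polynomial.derivative (Polynomial.derivative fy) +
        2 * Polynomial.C t * Polynomial.derivative (Polynomial.derivative b) := by
    have h2 : (2 : Polynomial K) = Polynomial.C 2 := rfl
    rw [hda, h2, ← Polynomial.C_mul, Polynomial.derivative_add, Polynomial.derivative_C_mul]
  have hodea : b ^ 3 * Polynomial.derivative (Polynomial.derivative a) =
      Polynomial.derivative a * Q + a * hh := by
    rw [hdda, hda, ha]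
    linear_combination hode1 + 2 * Polynomial.C t * hode2
  -- the derivative in `t` of the division identity
  have hparam : 2 * b ^ 3 * Polynomial.derivative a = a * Q := by
    have h2 : res r (2 : MvPolynomial (Fin 3) K) = 2 := map_ofNat _ _
    have hrem : res r (remOne F) = 0 := by rw [hG1, map_mul, hrF, zero_mul]
    simp only [remOne, map_sub, map_mul, map_pow, h2, ← hfy, ← hb, hfx] at hrem
    rw [hda, hfy, hb, derivative_res, derivative_res]
    simp only [dir, ha, hQ, quotP, map_add, map_mul, map_pow, hCt, ← hb, ← htdef,
      pderiv_comm' (2 : Fin 3) 1]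
    simp only [quotOne, quotZero, map_add, map_sub, map_mul, map_pow, h2, ← hfy, ← hb, hfx]
      at hrem ⊢
    linear_combination hrem
  set W := Polynomial.derivative a * b - a * Polynomial.derivative b with hW
  have hdW : Polynomial.derivative W = Polynomial.derivative (Polynomial.derivative a) * b -
      a * Polynomial.derivative (Polynomial.derivative b) := by
    rw [hW]
    simp only [Polynomial.derivative_sub, Polynomial.derivative_mul]
    ring
  have hWa : a * Polynomial.derivative W = 2 * Polynomial.derivative a * W := by
    apply mul_left_cancel₀ (pow_ne_zero 3 hbne)
    rw [hdW, hW]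
    linear_combination a * b * hodea - a ^ 2 * hode2 -
      (Polynomial.derivative a * b - a * Polynomial.derivative b) * hparam
  have hbdeg : b.natDegree ≤ d := (natDegree_res_le _ _).trans
    ((totalDegree_pderiv_le _ _).trans (Nat.sub_le _ _))
  have hadeg : a.natDegree ≤ d := by
    have h2 : (2 : Polynomial K) = Polynomial.C 2 := rfl
    rw [ha, h2, ← Polynomial.C_mul]
    exact Polynomial.natDegree_add_le_of_degree_le ((natDegree_res_le _ _).trans
      ((totalDegree_pderiv_le _ _).trans (Nat.sub_le _ _)))
      ((Polynomial.natDegree_C_mul_le _ _).trans hbdeg)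
  have hWdeg : W.natDegree ≤ 2 * d := by
    have da := Polynomial.natDegree_derivative_le a
    have db := Polynomial.natDegree_derivative_le b
    refine (Polynomial.natDegree_sub_le _ _).trans (max_le ?_ ?_)
    · refine Polynomial.natDegree_mul_le.trans ?_; omega
    · refine Polynomial.natDegree_mul_le.trans ?_; omega
  obtain ⟨C0, hC0⟩ := eq_smul_of_wronskian_eq_zero p W (a ^ 2) (pow_ne_zero 2 hane) (by omega)
    (by rw [Polynomial.natDegree_pow]; omega) (by
      rw [Polynomial.derivative_pow]
      simp only [Nat.cast_ofNat, Nat.add_one_sub_one, pow_one]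
      have h2 : (Polynomial.C 2 : Polynomial K) = 2 := rfl
      rw [h2]
      linear_combination -a * hWa)
  obtain ⟨c1, hc1⟩ := eq_smul_of_wronskian_eq_zero p (b + Polynomial.C C0 * (Polynomial.X * a)) a
    hane (by
      refine lt_of_le_of_lt (Polynomial.natDegree_add_le _ _) (max_lt (by omega) ?_)
      refine lt_of_le_of_lt (Polynomial.natDegree_C_mul_le _ _) ?_
      refine lt_of_le_of_lt Polynomial.natDegree_mul_le ?_
      rw [Polynomial.natDegree_X]; omega) (by omega) (by
      simp only [Polynomial.derivative_add, Polynomial.derivative_C, Polynomial.derivative_mul,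
        Polynomial.derivative_X]
      rw [hW] at hC0
      linear_combination hC0)
  -- split the crossings according to whether `a` vanishes there
  have hsplit : (edges B r F) ⊆
      ((edges B r F).filter fun u => a.eval (xing r u) = 0) ∪
      (B.filter fun u => (c1 * u.1 + C0 * u.2.1 = t * c1 + C0 * r.2.1 - 1 ∧
        u.2.2 = -r.2.1 * u.1 + t * u.2.1 + r.2.2) ∧ (c1 ≠ 0 ∨ C0 ≠ 0)) := by
    intro u hu
    obtain ⟨huB, hm, huF⟩ := Finset.mem_filter.mp hu
    have ht := h.slope r hr u huB
    rw [Finset.mem_union]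
    by_cases hax : a.eval (xing r u) = 0
    · left
      exact Finset.mem_filter.mpr ⟨hu, hax⟩
    · right
      obtain ⟨v1, -, -, -⟩ := crossing_values ht hm hrF huF
      simp only [← hfy, ← hb] at v1
      have hx : xing r u * (r.1 - u.1) = u.2.1 - r.2.1 := div_mul_cancel₀ _ (sub_ne_zero.mpr ht)
      have hae := congrArg (Polynomial.eval (xing r u)) ha
      have hbe := congrArg (Polynomial.eval (xing r u)) hc1
      simp only [Polynomial.eval_add, Polynomial.eval_mul, Polynomial.eval_C, Polynomial.eval_X,
        Polynomial.eval_ofNat] at hae hbe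
      have hlin : c1 * u.1 + C0 * u.2.1 = t * c1 + C0 * r.2.1 - 1 := by
        apply mul_left_cancel₀ hax
        rw [v1, ← htdef] at hae
        rw [← htdef] at hx
        linear_combination hae + (t - u.1) * hbe - C0 * a.eval (xing r u) * hx
      refine Finset.mem_filter.mpr ⟨huB, ⟨hlin, ?_⟩, ?_⟩
      · unfold Meets at hm
        linear_combination -hm
      · by_contra! hcc
        rw [hcc.1, hcc.2] at hlin
        simp at hlin
  refine (Finset.card_le_card hsplit).trans ((Finset.card_union_le _ _).trans (add_le_add ?_ ?_))
  · refine (card_le_of_eval_zero h hr hane _ ((Finset.filter_subset _ _).trans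
      (Finset.filter_subset _ _)) ?_).trans hadeg
    intro u hu
    obtain ⟨hu1, hu2⟩ := Finset.mem_filter.mp hu
    exact ⟨(Finset.mem_filter.mp hu1).2.1, hu2⟩
  · by_cases hcc : c1 ≠ 0 ∨ C0 ≠ 0
    · simp only [hcc, and_true]
      exact h.coll c1 C0 _ _ _ _ hcc
    · simp [hcc]

end Surface

section Surface

variable {K : Type*} [Field K]

/-- On an irreducible surface of degree less than about `p / 2`, all but `4 deg²` of the red lines
meet at most `4 deg + k` of the blue lines on the surface. -/
theorem irreducible_surface (p : ℕ) [CharP K p] {R B : Finset (K × K × K)} {k : ℕ}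
    (h : Admissible R B k) {F : MvPolynomial (Fin 3) K} (hF : Irreducible F)
    (hp : 2 * F.totalDegree + 2 < p) :
    ∃ X ⊆ R, X.card ≤ 4 * F.totalDegree ^ 2 ∧
      ∀ r ∈ R, r ∉ X → (edges B r F).card ≤ 4 * F.totalDegree + k := by
  -- it suffices to find a surface `E` not containing `F = 0` such that red lines on `F = 0` but
  -- not on `E = 0` have few crossings
  have main : ∃ E : MvPolynomial (Fin 3) K, ¬ F ∣ E ∧ E.totalDegree ≤ 4 * F.totalDegree ∧
      ∀ r ∈ R, res r F = 0 → res r E ≠ 0 → (edges B r F).card ≤ 4 * F.totalDegree + k := by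
    have hcross : ∀ E : MvPolynomial (Fin 3) K, E.totalDegree ≤ 4 * F.totalDegree →
        (∀ r ∈ R, res r F = 0 → ∀ u ∈ B, Meets r u → res u F = 0 →
          (res r E).eval (xing r u) = 0) →
        ∀ r ∈ R, res r F = 0 → res r E ≠ 0 → (edges B r F).card ≤ 4 * F.totalDegree + k := by
      intro E hE hv r hr hrF hrE
      have := card_le_of_eval_zero h hr hrE (edges B r F) (Finset.filter_subset _ _) (by
        intro u hu
        obtain ⟨huB, hm, huF⟩ := Finset.mem_filter.mp hu
        exact ⟨hm, hv r hr hrF u huB hm huF⟩)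
      have h2 := natDegree_res_le r E
      omega
    obtain ⟨hd1, hd0, hdD⟩ := totalDegree_rem_le F
    by_cases h1 : F ∣ remOne F
    swap
    · exact ⟨remOne F, h1, hd1, hcross _ hd1 fun r hr hrF u hu hm huF =>
        (crossing_values (h.slope r hr u hu) hm hrF huF).2.2.1⟩
    by_cases h0 : F ∣ remZero F
    swap
    · exact ⟨remZero F, h0, hd0, hcross _ hd0 fun r hr hrF u hu hm huF =>
        (crossing_values (h.slope r hr u hu) hm hrF huF).2.2.2⟩
    by_cases hD : F ∣ discP F * MvPolynomial.pderiv 2 F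
    swap
    · refine ⟨_, hD, hdD, fun r hr hrF hrE => ?_⟩
      have := card_edges_ruled p h hr hp h1 h0 hrF hrE
      omega
    -- all crossings are singular points
    have hdeg : F.totalDegree ≠ 0 := by
      intro h'
      rw [MvPolynomial.totalDegree_eq_zero_iff_eq_C] at h'
      apply hF.not_isUnit
      rw [h'] at hF ⊢
      refine (IsUnit.mk0 _ ?_).map MvPolynomial.C
      intro h''
      rw [h'', map_zero] at hF
      exact hF.ne_zero rfl
    obtain ⟨i, hi⟩ := exists_pderiv_ne_zero p F hdeg (by omega)
    have hdi := totalDegree_pderiv_le i F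
    refine ⟨MvPolynomial.pderiv i F, ?_, by omega, hcross _ (by omega) ?_⟩
    · rintro ⟨G, hG⟩
      have hG0 : G ≠ 0 := by
        rintro rfl
        exact hi (by simpa using hG)
      rw [hG, MvPolynomial.totalDegree_mul_of_isDomain hF.ne_zero hG0] at hdi
      omega
    · intro r hr hrF u hu hm huF
      obtain ⟨vy, vx, -, -⟩ := crossing_values (h.slope r hr u hu) hm hrF huF
      beta_reduce at vx vy
      have hz : (res r (discP F * MvPolynomial.pderiv 2 F)).eval (xing r u) = 0 := by
        obtain ⟨G, hG⟩ := hD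
        rw [hG, map_mul, hrF, zero_mul, Polynomial.eval_zero]
      have h4 : res r (4 : MvPolynomial (Fin 3) K) = 4 := map_ofNat _ _
      simp only [discP, map_sub, map_mul, map_pow, h4, Polynomial.eval_sub, Polynomial.eval_mul,
        Polynomial.eval_pow, Polynomial.eval_ofNat, vy, vx] at hz
      have hz' : (r.1 - u.1) ^ 2 * (res r (MvPolynomial.pderiv 2 F)).eval (xing r u) ^ 3 = 0 := by
        linear_combination hz
      have hzz := pow_eq_zero_iff (three_ne_zero) |>.mp ((mul_eq_zero.mp hz').resolve_left
        (pow_ne_zero 2 (sub_ne_zero.mpr (h.slope r hr u hu))))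
      rw [hzz, mul_zero] at vx vy
      fin_cases i
      · exact vx
      · exact vy
      · exact hzz
  obtain ⟨E, hFE, hE, hcard⟩ := main
  refine ⟨R.filter fun r => res r F = 0 ∧ res r E = 0, Finset.filter_subset _ _, ?_, ?_⟩
  · have := bezout_lines F E hF hFE _ hE (R.filter fun r => res r F = 0 ∧ res r E = 0)
      (fun v hv => (Finset.mem_filter.mp hv).2)
    nlinarith
  · intro r hr hrX
    by_cases hrF : res r F = 0
    · refine hcard r hr hrF fun hrE => hrX (Finset.mem_filter.mpr ⟨hr, hrF, hrE⟩)
    · have := card_edges_of_res_ne_zero h hr hrF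
      omega

/-- Apart from at most `4 D²` exceptional red lines, every red line meets at most `4 D + k` of the
blue lines on a surface of degree `D`. -/
theorem surface_edges (p : ℕ) [CharP K p] {R B : Finset (K × K × K)} {k : ℕ}
    (h : Admissible R B k) (F : MvPolynomial (Fin 3) K) (hF0 : F ≠ 0)
    (hp : 2 * F.totalDegree + 2 < p) :
    ∃ X ⊆ R, X.card ≤ 4 * F.totalDegree ^ 2 ∧
      ∀ r ∈ R, r ∉ X → (edges B r F).card ≤ 4 * F.totalDegree + k := by
  induction F using WfDvdMonoid.induction_on_irreducible with
  | zero => exact absurd rfl hF0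
  | unit F hu =>
    refine ⟨∅, Finset.empty_subset _, by simp, fun r _ _ => ?_⟩
    have : edges B r F = ∅ := by
      refine Finset.filter_eq_empty_iff.mpr fun u _ hm => ?_
      exact (hu.map (res u)).ne_zero hm.2
    simp [this]
  | mul H G hH hG ih =>
    have hdeg := MvPolynomial.totalDegree_mul_of_isDomain hG.ne_zero hH
    rw [hdeg] at hp ⊢
    obtain ⟨X1, hX1, hc1, hb1⟩ := ih hH (by omega)
    by_cases hdvd : G ∣ H
    · refine ⟨X1, hX1, hc1.trans (by gcongr; omega), fun r hr hrX => ?_⟩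
      refine le_trans (Finset.card_le_card ?_) ((hb1 r hr hrX).trans (by omega))
      intro u hu
      obtain ⟨huB, hm, huF⟩ := Finset.mem_filter.mp hu
      refine Finset.mem_filter.mpr ⟨huB, hm, ?_⟩
      rw [map_mul, mul_eq_zero] at huF
      rcases huF with h' | h'
      · obtain ⟨J, rfl⟩ := hdvd
        rw [map_mul, h', zero_mul]
      · exact h'
    · obtain ⟨X2, hX2, hc2, hb2⟩ := irreducible_surface p h hG (by omega)
      set X3 := R.filter fun r => res r G = 0 ∧ res r H = 0 with hX3
      have hc3 := bezout_lines G H hG hdvd _ le_rfl X3 (fun v hv => (Finset.mem_filter.mp hv).2)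
      refine ⟨X1 ∪ X2 ∪ X3, ?_, ?_, ?_⟩
      · exact Finset.union_subset (Finset.union_subset hX1 hX2) (Finset.filter_subset _ _)
      · have := Finset.card_union_le (X1 ∪ X2) X3
        have := Finset.card_union_le X1 X2
        nlinarith
      · intro r hr hrX
        simp only [Finset.mem_union, not_or] at hrX
        have hsub : edges B r (G * H) ⊆ edges B r G ∪ edges B r H := by
          intro u hu
          obtain ⟨huB, hm, huF⟩ := Finset.mem_filter.mp hu
          rw [map_mul, mul_eq_zero] at huF
          rw [Finset.mem_union]
          exact huF.imp (fun h' => Finset.mem_filter.mpr ⟨huB, hm, h'⟩)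
            (fun h' => Finset.mem_filter.mpr ⟨huB, hm, h'⟩)
        have hle := (Finset.card_le_card hsub).trans (Finset.card_union_le _ _)
        have g1 := hb1 r hr hrX.1.1
        have g2 := hb2 r hr hrX.1.2
        by_cases hrG : res r G = 0
        · have hrH : res r H ≠ 0 := fun hrH => hrX.2 (Finset.mem_filter.mpr ⟨hr, hrG, hrH⟩)
          have := card_edges_of_res_ne_zero h hr hrH
          omega
        · have := card_edges_of_res_ne_zero h hr hrG
          omega

end Surface

/-! ### Incidences between red and blue lines -/

section Incidences

variable {K : Type*} [Field K]

theorem exists_surface (D : ℕ) (hD : 1 ≤ D) (B : Finset (K × K × K)) (hB : B.card ≤ D ^ 2) :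
    ∃ F : MvPolynomial (Fin 3) K, F ≠ 0 ∧ F.totalDegree ≤ 6 * D ∧ ∀ u ∈ B, res u F = 0 := by
  let s : Set (Fin 3 →₀ ℕ) := {m | ∀ i, m i ≤ 2 * D}
  let V := MvPolynomial.restrictSupport K s
  let eqv : s ≃ (Fin 3 → Fin (2 * D + 1)) :=
    { toFun := fun m i => ⟨m.1 i, Nat.lt_succ_of_le (m.2 i)⟩
      invFun := fun x => ⟨Finsupp.equivFunOnFinite.symm fun i => (x i : ℕ), fun i => by
        have := (x i).2
        simp only [Finsupp.equivFunOnFinite_symm_apply_apply]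
        omega⟩
      left_inv := fun m => by ext i; simp
      right_inv := fun x => by ext i; simp }
  have hfin : Finite s := Finite.of_equiv _ eqv.symm
  have hV : Module.finrank K V = (2 * D + 1) ^ 3 := by
    rw [Module.finrank_eq_nat_card_basis (MvPolynomial.basisRestrictSupport K s),
      Nat.card_congr eqv, Nat.card_eq_fintype_card]
    simp
  have : Module.Finite K V := Module.Finite.of_basis (MvPolynomial.basisRestrictSupport K s)
  have hdeg : ∀ F ∈ V, F.totalDegree ≤ 6 * D := by
    intro F hF
    refine Finset.sup_le fun m hm => ?_
    have hm' : m ∈ s := ((MvPolynomial.mem_restrictSupport_iff K).mp hF) hm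
    rw [Finsupp.sum_fintype _ _ (fun _ => rfl), Fin.sum_univ_three]
    have h0 := hm' 0
    have h1 := hm' 1
    have h2 := hm' 2
    omega
  let φ : V →ₗ[K] (B → Fin (6 * D + 1) → K) :=
    (LinearMap.pi fun u : B => LinearMap.pi fun j : Fin (6 * D + 1) =>
      (Polynomial.lcoeff K (j : ℕ)).comp (res (u : K × K × K)).toLinearMap).comp V.subtype
  have hlt : Module.finrank K (B → Fin (6 * D + 1) → K) < Module.finrank K V := by
    rw [hV]
    simp only [Module.finrank_pi_fintype, Module.finrank_self, Finset.sum_const, Finset.card_univ,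
      Fintype.card_fin, Fintype.card_coe, smul_eq_mul, mul_one]
    calc B.card * (6 * D + 1) ≤ D ^ 2 * (6 * D + 1) := Nat.mul_le_mul_right _ hB
      _ < (2 * D + 1) ^ 3 := by ring_nf; nlinarith
  obtain ⟨⟨F, hFV⟩, hF, hne⟩ := (Submodule.ne_bot_iff _).mp (LinearMap.ker_ne_bot_of_finrank_lt hlt
    (f := φ))
  refine ⟨F, fun h => hne (Subtype.ext h), hdeg F hFV, fun u hu => ?_⟩
  ext j
  rw [Polynomial.coeff_zero]
  by_cases hj : j < 6 * D + 1
  · have := congrFun (congrFun (LinearMap.mem_ker.mp hF) ⟨u, hu⟩) ⟨j, hj⟩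
    simpa [φ] using this
  · refine Polynomial.coeff_eq_zero_of_natDegree_lt ?_
    have h1 := natDegree_res_le u F
    have h2 := hdeg F hFV
    omega

/-- The number of intersecting pairs of a red and a blue line. -/
def inc (R B : Finset (K × K × K)) : ℕ := ∑ r ∈ R, (B.filter fun u => Meets r u).card

theorem inc_le_mul (R B : Finset (K × K × K)) : inc R B ≤ R.card * B.card := by
  unfold inc
  rw [← smul_eq_mul]
  exact Finset.sum_le_card_nsmul _ _ _ fun r _ => Finset.card_filter_le _ _

theorem inc_union_le (R B B' : Finset (K × K × K)) : inc R (B ∪ B') ≤ inc R B + inc R B' := by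
  unfold inc
  rw [← Finset.sum_add_distrib]
  refine Finset.sum_le_sum fun r _ => ?_
  rw [Finset.filter_union]
  exact Finset.card_union_le _ _

theorem inc_chunks (R : Finset (K × K × K)) (m b : ℕ) (B₀ : Finset (K × K × K))
    (hb : ∀ B ⊆ B₀, B.card ≤ m → inc R B ≤ b) (j : ℕ) :
    ∀ B ⊆ B₀, B.card ≤ j * m → inc R B ≤ j * b := by
  induction j with
  | zero =>
    intro B _ hB
    have : B = ∅ := by
      rw [← Finset.card_eq_zero]; omega
    simp [this, inc]
  | succ j ih =>
    intro B hBB hB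
    by_cases hm : B.card ≤ m
    · exact (hb B hBB hm).trans (by nlinarith)
    · obtain ⟨B', hB', hc⟩ := Finset.exists_subset_card_eq (le_of_not_ge hm)
      have h1 := Finset.card_sdiff_add_card_eq_card hB'
      have h2 := ih (B \ B') (Finset.sdiff_subset.trans hBB) (by
        have : (j + 1) * m = j * m + m := by ring
        omega)
      have h3 := hb B' (hB'.trans hBB) hc.le
      have h4 := inc_union_le R (B \ B') B'
      rw [Finset.sdiff_union_of_subset hB'] at h4
      have : (j + 1) * b = j * b + b := by ring
      omega

/-- One step of the degree reduction: a chunk of `D²` blue lines is placed on a surface of degree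
`6 D`, and only the exceptional red lines of that surface can have many crossings. -/
theorem inc_step (p : ℕ) [CharP K p] {R B : Finset (K × K × K)} {k : ℕ} (h : Admissible R B k)
    (D : ℕ) (hD : 1 ≤ D) (hB : B.card ≤ D ^ 2) (hp : 12 * D + 2 < p) :
    ∃ X ⊆ R, X.card ≤ 144 * D ^ 2 ∧ inc R B ≤ R.card * (24 * D + k) + inc X B := by
  obtain ⟨F, hF0, hdeg, hFB⟩ := exists_surface D hD B hB
  obtain ⟨X, hX, hXc, hXe⟩ := surface_edges p h F hF0 (by omega)
  refine ⟨X, hX, ?_, ?_⟩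
  · have : F.totalDegree ^ 2 ≤ (6 * D) ^ 2 := Nat.pow_le_pow_left hdeg 2
    nlinarith
  · have hedge : ∀ r, edges B r F = B.filter fun u => Meets r u := by
      intro r
      refine Finset.filter_congr fun u hu => ?_
      simp [hFB u hu]
    unfold inc
    rw [← Finset.sum_sdiff hX]
    refine Nat.add_le_add_right ?_ _
    have : ∑ r ∈ R \ X, (B.filter fun u => Meets r u).card ≤ (R \ X).card * (24 * D + k) := by
      rw [← smul_eq_mul]
      refine Finset.sum_le_card_nsmul _ _ _ fun r hr => ?_
      rw [Finset.mem_sdiff] at hr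
      have := hXe r hr.1 hr.2
      rw [hedge] at this
      omega
    exact this.trans (Nat.mul_le_mul_right _ (Finset.card_le_card Finset.sdiff_subset))

/-- The recursion, with `q = 288`, `h = q⁸`, `H = 144 h²` and degrees `h ^ n`. -/
theorem inc_rec (p : ℕ) [CharP K p] (k : ℕ) (q h H : ℕ) (hq : q = 288)
    (hh : 288 ≤ h) (hH : H = 144 * h ^ 2) (n : ℕ) :
    ∀ R B : Finset (K × K × K), Admissible R B k → R.card ≤ H * (h ^ n) ^ 2 →
      B.card ≤ H * (h ^ n) ^ 2 → (n ≠ 0 → 12 * h ^ n + 2 < p) →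
      inc R B ≤ 48 * H ^ 2 * ((h ^ n) ^ 3 + k * (h ^ n) ^ 2 * q ^ n) := by
  induction n with
  | zero =>
    intro R B _ hR hB _
    simp only [pow_zero, one_pow, mul_one] at hR hB ⊢
    calc inc R B ≤ R.card * B.card := inc_le_mul R B
      _ ≤ H * H := Nat.mul_le_mul hR hB
      _ ≤ 48 * H ^ 2 * (1 + k) := by nlinarith
  | succ n ih =>
    intro R B hadm hR hB hp
    set d := h ^ n with hd
    have hhn : h ^ (n + 1) = d * h := pow_succ _ _
    rw [hhn] at hR hB hp ⊢
    have hd1 : 1 ≤ d := Nat.one_le_pow _ _ (by omega)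
    have hdh : d ≤ d * h := Nat.le_mul_of_pos_right _ (by omega)
    have hqn : 1 ≤ q ^ n := Nat.one_le_pow _ _ (by omega)
    set e := q ^ n with he
    have hchunk : ∀ B' ⊆ B, B'.card ≤ (d * h) ^ 2 → inc R B' ≤
        H * (d * h) ^ 2 * (24 * (d * h) + k) + 48 * H ^ 2 * (d ^ 3 + k * d ^ 2 * e) := by
      intro B' hB' hc
      obtain ⟨X, hX, hXc, hXi⟩ := inc_step p (hadm.mono subset_rfl hB') (d * h) (by omega) hc
        (hp (by omega))
      have h1 := ih X B' (hadm.mono hX hB') (hXc.trans (by rw [hH]; ring_nf; rfl))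
        (hc.trans (by rw [hH]; nlinarith [Nat.zero_le ((d * h) ^ 2)])) (fun _ => by
          have := hp (by omega); omega)
      refine hXi.trans (add_le_add (Nat.mul_le_mul_right _ hR) h1)
    refine (inc_chunks R _ _ B hchunk H B subset_rfl hB).trans ?_
    have e1 : H * d ^ 3 * 2 ≤ (d * h) ^ 3 := by
      rw [hH]
      calc 144 * h ^ 2 * d ^ 3 * 2 = 288 * (h ^ 2 * d ^ 3) := by ring
        _ ≤ h * (h ^ 2 * d ^ 3) := Nat.mul_le_mul_right _ hh
        _ = (d * h) ^ 3 := by ring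
    have e2 : H * d ^ 2 * e * 2 = (d * h) ^ 2 * q ^ (n + 1) := by
      rw [hH, pow_succ q, ← he, hq]
      ring
    have e3 : 1 ≤ q ^ (n + 1) := Nat.one_le_pow _ _ (by omega)
    calc H * (H * (d * h) ^ 2 * (24 * (d * h) + k) + 48 * H ^ 2 * (d ^ 3 + k * d ^ 2 * e))
        = 24 * H ^ 2 * (d * h) ^ 3 + H ^ 2 * k * (d * h) ^ 2 + 24 * H ^ 2 * (H * d ^ 3 * 2) +
          24 * H ^ 2 * k * (H * d ^ 2 * e * 2) := by ring
      _ ≤ 24 * H ^ 2 * (d * h) ^ 3 + 24 * H ^ 2 * k * ((d * h) ^ 2 * q ^ (n + 1)) +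
          24 * H ^ 2 * (d * h) ^ 3 + 24 * H ^ 2 * k * ((d * h) ^ 2 * q ^ (n + 1)) := by
        rw [e2]
        have : H ^ 2 * k * (d * h) ^ 2 ≤ 24 * H ^ 2 * k * ((d * h) ^ 2 * q ^ (n + 1)) := by
          calc H ^ 2 * k * (d * h) ^ 2 = (H ^ 2 * k * (d * h) ^ 2) * 1 := by ring
            _ ≤ (H ^ 2 * k * (d * h) ^ 2) * (24 * q ^ (n + 1)) :=
              Nat.mul_le_mul_left _ (by omega)
            _ = _ := by ring
        gcongr
      _ = _ := by ring

end Incidences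

/-- The incidence bound for admissible families, with an absolute constant. -/
theorem inc_bound : ∃ c : ℝ, 0 < c ∧ ∀ (K : Type) [Field K] (p : ℕ) [CharP K p] (k : ℕ)
    (R B : Finset (K × K × K)) (M : ℝ), Admissible R B k → 1 ≤ M →
      (R.card : ℝ) ≤ M → (B.card : ℝ) ≤ M → M ≤ (p : ℝ) ^ 2 / 2 →
      (inc R B : ℝ) ≤ c * (M ^ ((3 : ℝ) / 2) + k * M * M ^ ((1 : ℝ) / 16)) := by
  obtain ⟨q, hq⟩ : ∃ q : ℕ, q = 288 := ⟨_, rfl⟩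
  obtain ⟨h, hh⟩ : ∃ h : ℕ, h = q ^ 8 := ⟨_, rfl⟩
  obtain ⟨H, hH⟩ : ∃ H : ℕ, H = 144 * h ^ 2 := ⟨_, rfl⟩
  have hh288 : 288 ≤ h := by
    rw [hh, ← hq]
    exact Nat.le_self_pow (by norm_num) q
  have hHpos : 1 ≤ H := by rw [hH]; nlinarith
  refine ⟨48 * H ^ 2, by positivity, ?_⟩
  intro K _ p _ k R B M hadm hM hR hB hMp
  have hex : ∃ n : ℕ, M ≤ H * ((h : ℝ) ^ n) ^ 2 := by
    obtain ⟨n, hn⟩ := pow_unbounded_of_one_lt M (show (1 : ℝ) < h by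
      exact_mod_cast (show 1 < h by omega))
    refine ⟨n, ?_⟩
    have h1 : (1 : ℝ) ≤ (h : ℝ) ^ n := hM.trans hn.le
    have h2 : (1 : ℝ) ≤ H := by exact_mod_cast hHpos
    nlinarith [mul_le_mul h2 (show (h : ℝ) ^ n ≤ ((h : ℝ) ^ n) ^ 2 by nlinarith) (by positivity)
      (by positivity)]
  set n := Nat.find hex with hn
  have hnM := Nat.find_spec hex
  rw [← hn] at hnM
  have hDM : ((h : ℝ) ^ n) ^ 2 ≤ M ∧ (n ≠ 0 → 144 * ((h : ℝ) ^ n) ^ 2 < M) := by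
    rcases hcase : n with _ | m
    · simpa using hM
    · have := Nat.find_min hex (show m < Nat.find hex by omega)
      rw [not_le] at this
      have e : (H : ℝ) * ((h : ℝ) ^ m) ^ 2 = 144 * ((h : ℝ) ^ (m + 1)) ^ 2 := by
        rw [hH]; push_cast; ring
      rw [e] at this
      exact ⟨by nlinarith [sq_nonneg ((h : ℝ) ^ (m + 1))], fun _ => this⟩
  have hp : n ≠ 0 → 12 * h ^ n + 2 < p := by
    intro hn0
    have h1 := hDM.2 hn0
    have h2 : (1 : ℝ) ≤ (h : ℝ) ^ n := one_le_pow₀ (by exact_mod_cast (show 1 ≤ h by omega))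
    have h3 : ((12 * (h : ℝ) ^ n + 2)) ^ 2 < (p : ℝ) ^ 2 := by nlinarith
    have h4 := lt_of_pow_lt_pow_left₀ 2 (by positivity) h3
    exact_mod_cast h4
  have key := inc_rec p k q h H hq hh288 hH n R B hadm
    (by exact_mod_cast hR.trans hnM) (by exact_mod_cast hB.trans hnM) hp
  have key' : (inc R B : ℝ) ≤ 48 * (H : ℝ) ^ 2 *
      (((h : ℝ) ^ n) ^ 3 + k * ((h : ℝ) ^ n) ^ 2 * (q : ℝ) ^ n) := by exact_mod_cast key
  refine key'.trans (mul_le_mul_of_nonneg_left ?_ (by positivity))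
  have hM0 : 0 ≤ M := by linarith
  have hqM : (q : ℝ) ^ n ≤ M ^ ((1 : ℝ) / 16) := by
    have h1 : ((q : ℝ) ^ n) ^ (16 : ℕ) ≤ M := by
      refine le_trans (le_of_eq ?_) hDM.1
      rw [hh]; push_cast; ring
    calc (q : ℝ) ^ n = (((q : ℝ) ^ n) ^ (16 : ℕ)) ^ ((1 : ℝ) / 16) := by
          rw [← Real.rpow_natCast _ 16, ← Real.rpow_mul (by positivity)]; norm_num
      _ ≤ _ := Real.rpow_le_rpow (by positivity) h1 (by norm_num)
  have hD3 : ((h : ℝ) ^ n) ^ 3 ≤ M ^ ((3 : ℝ) / 2) := by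
    calc ((h : ℝ) ^ n) ^ 3 = (((h : ℝ) ^ n) ^ 2) ^ ((3 : ℝ) / 2) := by
          rw [← Real.rpow_natCast _ 2, ← Real.rpow_mul (by positivity), ← Real.rpow_natCast _ 3]
          norm_num
      _ ≤ _ := Real.rpow_le_rpow (by positivity) hDM.1 (by norm_num)
  have hk0 : (0 : ℝ) ≤ k := Nat.cast_nonneg k
  gcongr
  exact hDM.1

/-! ### The energy of a grid of lines and abscissae -/

section Energy

variable {p : ℕ} [Fact p.Prime]

/-- The field of rational functions over `ZMod p`, presented through the property used below: an
extension with an element that satisfies no nontrivial quadratic relation over `ZMod p`. -/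
theorem exists_transcendental (p : ℕ) [Fact p.Prime] :
    ∃ (K : Type) (_ : Field K) (φ : ZMod p →+* K) (θ : K),
      ∀ a b c : ZMod p, φ a + φ b * θ + φ c * θ ^ 2 = 0 → a = 0 ∧ b = 0 ∧ c = 0 := by
  refine ⟨FractionRing (Polynomial (ZMod p)), inferInstance,
    (algebraMap (Polynomial (ZMod p)) (FractionRing (Polynomial (ZMod p)))).comp Polynomial.C,
    algebraMap (Polynomial (ZMod p)) _ Polynomial.X, ?_⟩
  intro a b c h
  have hinj := IsFractionRing.injective (Polynomial (ZMod p)) (FractionRing (Polynomial (ZMod p)))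
  have h1 : (Polynomial.C a + Polynomial.C b * Polynomial.X + Polynomial.C c * Polynomial.X ^ 2 :
      Polynomial (ZMod p)) = 0 := by
    apply hinj
    simpa using h
  refine ⟨?_, ?_, ?_⟩
  · simpa [Polynomial.coeff_X, Polynomial.coeff_C] using congrArg (fun P => Polynomial.coeff P 0) h1
  · simpa [Polynomial.coeff_X, Polynomial.coeff_C] using congrArg (fun P => Polynomial.coeff P 1) h1
  · simpa [Polynomial.coeff_X, Polynomial.coeff_C] using congrArg (fun P => Polynomial.coeff P 2) h1

variable {K : Type} [Field K] (φ : ZMod p →+* K) (θ : K)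

/-- The red line attached to the line `Y = m X + c` (encoded as `(m, c)`) and the number `a`. -/
def redLine (x : (ZMod p × ZMod p) × ZMod p) :
    K × K × K :=
  (φ x.1.1 + θ, φ x.2 + θ ^ 2, φ x.1.2)

/-- The blue line attached to the line `Y = m X + c` (encoded as `(m, c)`) and the number `a`. -/
def blueLine (x : (ZMod p × ZMod p) × ZMod p) :
    K × K × K :=
  (φ x.1.1, φ x.2, φ x.1.2 - θ ^ 2 * φ x.1.1 + θ * φ x.2)

theorem redLine_injective : Function.Injective (redLine φ θ) := by
  rintro ⟨⟨m, c⟩, a⟩ ⟨⟨m', c'⟩, a'⟩ h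
  simp only [redLine, Prod.mk.injEq, add_left_inj] at h
  obtain ⟨h1, h2, h3⟩ := h
  rw [φ.injective h1, φ.injective h2, φ.injective h3]

theorem blueLine_injective : Function.Injective (blueLine φ θ) := by
  rintro ⟨⟨m, c⟩, a⟩ ⟨⟨m', c'⟩, a'⟩ h
  simp only [blueLine, Prod.mk.injEq] at h
  obtain ⟨h1, h2, h3⟩ := h
  have h1' := φ.injective h1
  have h2' := φ.injective h2
  subst h1' h2'
  have h3' : φ c = φ c' := by linear_combination h3
  rw [φ.injective h3']

theorem meets_red_blue (x y : (ZMod p × ZMod p) × ZMod p) :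
    Meets (redLine φ θ x) (blueLine φ θ y) ↔ x.1.1 * y.2 + x.1.2 = y.1.1 * x.2 + y.1.2 := by
  unfold Meets redLine blueLine
  simp only
  rw [← φ.injective.eq_iff (a := x.1.1 * y.2 + x.1.2), map_add, map_add, map_mul, map_mul]
  constructor
  · intro h; linear_combination h
  · intro h; linear_combination h

theorem admissible_grid
    (hθ : ∀ a b c : ZMod p, φ a + φ b * θ + φ c * θ ^ 2 = 0 → a = 0 ∧ b = 0 ∧ c = 0)
    (L : Finset (ZMod p × ZMod p)) (A : Finset (ZMod p)) (k : ℕ) (hk : 1 ≤ k)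
    (hA : A.card ≤ k)
    (hL : ∀ l m : ZMod p, (L.filter fun x => x.2 = l * x.1 + m).card ≤ k) :
    Admissible ((L ×ˢ A).image (redLine φ θ)) ((L ×ˢ A).image (blueLine φ θ)) k := by
  refine ⟨?_, ?_, ?_⟩
  · intro r hr u hu h
    obtain ⟨x, -, rfl⟩ := Finset.mem_image.mp hr
    obtain ⟨y, -, rfl⟩ := Finset.mem_image.mp hu
    simp only [redLine, blueLine] at h
    have := hθ (x.1.1 - y.1.1) 1 0 (by simp; linear_combination h)
    exact one_ne_zero this.2.1
  · intro u hu u' hu' h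
    obtain ⟨x, -, rfl⟩ := Finset.mem_image.mp hu
    obtain ⟨y, -, rfl⟩ := Finset.mem_image.mp hu'
    obtain ⟨⟨m, c⟩, a⟩ := x
    obtain ⟨⟨m', c'⟩, a'⟩ := y
    simp only [Meets, blueLine] at h
    obtain ⟨h0, h1, h2⟩ := hθ (c - c' - m' * a + m * a') (a - a') (m' - m)
      (by simp only [map_sub, map_add, map_mul]; linear_combination h)
    have e1 : a = a' := sub_eq_zero.mp h1
    have e2 : m' = m := sub_eq_zero.mp h2
    subst e1 e2
    have e3 : c = c' := by linear_combination h0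
    rw [e3]
  · intro c₁ c₀ e l₁ l₂ l₃ hc
    rw [Finset.filter_image, Finset.card_image_of_injective _ (blueLine_injective φ θ)]
    simp only [blueLine]
    set T := (L ×ˢ A).filter fun x => c₁ * φ x.1.1 + c₀ * φ x.2 = e ∧
      φ x.1.2 - θ ^ 2 * φ x.1.1 + θ * φ x.2 =
        l₁ * φ x.1.1 + l₂ * φ x.2 + l₃ with hT
    by_cases h0 : c₀ = 0
    · have h1 : c₁ ≠ 0 := by tauto
      refine le_trans (Finset.card_le_card_of_injOn (fun x => x.2) ?_ ?_) hA
      · intro x hx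
        exact (Finset.mem_product.mp (Finset.mem_filter.mp hx).1).2
      · rintro ⟨⟨m, c⟩, a⟩ hx ⟨⟨m', c'⟩, a'⟩ hy haa
        obtain ⟨-, hx1, hx2⟩ := Finset.mem_filter.mp hx
        obtain ⟨-, hy1, hy2⟩ := Finset.mem_filter.mp hy
        simp only at haa hx1 hx2 hy1 hy2
        subst haa
        have hm : φ m = φ m' := by
          apply mul_left_cancel₀ h1
          rw [h0] at hx1 hy1
          linear_combination hx1 - hy1
        have hcc : φ c = φ c' := by
          rw [hm] at hx2
          linear_combination hx2 - hy2
        rw [φ.injective hm, φ.injective hcc]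
    · by_cases hone : T.card ≤ 1
      · exact hone.trans hk
      · obtain ⟨⟨⟨m, c⟩, a⟩, hx, ⟨⟨m', c'⟩, a'⟩, hy, hxy⟩ := Finset.one_lt_card.mp (not_le.mp hone)
        have haff : ∀ x ∈ T, φ x.2 = (e - c₁ * φ x.1.1) / c₀ ∧
            φ x.1.2 = (θ ^ 2 + l₁ - (l₂ - θ) * c₁ / c₀) * φ x.1.1 +
              ((l₂ - θ) * e / c₀ + l₃) := by
          intro x hx
          obtain ⟨-, hx1, hx2⟩ := Finset.mem_filter.mp hx
          have ha : φ x.2 = (e - c₁ * φ x.1.1) / c₀ := by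
            rw [eq_div_iff h0]
            linear_combination hx1
          refine ⟨ha, ?_⟩
          rw [ha] at hx2
          field_simp at hx2 ⊢
          linear_combination hx2
        set α := θ ^ 2 + l₁ - (l₂ - θ) * c₁ / c₀
        set β := (l₂ - θ) * e / c₀ + l₃
        obtain ⟨a1, b1⟩ := haff _ hx
        obtain ⟨a2, b2⟩ := haff _ hy
        simp only at a1 b1 a2 b2
        have hmm : m ≠ m' := by
          intro h
          subst h
          rw [← a2] at a1
          rw [← b2] at b1
          exact hxy (by rw [φ.injective a1, φ.injective b1])
        have hmm' : φ m - φ m' ≠ 0 :=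
          sub_ne_zero.mpr fun h => hmm (φ.injective h)
        have hα : α = φ ((c - c') / (m - m')) := by
          rw [map_div₀, map_sub, map_sub, eq_div_iff hmm']
          linear_combination b2 - b1
        have hβ : β = φ (c - (c - c') / (m - m') * m) := by
          rw [map_sub, map_mul, ← hα]
          linear_combination -b1
        refine le_trans (Finset.card_le_card_of_injOn (fun x => x.1) ?_ ?_)
          (hL ((c - c') / (m - m')) (c - (c - c') / (m - m') * m))
        · intro x hx
          refine Finset.mem_coe.mpr (Finset.mem_filter.mpr
            ⟨(Finset.mem_product.mp (Finset.mem_filter.mp hx).1).1, ?_⟩)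
          apply φ.injective
          rw [map_add, map_mul, ← hα, ← hβ]
          exact (haff x hx).2
        · intro x hx y hy hxy'
          have e1 := (haff x hx).1
          have e2 := (haff y hy).1
          simp only at hxy'
          rw [hxy', ← e2] at e1
          exact Prod.ext hxy' (φ.injective e1)

end Energy

/-- The number of coincidences `m a + c = m' a' + c'` with `(m, c), (m', c') ∈ L` and
`a, a' ∈ A`. -/
theorem energy_bound : ∃ C : ℝ, 0 < C ∧ ∀ (p : ℕ) [Fact p.Prime] (L : Finset (ZMod p × ZMod p))
    (A : Finset (ZMod p)) (k : ℕ) (M : ℝ), 1 ≤ k → A.card ≤ k →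
    (∀ l m : ZMod p, (L.filter fun x => x.2 = l * x.1 + m).card ≤ k) → 1 ≤ M →
    (L.card * A.card : ℝ) ≤ M → M ≤ (p : ℝ) ^ 2 / 2 →
    ((((L ×ˢ A) ×ˢ (L ×ˢ A)).filter fun z =>
      z.1.1.1 * z.1.2 + z.1.1.2 = z.2.1.1 * z.2.2 + z.2.1.2).card : ℝ) ≤
      C * (M ^ ((3 : ℝ) / 2) + k * M * M ^ ((1 : ℝ) / 16)) := by
  obtain ⟨C, hC, h⟩ := inc_bound
  refine ⟨C, hC, ?_⟩
  intro p _ L A k M hk hA hL hM hLA hMp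
  obtain ⟨K, _, φ, θ, hθ⟩ := exists_transcendental p
  have hchar : CharP K p := charP_of_injective_ringHom
    (f := φ) φ.injective p
  have hcard : ((L ×ˢ A).card : ℝ) ≤ M := by
    rw [Finset.card_product]
    push_cast
    exact hLA
  have key := h K p k _ _ M (admissible_grid φ θ hθ L A k hk hA hL) hM
    (by rwa [Finset.card_image_of_injective _ (redLine_injective φ θ)])
    (by rwa [Finset.card_image_of_injective _ (blueLine_injective φ θ)]) hMp
  refine le_trans (le_of_eq ?_) key
  congr 1
  unfold inc
  rw [Finset.sum_image (redLine_injective φ θ).injOn]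
  have : ∀ x : (ZMod p × ZMod p) × ZMod p,
      (((L ×ˢ A).image (blueLine φ θ)).filter fun u => Meets (redLine φ θ x) u).card =
      ((L ×ˢ A).filter fun y => x.1.1 * y.2 + x.1.2 = y.1.1 * x.2 + y.1.2).card := by
    intro x
    rw [Finset.filter_image, Finset.card_image_of_injective _ (blueLine_injective φ θ)]
    simp only [meets_red_blue]
  simp only [this]
  rw [← Finset.card_sigma]
  refine Finset.card_bij' (fun z _ => ⟨(z.1.1, z.2.2), (z.2.1, z.1.2)⟩)
    (fun s _ => ((s.1.1, s.2.2), (s.2.1, s.1.2))) ?_ ?_ ?_ ?_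
  · intro z hz
    simp only [Finset.mem_filter, Finset.mem_product, Finset.mem_sigma] at hz ⊢
    tauto
  · intro s hs
    simp only [Finset.mem_filter, Finset.mem_product, Finset.mem_sigma] at hs ⊢
    tauto
  · intro z _; rfl
  · intro s _; rfl

/-! ### Points and lines of the projective plane -/

open Matrix in
/-- A set `Q` of points and a set `Λ` of lines of the projective plane over `ZMod p`, both given
by homogeneous coordinate vectors, with at least `κ` points of `Q` on each line of `Λ`. Vectors
that represent distinct points (or lines) have a nonzero cross product. -/
structure RichConfig {p : ℕ} (Q Λ : Finset (Fin 3 → ZMod p)) (κ : ℕ) : Prop where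
  point_ne : ∀ x ∈ Q, x ≠ 0
  line_ne : ∀ u ∈ Λ, u ≠ 0
  point_cross : ∀ x ∈ Q, ∀ y ∈ Q, x ≠ y → x ⨯₃ y ≠ 0
  line_cross : ∀ u ∈ Λ, ∀ v ∈ Λ, u ≠ v → u ⨯₃ v ≠ 0
  rich : ∀ u ∈ Λ, κ ≤ (Q.filter fun x => u ⬝ᵥ x = 0).card

section Plane

open Matrix

variable {p : ℕ} [Fact p.Prime]

theorem cross_eq_zero_of_parallel (w u v : Fin 3 → ZMod p) (h : w ≠ 0) (hu : w ⨯₃ u = 0)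
    (hv : w ⨯₃ v = 0) : u ⨯₃ v = 0 := by
  have hu0 := congrFun hu 0
  have hu1 := congrFun hu 1
  have hu2 := congrFun hu 2
  have hv0 := congrFun hv 0
  have hv1 := congrFun hv 1
  have hv2 := congrFun hv 2
  simp only [cross_apply, Matrix.cons_val, Pi.zero_apply] at hu0 hu1 hu2 hv0 hv1 hv2
  have key : ∀ i j, w i * (u ⨯₃ v) j = 0 := by
    intro i j
    rw [cross_apply]
    fin_cases i <;> fin_cases j <;> simp only [Fin.zero_eta, Fin.mk_one, Fin.reduceFinMk,
      Matrix.cons_val]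
    · linear_combination v 1 * hu1 + v 2 * hu2 + u 0 * hv0
    · linear_combination -v 0 * hu1 + u 0 * hv1
    · linear_combination -v 0 * hu2 + u 0 * hv2
    · linear_combination -v 1 * hu0 + u 1 * hv0
    · linear_combination v 0 * hu0 + v 2 * hu2 + u 1 * hv1
    · linear_combination -v 1 * hu2 + u 1 * hv2
    · linear_combination -v 2 * hu0 + u 2 * hv0
    · linear_combination -v 2 * hu1 + u 2 * hv1
    · linear_combination v 0 * hu0 + v 1 * hu1 + u 2 * hv2
  funext j
  by_contra hj
  apply h
  funext i
  exact (mul_eq_zero.mp (key i j)).resolve_right hj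

theorem cross_cross_eq_zero (x y u : Fin 3 → ZMod p) (hux : u ⬝ᵥ x = 0) (huy : u ⬝ᵥ y = 0) :
    (x ⨯₃ y) ⨯₃ u = 0 := by
  rw [vec3_dotProduct] at hux huy
  funext i
  simp only [cross_apply, Matrix.cons_val, Pi.zero_apply]
  fin_cases i <;> simp only [Fin.zero_eta, Fin.mk_one, Fin.reduceFinMk, Matrix.cons_val]
  · linear_combination y 0 * hux - x 0 * huy
  · linear_combination y 1 * hux - x 1 * huy
  · linear_combination y 2 * hux - x 2 * huy

theorem cross_eq_zero_of_dot (x y u v : Fin 3 → ZMod p) (h : x ⨯₃ y ≠ 0) (hux : u ⬝ᵥ x = 0)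
    (huy : u ⬝ᵥ y = 0) (hvx : v ⬝ᵥ x = 0) (hvy : v ⬝ᵥ y = 0) : u ⨯₃ v = 0 :=
  cross_eq_zero_of_parallel _ u v h (cross_cross_eq_zero x y u hux huy)
    (cross_cross_eq_zero x y v hvx hvy)

theorem cramer_three (q₁ q₂ q₃ x : Fin 3 → ZMod p) :
    (q₃ ⬝ᵥ (q₁ ⨯₃ q₂)) • x = (x ⬝ᵥ (q₂ ⨯₃ q₃)) • q₁ + (x ⬝ᵥ (q₃ ⨯₃ q₁)) • q₂ +
      (x ⬝ᵥ (q₁ ⨯₃ q₂)) • q₃ := by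
  funext i
  simp only [cross_apply, vec3_dotProduct, Pi.add_apply, Pi.smul_apply, smul_eq_mul,
    Matrix.cons_val]
  fin_cases i <;> simp <;> ring

theorem exists_frame (q₁ q₂ : Fin 3 → ZMod p) (h : q₁ ⨯₃ q₂ ≠ 0) :
    ∃ (q₃ : Fin 3 → ZMod p) (a b c : (Fin 3 → ZMod p) → ZMod p),
      (∀ x, x = a x • q₁ + b x • q₂ + c x • q₃) ∧ ∀ s t : ZMod p, s • q₁ + t • q₂ + q₃ ≠ 0 := by
  obtain ⟨i, hi⟩ := Function.ne_iff.mp h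
  have hD : Pi.single i 1 ⬝ᵥ (q₁ ⨯₃ q₂) ≠ 0 := by simpa using hi
  refine ⟨Pi.single i 1, fun x => (Pi.single i 1 ⬝ᵥ (q₁ ⨯₃ q₂))⁻¹ * (x ⬝ᵥ (q₂ ⨯₃ Pi.single i 1)),
    fun x => (Pi.single i 1 ⬝ᵥ (q₁ ⨯₃ q₂))⁻¹ * (x ⬝ᵥ (Pi.single i 1 ⨯₃ q₁)),
    fun x => (Pi.single i 1 ⬝ᵥ (q₁ ⨯₃ q₂))⁻¹ * (x ⬝ᵥ (q₁ ⨯₃ q₂)), fun x => ?_, fun s t h0 => ?_⟩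
  · simp only [mul_smul]
    rw [← smul_add, ← smul_add, ← cramer_three, smul_smul, inv_mul_cancel₀ hD, one_smul]
  · apply hD
    have h1 := congrArg (fun w => w ⬝ᵥ (q₁ ⨯₃ q₂)) h0
    simp only [add_dotProduct, smul_dotProduct, dot_self_cross, dot_cross_self, smul_zero,
      zero_add, zero_dotProduct] at h1
    exact h1

end Plane

theorem card_sq_le_energy {α β : Type*} [DecidableEq β] (G : Finset α) (B : Finset β) (f : α → β)
    (h : ∀ x ∈ G, f x ∈ B) :
    G.card ^ 2 ≤ B.card * ((G ×ˢ G).filter fun z => f z.1 = f z.2).card := by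
  have h1 : G.card = ∑ b ∈ B, (G.filter fun x => f x = b).card :=
    Finset.card_eq_sum_card_fiberwise h
  have h2 : ((G ×ˢ G).filter fun z => f z.1 = f z.2).card =
      ∑ b ∈ B, (G.filter fun x => f x = b).card ^ 2 := by
    rw [Finset.card_eq_sum_card_fiberwise (f := fun z : α × α => f z.1) (t := B)]
    · refine Finset.sum_congr rfl fun b _ => ?_
      rw [sq, ← Finset.card_product]
      congr 1
      ext z
      simp only [Finset.mem_filter, Finset.mem_product]
      constructor
      · rintro ⟨⟨⟨a, b⟩, c⟩, d⟩
        exact ⟨⟨a, d⟩, b, c ▸ d⟩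
      · rintro ⟨⟨a, d⟩, b, e⟩
        exact ⟨⟨⟨a, b⟩, d.trans e.symm⟩, d⟩
    · intro z hz
      exact h _ (Finset.mem_product.mp (Finset.mem_filter.mp hz).1).1
  rw [h2, h1]
  exact sq_sum_le_card_mul_sum_sq

section Plane

open Matrix

variable {p : ℕ} [Fact p.Prime]

/-- The number of lines of `Λ` through the point `z`. -/
def deg (Λ : Finset (Fin 3 → ZMod p)) (z : Fin 3 → ZMod p) : ℕ :=
  (Λ.filter fun u => u ⬝ᵥ z = 0).card

/-- The lines of `Λ` through `z` share no other point, so each uses up `κ - 1` points of `Q`. -/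
theorem RichConfig.deg_mul_le {Q Λ : Finset (Fin 3 → ZMod p)} {κ : ℕ} (h : RichConfig Q Λ κ)
    {z : Fin 3 → ZMod p} (hz : z ≠ 0) : deg Λ z * (κ - 1) ≤ Q.card := by
  set D := Λ.filter fun u => u ⬝ᵥ z = 0 with hD
  set T : (Fin 3 → ZMod p) → Finset (Fin 3 → ZMod p) := fun u =>
    Q.filter fun x => u ⬝ᵥ x = 0 ∧ z ⨯₃ x ≠ 0 with hT
  have hdis : (D : Set (Fin 3 → ZMod p)).PairwiseDisjoint T := by
    intro u hu v hv huv
    rw [Function.onFun, Finset.disjoint_left]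
    intro x hx hx'
    obtain ⟨hu1, hu2⟩ := Finset.mem_filter.mp hu
    obtain ⟨hv1, hv2⟩ := Finset.mem_filter.mp hv
    obtain ⟨-, hx1, hx2⟩ := Finset.mem_filter.mp hx
    obtain ⟨-, hx1', -⟩ := Finset.mem_filter.mp hx'
    exact h.line_cross u hu1 v hv1 huv (cross_eq_zero_of_dot z x u v hx2 hu2 hx1 hv2 hx1')
  have hcard : ∀ u ∈ D, κ - 1 ≤ (T u).card := by
    intro u hu
    have hr := h.rich u (Finset.mem_filter.mp hu).1
    have hone : (Q.filter fun x => z ⨯₃ x = 0).card ≤ 1 := by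
      rw [Finset.card_le_one]
      intro x hx y hy
      obtain ⟨hx1, hx2⟩ := Finset.mem_filter.mp hx
      obtain ⟨hy1, hy2⟩ := Finset.mem_filter.mp hy
      by_contra hxy
      exact h.point_cross x hx1 y hy1 hxy (cross_eq_zero_of_parallel z x y hz hx2 hy2)
    have hsub : (Q.filter fun x => u ⬝ᵥ x = 0) ⊆ T u ∪ Q.filter fun x => z ⨯₃ x = 0 := by
      intro x hx
      obtain ⟨hx1, hx2⟩ := Finset.mem_filter.mp hx
      simp only [hT, Finset.mem_union, Finset.mem_filter]
      tauto
    have := (Finset.card_le_card hsub).trans (Finset.card_union_le _ _)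
    omega
  calc deg Λ z * (κ - 1) = ∑ u ∈ D, (κ - 1) := by rw [Finset.sum_const, smul_eq_mul]; rfl
    _ ≤ ∑ u ∈ D, (T u).card := Finset.sum_le_sum hcard
    _ = (D.biUnion T).card := (Finset.card_biUnion hdis).symm
    _ ≤ Q.card := Finset.card_le_card (Finset.biUnion_subset.mpr fun u _ =>
        Finset.filter_subset _ _)

theorem sum_deg (Q Λ : Finset (Fin 3 → ZMod p)) :
    ∑ x ∈ Q, deg Λ x = ∑ u ∈ Λ, (Q.filter fun x => u ⬝ᵥ x = 0).card := by
  simp only [deg, Finset.card_filter]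
  exact Finset.sum_comm

theorem RichConfig.mul_le_sum_deg {Q Λ : Finset (Fin 3 → ZMod p)} {κ : ℕ}
    (h : RichConfig Q Λ κ) : Λ.card * κ ≤ ∑ x ∈ Q, deg Λ x := by
  rw [sum_deg, ← smul_eq_mul]
  exact Finset.card_nsmul_le_sum _ _ _ h.rich

/-- The pairs of a point `x` and a line `u ∌ q₂` through it such that `x` is the intersection
of a line of `Λ` through `q₁` and a line of `Λ` through `q₂`. -/
def gridPairs (Q Λ : Finset (Fin 3 → ZMod p)) (q₁ q₂ : Fin 3 → ZMod p) :
    Finset ((Fin 3 → ZMod p) × (Fin 3 → ZMod p)) :=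
  (Q ×ˢ Λ).filter fun z => z.2 ⬝ᵥ z.1 = 0 ∧ z.2 ⬝ᵥ q₂ ≠ 0 ∧
    (∃ u₁ ∈ Λ, u₁ ⬝ᵥ z.1 = 0 ∧ u₁ ⬝ᵥ q₁ = 0 ∧ u₁ ⬝ᵥ q₂ ≠ 0) ∧
    ∃ u₂ ∈ Λ, u₂ ⬝ᵥ z.1 = 0 ∧ u₂ ⬝ᵥ q₂ = 0 ∧ u₂ ⬝ᵥ q₁ ≠ 0

/-- In affine coordinates with `q₁` and `q₂` at infinity, the pairs of `gridPairs` are incidences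
between lines `Y = m X + c` and a grid `A × B`; `card_sq_le_energy` and `energy_bound` apply. -/
theorem card_gridPairs_sq : ∃ C : ℝ, 0 < C ∧ ∀ (p : ℕ) [Fact p.Prime]
    (Q Λ : Finset (Fin 3 → ZMod p)) (κ k : ℕ) (M : ℝ) (q₁ q₂ : Fin 3 → ZMod p),
    RichConfig Q Λ κ → 1 ≤ k → (∀ z : Fin 3 → ZMod p, z ≠ 0 → deg Λ z ≤ k) → q₁ ⨯₃ q₂ ≠ 0 →
    1 ≤ M → (Λ.card * deg Λ q₂ : ℝ) ≤ M → M ≤ (p : ℝ) ^ 2 / 2 →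
    ((gridPairs Q Λ q₁ q₂).card : ℝ) ^ 2 ≤
      deg Λ q₁ * (C * (M ^ ((3 : ℝ) / 2) + k * M * M ^ ((1 : ℝ) / 16))) := by
  obtain ⟨C, hC, hE⟩ := energy_bound
  refine ⟨C, hC, ?_⟩
  intro p _ Q Λ κ k M q₁ q₂ h hk hdeg hq hM hnM hMp
  obtain ⟨q₃, a, b, c, habc, hq₃⟩ := exists_frame q₁ q₂ hq
  have hdot : ∀ u x : Fin 3 → ZMod p, u ⬝ᵥ x = a x * (u ⬝ᵥ q₁) + b x * (u ⬝ᵥ q₂) +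
      c x * (u ⬝ᵥ q₃) := by
    intro u x
    conv_lhs => rw [habc x]
    simp only [dotProduct_add, dotProduct_smul, smul_eq_mul]
  have hline : ∀ (u v : Fin 3 → ZMod p) (s : ZMod p), u ⬝ᵥ q₁ = s * (v ⬝ᵥ q₁) →
      u ⬝ᵥ q₂ = s * (v ⬝ᵥ q₂) → u ⬝ᵥ q₃ = s * (v ⬝ᵥ q₃) → u ⨯₃ v = 0 := by
    intro u v s h1 h2 h3
    have : u = s • v := by
      apply dotProduct_eq
      intro x
      rw [smul_dotProduct, hdot u x, hdot v x, h1, h2, h3, smul_eq_mul]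
      ring
    rw [this, LinearMap.map_smul₂, cross_self, smul_zero]
  have hq₁ : q₁ ≠ 0 := by rintro rfl; simp at hq
  have hq₂ : q₂ ≠ 0 := by rintro rfl; simp at hq
  set slope : (Fin 3 → ZMod p) → ZMod p × ZMod p := fun u =>
    (-(u ⬝ᵥ q₁) / (u ⬝ᵥ q₂), -(u ⬝ᵥ q₃) / (u ⬝ᵥ q₂)) with hslope
  have hinj : ∀ u ∈ Λ, ∀ v ∈ Λ, u ⬝ᵥ q₂ ≠ 0 → v ⬝ᵥ q₂ ≠ 0 → slope u = slope v → u = v := by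
    intro u hu v hv hu2 hv2 he
    by_contra hne
    simp only [hslope, Prod.mk.injEq] at he
    obtain ⟨e1, e2⟩ := he
    refine h.line_cross u hu v hv hne (hline u v (u ⬝ᵥ q₂ / v ⬝ᵥ q₂) ?_ ?_ ?_)
    · field_simp at e1 ⊢
      linear_combination -e1
    · field_simp
    · field_simp at e2 ⊢
      linear_combination -e2
  set Λ' := Λ.filter fun u => u ⬝ᵥ q₂ ≠ 0 with hΛ'
  set L := Λ'.image slope with hL
  set A := (Λ.filter fun u => u ⬝ᵥ q₂ = 0).image (fun u => -(u ⬝ᵥ q₃) / (u ⬝ᵥ q₁)) with hA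
  set B := (Λ.filter fun u => u ⬝ᵥ q₁ = 0).image (fun u => -(u ⬝ᵥ q₃) / (u ⬝ᵥ q₂)) with hB
  have hAc : A.card ≤ deg Λ q₂ := Finset.card_image_le
  have hBc : B.card ≤ deg Λ q₁ := Finset.card_image_le
  have hLc : L.card ≤ Λ.card := Finset.card_image_le.trans (Finset.card_filter_le _ _)
  have hcon : ∀ l m : ZMod p, (L.filter fun x => x.2 = l * x.1 + m).card ≤ k := by
    intro l m
    refine le_trans ?_ (hdeg _ (hq₃ (-l) m))
    rw [hL, Finset.filter_image]
    refine Finset.card_image_le.trans (Finset.card_le_card ?_)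
    intro u hu
    obtain ⟨hu1, hu2⟩ := Finset.mem_filter.mp hu
    obtain ⟨hu0, hu3⟩ := Finset.mem_filter.mp hu1
    refine Finset.mem_filter.mpr ⟨hu0, ?_⟩
    simp only [hslope] at hu2
    simp only [dotProduct_add, dotProduct_smul, smul_eq_mul]
    field_simp at hu2
    linear_combination -hu2
  have hen := hE p L A k M hk (hAc.trans (hdeg _ hq₂)) hcon hM
    (le_trans (mul_le_mul (Nat.cast_le.mpr hLc) (Nat.cast_le.mpr hAc) (Nat.cast_nonneg _)
      (Nat.cast_nonneg _)) hnM) hMp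
  set G := (L ×ˢ A).filter fun x => x.1.1 * x.2 + x.1.2 ∈ B with hG
  have hGsq := card_sq_le_energy G B (fun x => x.1.1 * x.2 + x.1.2)
    fun x hx => (Finset.mem_filter.mp hx).2
  -- the affine abscissa and ordinate of a point of the grid
  have hpt : ∀ z ∈ gridPairs Q Λ q₁ q₂, c z.1 ≠ 0 ∧ a z.1 / c z.1 ∈ A ∧ b z.1 / c z.1 ∈ B ∧
      (slope z.2).1 * (a z.1 / c z.1) + (slope z.2).2 = b z.1 / c z.1 := by
    rintro ⟨x, u⟩ hz
    obtain ⟨hm, h0, h2, ⟨u₁, hu₁, h11, h12, h13⟩, u₂, hu₂, h21, h22, h23⟩ := Finset.mem_filter.mp hz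
    simp only at h0 h2 h11 h21
    rw [hdot] at h11 h21 h0
    have hc : c x ≠ 0 := by
      intro hc
      have hb : b x = 0 := by
        rw [h12, hc] at h11
        simpa [h13] using h11
      have ha : a x = 0 := by
        rw [h22, hc] at h21
        simpa [h23] using h21
      apply h.point_ne x (Finset.mem_product.mp hm).1
      rw [habc x, ha, hb, hc]
      simp
    refine ⟨hc, Finset.mem_image.mpr ⟨u₂, Finset.mem_filter.mpr ⟨hu₂, h22⟩, ?_⟩,
      Finset.mem_image.mpr ⟨u₁, Finset.mem_filter.mpr ⟨hu₁, h12⟩, ?_⟩, ?_⟩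
    · simp only
      rw [h22] at h21
      field_simp
      linear_combination -h21
    · simp only
      rw [h12] at h11
      field_simp
      linear_combination -h11
    · simp only [hslope]
      field_simp
      linear_combination -h0
  have hSG : (gridPairs Q Λ q₁ q₂).card ≤ G.card := by
    refine Finset.card_le_card_of_injOn (fun z => (slope z.2, a z.1 / c z.1)) ?_ ?_
    · intro z hz
      obtain ⟨hc, hzA, hzB, he⟩ := hpt z hz
      obtain ⟨hm, -, h2, -⟩ := Finset.mem_filter.mp hz
      refine Finset.mem_coe.mpr (Finset.mem_filter.mpr ⟨Finset.mem_product.mpr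
        ⟨Finset.mem_image_of_mem _ (Finset.mem_filter.mpr ⟨(Finset.mem_product.mp hm).2, h2⟩),
          hzA⟩, ?_⟩)
      simp only [he]
      exact hzB
    · rintro ⟨x, u⟩ hz ⟨y, v⟩ hw he
      obtain ⟨hcx, -, -, hex⟩ := hpt _ hz
      obtain ⟨hcy, -, -, hey⟩ := hpt _ hw
      obtain ⟨hm, -, h2, -⟩ := Finset.mem_filter.mp hz
      obtain ⟨hm', -, h2', -⟩ := Finset.mem_filter.mp hw
      obtain ⟨hx, hu⟩ := Finset.mem_product.mp hm
      obtain ⟨hy, hv⟩ := Finset.mem_product.mp hm'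
      simp only [Prod.mk.injEq] at he hcx hcy hex hey hx hy hu hv h2 h2'
      obtain ⟨e1, e2⟩ := he
      have huv := hinj u hu v hv h2 h2' e1
      have hb : b x / c x = b y / c y := by rw [← hex, ← hey, e1, e2]
      have hxy : x = y := by
        by_contra hne
        apply h.point_cross x hx y hy hne
        have gen : ∀ ax bx cx ay by' cy : ZMod p, cx ≠ 0 → cy ≠ 0 → ax / cx = ay / cy →
            bx / cx = by' / cy → x = ax • q₁ + bx • q₂ + cx • q₃ →
            y = ay • q₁ + by' • q₂ + cy • q₃ → x = (cx / cy) • y := by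
          intro ax bx cx ay by' cy hcx hcy ha hb hx hy
          rw [hx, hy, smul_add, smul_add, smul_smul, smul_smul, smul_smul,
            div_mul_eq_mul_div, mul_div_assoc, ← ha, div_mul_eq_mul_div, mul_div_assoc, ← hb,
            div_mul_cancel₀ _ hcy, mul_div_cancel₀ _ hcx, mul_div_cancel₀ _ hcx]
        have := gen _ _ _ _ _ _ hcx hcy e2 hb (habc x) (habc y)
        rw [this, LinearMap.map_smul₂, cross_self, smul_zero]
      rw [huv, hxy]
  have hfin : (gridPairs Q Λ q₁ q₂).card ^ 2 ≤ deg Λ q₁ *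
      (((L ×ˢ A) ×ˢ (L ×ˢ A)).filter fun z =>
        z.1.1.1 * z.1.2 + z.1.1.2 = z.2.1.1 * z.2.2 + z.2.1.2).card := by
    refine (Nat.pow_le_pow_left hSG 2).trans (hGsq.trans (Nat.mul_le_mul hBc ?_))
    apply Finset.card_le_card
    intro z hz
    rw [Finset.mem_filter] at hz ⊢
    obtain ⟨hz1, hz2⟩ := hz
    exact ⟨Finset.product_subset_product (Finset.filter_subset _ _)
      (Finset.filter_subset _ _) hz1, hz2⟩
  have hfin' : ((gridPairs Q Λ q₁ q₂).card : ℝ) ^ 2 ≤ deg Λ q₁ *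
      ((((L ×ˢ A) ×ˢ (L ×ˢ A)).filter fun z =>
        z.1.1.1 * z.1.2 + z.1.1.2 = z.2.1.1 * z.2.2 + z.2.1.2).card : ℝ) := by
    rw [← Nat.cast_pow, ← Nat.cast_mul]
    exact Nat.cast_le.mpr hfin
  exact hfin'.trans (mul_le_mul_of_nonneg_left hen (Nat.cast_nonneg _))

end Plane

section Plane

open Matrix

variable {p : ℕ} [Fact p.Prime]

theorem RichConfig.eq_of_dot {Q Λ : Finset (Fin 3 → ZMod p)} {κ : ℕ} (h : RichConfig Q Λ κ)
    {x y u v : Fin 3 → ZMod p} (hx : x ∈ Q) (hy : y ∈ Q) (hxy : x ≠ y) (hu : u ∈ Λ) (hv : v ∈ Λ)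
    (hux : u ⬝ᵥ x = 0) (huy : u ⬝ᵥ y = 0) (hvx : v ⬝ᵥ x = 0) (hvy : v ⬝ᵥ y = 0) : u = v := by
  by_contra hne
  exact h.line_cross u hu v hv hne
    (cross_eq_zero_of_dot x y u v (h.point_cross x hx y hy hxy) hux huy hvx hvy)

/-- Two further lines `u₁ ≠ u₂` of `Λ` through `x`, and points `q₁ ∈ u₁`, `q₂ ∈ u₂` other than
`x`, put the incidence `(x, u)` in `gridPairs Q Λ q₁ q₂`. -/
theorem RichConfig.star_count {Q Λ : Finset (Fin 3 → ZMod p)} {κ : ℕ} (h : RichConfig Q Λ κ)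
    {x u : Fin 3 → ZMod p} (hx : x ∈ Q) (hu : u ∈ Λ) (hux : u ⬝ᵥ x = 0) :
    ((deg Λ x - 1) * (deg Λ x - 1) - (deg Λ x - 1)) * ((κ - 1) * (κ - 1)) ≤
      (Q.offDiag.filter fun q => (x, u) ∈ gridPairs Q Λ q.1 q.2).card := by
  set D := (Λ.filter fun v => v ⬝ᵥ x = 0).erase u with hD
  have hDmem : ∀ v ∈ D, v ≠ u ∧ v ∈ Λ ∧ v ⬝ᵥ x = 0 := by
    intro v hv
    obtain ⟨h1, h2⟩ := Finset.mem_erase.mp hv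
    exact ⟨h1, Finset.mem_filter.mp h2⟩
  have hDc : D.card = deg Λ x - 1 :=
    Finset.card_erase_of_mem (Finset.mem_filter.mpr ⟨hu, hux⟩)
  set T : (Fin 3 → ZMod p) → Finset (Fin 3 → ZMod p) := fun v =>
    (Q.filter fun q => v ⬝ᵥ q = 0).erase x with hT
  have hTmem : ∀ v q, q ∈ T v → q ≠ x ∧ q ∈ Q ∧ v ⬝ᵥ q = 0 := by
    intro v q hq
    obtain ⟨h1, h2⟩ := Finset.mem_erase.mp hq
    exact ⟨h1, Finset.mem_filter.mp h2⟩
  have hTc : ∀ v ∈ D, κ - 1 ≤ (T v).card := by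
    intro v hv
    have h1 := h.rich v (hDmem v hv).2.1
    have h2 := Finset.pred_card_le_card_erase (s := Q.filter fun q => v ⬝ᵥ q = 0) (a := x)
    simp only [hT]
    omega
  have hne : ∀ v w q, v ∈ Λ → w ∈ Λ → v ⬝ᵥ x = 0 → w ⬝ᵥ x = 0 → v ≠ w → q ∈ T w → v ⬝ᵥ q ≠ 0 := by
    intro v w q hv hw hvx hwx hvw hq h0
    obtain ⟨h1, h2, h3⟩ := hTmem w q hq
    exact hvw (h.eq_of_dot h2 hx h1 hv hw h0 hvx h3 hwx)
  have hdis : (D.offDiag : Set ((Fin 3 → ZMod p) × (Fin 3 → ZMod p))).PairwiseDisjoint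
      fun v => T v.1 ×ˢ T v.2 := by
    intro v hv w hw hvw
    rw [Function.onFun, Finset.disjoint_left]
    intro q hq hq'
    obtain ⟨q1, q2⟩ := Finset.mem_product.mp hq
    obtain ⟨q1', q2'⟩ := Finset.mem_product.mp hq'
    obtain ⟨v1, v2, -⟩ := Finset.mem_offDiag.mp hv
    obtain ⟨w1, w2, -⟩ := Finset.mem_offDiag.mp hw
    have aux : ∀ v w q, v ∈ D → w ∈ D → q ∈ T v → q ∈ T w → v = w := by
      intro v w q hv hw hqv hqw
      by_contra hvw
      exact hne v w q (hDmem v hv).2.1 (hDmem w hw).2.1 (hDmem v hv).2.2 (hDmem w hw).2.2 hvw hqw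
        (hTmem v q hqv).2.2
    exact hvw (Prod.ext (aux _ _ _ v1 w1 q1 q1') (aux _ _ _ v2 w2 q2 q2'))
  calc ((deg Λ x - 1) * (deg Λ x - 1) - (deg Λ x - 1)) * ((κ - 1) * (κ - 1))
      = ∑ v ∈ D.offDiag, (κ - 1) * (κ - 1) := by
        rw [Finset.sum_const, Finset.offDiag_card, hDc, smul_eq_mul]
    _ ≤ ∑ v ∈ D.offDiag, (T v.1 ×ˢ T v.2).card := by
        refine Finset.sum_le_sum fun v hv => ?_
        obtain ⟨v1, v2, -⟩ := Finset.mem_offDiag.mp hv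
        rw [Finset.card_product]
        exact Nat.mul_le_mul (hTc _ v1) (hTc _ v2)
    _ = (D.offDiag.biUnion fun v => T v.1 ×ˢ T v.2).card := (Finset.card_biUnion hdis).symm
    _ ≤ _ := by
        refine Finset.card_le_card (Finset.biUnion_subset.mpr fun v hv q hq => ?_)
        obtain ⟨v1, v2, v12⟩ := Finset.mem_offDiag.mp hv
        obtain ⟨q1, q2⟩ := Finset.mem_product.mp hq
        obtain ⟨a1, a2, a3⟩ := hDmem _ v1
        obtain ⟨b1, b2, b3⟩ := hDmem _ v2
        obtain ⟨c1, c2, c3⟩ := hTmem _ _ q1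
        obtain ⟨d1, d2, d3⟩ := hTmem _ _ q2
        have e1 := hne _ _ _ a2 b2 a3 b3 v12 q2
        refine Finset.mem_filter.mpr ⟨Finset.mem_offDiag.mpr ⟨c2, d2, ?_⟩,
          Finset.mem_filter.mpr ⟨Finset.mem_product.mpr ⟨hx, hu⟩, hux,
            hne _ _ _ hu b2 hux b3 b1.symm q2, ⟨v.1, a2, a3, c3, e1⟩,
            v.2, b2, b3, d3, hne _ _ _ b2 a2 b3 a3 v12.symm q1⟩⟩
        intro he
        rw [← he] at e1
        exact e1 c3

theorem RichConfig.sum_gridPairs {Q Λ : Finset (Fin 3 → ZMod p)} {κ : ℕ} (h : RichConfig Q Λ κ) :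
    (∑ x ∈ Q, deg Λ x * ((deg Λ x - 1) * (deg Λ x - 1) - (deg Λ x - 1))) * ((κ - 1) * (κ - 1)) ≤
      ∑ q ∈ Q.offDiag, (gridPairs Q Λ q.1 q.2).card := by
  have h1 : ∑ q ∈ Q.offDiag, (gridPairs Q Λ q.1 q.2).card =
      ∑ z ∈ Q ×ˢ Λ, (Q.offDiag.filter fun q => z ∈ gridPairs Q Λ q.1 q.2).card := by
    simp only [Finset.card_filter]
    rw [Finset.sum_comm]
    refine Finset.sum_congr rfl fun q _ => ?_
    rw [← Finset.sum_filter, ← Finset.card_eq_sum_ones]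
    congr 1
    ext z
    simp only [Finset.mem_filter]
    constructor
    · intro hz
      exact ⟨(Finset.mem_filter.mp hz).1, hz⟩
    · exact fun hz => hz.2
  rw [h1, Finset.sum_product, Finset.sum_mul]
  refine Finset.sum_le_sum fun x hx => ?_
  calc _ = ∑ u ∈ Λ.filter (fun u => u ⬝ᵥ x = 0),
        ((deg Λ x - 1) * (deg Λ x - 1) - (deg Λ x - 1)) * ((κ - 1) * (κ - 1)) := by
        rw [Finset.sum_const, smul_eq_mul, mul_assoc]
        rfl
    _ ≤ ∑ u ∈ Λ.filter (fun u => u ⬝ᵥ x = 0),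
        (Q.offDiag.filter fun q => (x, u) ∈ gridPairs Q Λ q.1 q.2).card := by
        refine Finset.sum_le_sum fun u hu => ?_
        obtain ⟨h2, h3⟩ := Finset.mem_filter.mp hu
        exact h.star_count hx h2 h3
    _ ≤ _ := Finset.sum_le_sum_of_subset (Finset.filter_subset _ _)

/-- Cauchy–Schwarz: two lines share at most one point. -/
theorem RichConfig.sum_deg_sq {Q Λ : Finset (Fin 3 → ZMod p)} {κ : ℕ} (h : RichConfig Q Λ κ) :
    (∑ x ∈ Q, deg Λ x) ^ 2 ≤ Q.card * (∑ x ∈ Q, deg Λ x + Λ.card ^ 2) := by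
  refine sq_sum_le_card_mul_sum_sq.trans (Nat.mul_le_mul_left _ ?_)
  have h1 : ∀ x, deg Λ x ^ 2 = deg Λ x + (Λ.offDiag.filter fun v => v.1 ⬝ᵥ x = 0 ∧
      v.2 ⬝ᵥ x = 0).card := by
    intro x
    have h2 : (Λ.offDiag.filter fun v => v.1 ⬝ᵥ x = 0 ∧ v.2 ⬝ᵥ x = 0) =
        (Λ.filter fun v => v ⬝ᵥ x = 0).offDiag := by
      ext v
      simp only [Finset.mem_filter, Finset.mem_offDiag]
      tauto
    rw [h2, Finset.offDiag_card]
    have : deg Λ x ≤ deg Λ x * deg Λ x := Nat.le_mul_self _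
    unfold deg at this ⊢
    rw [sq]
    omega
  simp only [h1]
  rw [Finset.sum_add_distrib]
  refine Nat.add_le_add_left ?_ _
  simp only [Finset.card_filter]
  rw [Finset.sum_comm]
  calc _ ≤ ∑ v ∈ Λ.offDiag, 1 := by
        refine Finset.sum_le_sum fun v hv => ?_
        rw [← Finset.card_filter, Finset.card_le_one]
        obtain ⟨v1, v2, v12⟩ := Finset.mem_offDiag.mp hv
        intro x hx y hy
        obtain ⟨x1, x2, x3⟩ := Finset.mem_filter.mp hx
        obtain ⟨y1, y2, y3⟩ := Finset.mem_filter.mp hy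
        by_contra hxy
        exact v12 (h.eq_of_dot x1 y1 hxy v1 v2 x2 y2 x3 y3)
    _ ≤ Λ.card ^ 2 := by
        rw [← Finset.card_eq_sum_ones, Finset.offDiag_card, sq]
        omega

end Plane

/-! ### Rich lines in the projective plane -/

/-- The last step of the incidence bound, with `N = x ^ 48`, `W = w ^ 4`, `n = y ^ 4`,
`κ = z ^ 4` and `√k = s`. -/
theorem rich_lines_arith (C x y z w s : ℝ) (hC : 0 < C) (hx : 0 < x) (hy : 0 < y) (hz : 0 < z)
    (hyz : y * z ≤ w) (hs : s * z ^ 2 ≤ 2 * x ^ 24) (hκ : z ^ 8 ≤ 2 * x ^ 48)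
    (h : z ^ 8 * w ^ 12 ≤ C * x ^ 96 * (x ^ 36 * w ^ 5 * y ^ 3 + s * y ^ 2 * x ^ 3 * x ^ 48 * w ^ 4)) :
    y ^ 4 * z ^ 15 ≤ (8 * C + 2) * x ^ 132 := by
  have hw : 0 < w := lt_of_lt_of_le (by positivity) hyz
  rcases le_total (s * y ^ 2 * x ^ 3 * x ^ 48 * w ^ 4) (x ^ 36 * w ^ 5 * y ^ 3) with h1 | h1
  · have h2 : z ^ 8 * w ^ 7 * w ^ 5 ≤ 2 * C * x ^ 132 * y ^ 3 * w ^ 5 := by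
      calc z ^ 8 * w ^ 7 * w ^ 5 = z ^ 8 * w ^ 12 := by ring
        _ ≤ C * x ^ 96 * (x ^ 36 * w ^ 5 * y ^ 3 + x ^ 36 * w ^ 5 * y ^ 3) := by
          refine h.trans ?_
          gcongr
        _ = _ := by ring
    have h3 := le_of_mul_le_mul_right h2 (by positivity)
    have h4 : y ^ 4 * z ^ 15 * y ^ 3 ≤ 2 * C * x ^ 132 * y ^ 3 := by
      calc y ^ 4 * z ^ 15 * y ^ 3 = z ^ 8 * (y * z) ^ 7 := by ring
        _ ≤ z ^ 8 * w ^ 7 := by gcongr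
        _ ≤ _ := h3
    have h5 := le_of_mul_le_mul_right h4 (by positivity)
    refine h5.trans ?_
    gcongr
    linarith
  · have h2 : z ^ 10 * w ^ 8 * w ^ 4 ≤ 4 * C * x ^ 171 * y ^ 2 * w ^ 4 := by
      calc z ^ 10 * w ^ 8 * w ^ 4 = z ^ 8 * w ^ 12 * z ^ 2 := by ring
        _ ≤ C * x ^ 96 * (s * y ^ 2 * x ^ 3 * x ^ 48 * w ^ 4 + s * y ^ 2 * x ^ 3 * x ^ 48 * w ^ 4) *
            z ^ 2 := by
          refine mul_le_mul_of_nonneg_right (h.trans ?_) (by positivity)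
          gcongr
        _ = 2 * C * x ^ 147 * y ^ 2 * w ^ 4 * (s * z ^ 2) := by ring
        _ ≤ 2 * C * x ^ 147 * y ^ 2 * w ^ 4 * (2 * x ^ 24) := by gcongr
        _ = _ := by ring
    have h3 := le_of_mul_le_mul_right h2 (by positivity)
    have h4 : y ^ 6 * z ^ 18 * y ^ 2 ≤ 4 * C * x ^ 171 * y ^ 2 := by
      calc y ^ 6 * z ^ 18 * y ^ 2 = z ^ 10 * (y * z) ^ 8 := by ring
        _ ≤ z ^ 10 * w ^ 8 := by gcongr
        _ ≤ _ := h3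
    have h5 := le_of_mul_le_mul_right h4 (by positivity)
    have h6 : y ^ 4 * z ^ 12 ≤ (4 * C + 1) * x ^ 114 := by
      refine le_of_pow_le_pow_left₀ (n := 3) (by norm_num) (by positivity) ?_
      calc (y ^ 4 * z ^ 12) ^ 3 = (y ^ 6 * z ^ 18) ^ 2 := by ring
        _ ≤ (4 * C * x ^ 171) ^ 2 := by gcongr
        _ = (4 * C) ^ 2 * (x ^ 114) ^ 3 := by ring
        _ ≤ (4 * C + 1) ^ 3 * (x ^ 114) ^ 3 := by
          gcongr
          nlinarith [sq_nonneg C, pow_pos hC 3]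
        _ = _ := by ring
    have h7 : z ^ 3 ≤ 2 * x ^ 18 := by
      refine le_of_pow_le_pow_left₀ (n := 8) (by norm_num) (by positivity) ?_
      calc (z ^ 3) ^ 8 = (z ^ 8) ^ 3 := by ring
        _ ≤ (2 * x ^ 48) ^ 3 := by gcongr
        _ = 8 * (x ^ 18) ^ 8 := by ring
        _ ≤ 256 * (x ^ 18) ^ 8 := by gcongr; norm_num
        _ = _ := by ring
    calc y ^ 4 * z ^ 15 = y ^ 4 * z ^ 12 * z ^ 3 := by ring
      _ ≤ (4 * C + 1) * x ^ 114 * (2 * x ^ 18) := by gcongr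
      _ = _ := by ring

theorem root_pow {a : ℝ} (ha : 0 ≤ a) {n : ℕ} (hn : n ≠ 0) (m : ℕ) (r : ℝ) (hr : r = m / n) :
    (a ^ ((1 : ℝ) / n)) ^ m = a ^ r := by
  rw [← Real.rpow_natCast, ← Real.rpow_mul ha, hr]
  congr 1
  field_simp

theorem sum_sqrt_le {α : Type*} (Q : Finset α) (d : α → ℕ) :
    ∑ x ∈ Q, √(d x : ℝ) ≤ √(Q.card * ∑ x ∈ Q, (d x : ℝ)) := by
  apply Real.le_sqrt_of_sq_le
  refine sq_sum_le_card_mul_sum_sq.trans (le_of_eq ?_)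
  congr 1
  exact Finset.sum_congr rfl fun x _ => Real.sq_sqrt (Nat.cast_nonneg _)

theorem sum_rpow_le {α : Type*} (Q : Finset α) (d : α → ℕ) :
    ∑ x ∈ Q, (d x : ℝ) ^ ((3 : ℝ) / 4) ≤
      (Q.card : ℝ) ^ ((1 : ℝ) / 4) * (∑ x ∈ Q, (d x : ℝ)) ^ ((3 : ℝ) / 4) := by
  have h := Real.inner_le_Lp_mul_Lq Q (fun x => (d x : ℝ) ^ ((3 : ℝ) / 4)) (fun _ => (1 : ℝ))
    (p := 4 / 3) (q := 4) (by constructor <;> norm_num)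
  simp only [mul_one, abs_one, Real.one_rpow, Finset.sum_const, nsmul_eq_mul] at h
  rw [mul_comm]
  convert h using 3
  · norm_num
    refine Finset.sum_congr rfl fun x _ => ?_
    rw [abs_of_nonneg (by positivity), ← Real.rpow_mul (by positivity)]
    norm_num
  · norm_num

/-- The third moment of the degrees is controlled by the number of triples of distinct lines
through a common point once the average degree is at least `6`. -/
theorem sum_triple_ge {α : Type*} (Q : Finset α) (d : α → ℕ) (hQ : 0 < Q.card)
    (h : 6 * (Q.card : ℝ) ≤ ∑ x ∈ Q, (d x : ℝ)) :
    (∑ x ∈ Q, (d x : ℝ)) ^ 3 ≤ 9 * (Q.card : ℝ) ^ 2 *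
      ((∑ x ∈ Q, d x * ((d x - 1) * (d x - 1) - (d x - 1)) : ℕ) : ℝ) := by
  set W := ∑ x ∈ Q, (d x : ℝ) with hW
  have hN : (0 : ℝ) < Q.card := by exact_mod_cast hQ
  have h1 : W ^ 3 ≤ (Q.card : ℝ) ^ 2 * ∑ x ∈ Q, (d x : ℝ) ^ 3 := by
    have := pow_sum_div_card_le_sum_pow (s := Q) (f := fun x => (d x : ℝ))
      (fun _ _ => Nat.cast_nonneg _) 2
    rw [div_le_iff₀ (by positivity), mul_comm] at this
    exact this
  have h2 : ∀ m : ℕ, 2 * m ^ 3 ≤ 9 * (m * ((m - 1) * (m - 1) - (m - 1))) + 8 * m := by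
    intro m
    rcases m with _ | _ | _ | m
    · simp
    · simp
    · simp
    · have : (m + 1 + 1 + 1 - 1) * (m + 1 + 1 + 1 - 1) - (m + 1 + 1 + 1 - 1) = (m + 2) * (m + 1) := by
        rw [Nat.add_sub_cancel, Nat.sub_eq_iff_eq_add (Nat.le_mul_self _)]
        ring
      rw [this]
      nlinarith [Nat.zero_le m, Nat.zero_le (m ^ 2), Nat.zero_le (m ^ 3)]
  have h3 : 2 * ∑ x ∈ Q, (d x : ℝ) ^ 3 ≤
      9 * ((∑ x ∈ Q, d x * ((d x - 1) * (d x - 1) - (d x - 1)) : ℕ) : ℝ) + 8 * W := by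
    rw [hW, ← Nat.cast_sum]
    have : 2 * ∑ x ∈ Q, d x ^ 3 ≤ 9 * (∑ x ∈ Q, d x * ((d x - 1) * (d x - 1) - (d x - 1))) +
        8 * ∑ x ∈ Q, d x := by
      rw [Finset.mul_sum, Finset.mul_sum, Finset.mul_sum, ← Finset.sum_add_distrib]
      exact Finset.sum_le_sum fun x _ => h2 _
    exact_mod_cast this
  have h4 : 36 * (Q.card : ℝ) ^ 2 * W ≤ W ^ 3 := by
    have hW0 : 0 ≤ W := by linarith
    have : (6 * (Q.card : ℝ)) ^ 2 ≤ W ^ 2 := by gcongr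
    nlinarith
  nlinarith [mul_le_mul_of_nonneg_left h3 (sq_nonneg (Q.card : ℝ))]

section Plane

open Matrix

theorem gridPairs_empty {p : ℕ} [Fact p.Prime] (Q Λ : Finset (Fin 3 → ZMod p))
    (q₁ q₂ : Fin 3 → ZMod p) (h : deg Λ q₂ = 0) : (gridPairs Q Λ q₁ q₂).card = 0 := by
  rw [Finset.card_eq_zero, Finset.eq_empty_iff_forall_notMem]
  intro z hz
  obtain ⟨-, -, -, -, u₂, hu₂, -, h22, -⟩ := Finset.mem_filter.mp hz
  exact Finset.eq_empty_iff_forall_notMem.mp (Finset.card_eq_zero.mp h) u₂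
    (Finset.mem_filter.mpr ⟨hu₂, h22⟩)

/-- The square root of `card_gridPairs_sq`, summed over all pairs of points. -/
theorem sum_gridPairs_le : ∃ C : ℝ, 0 < C ∧ ∀ (p : ℕ) [Fact p.Prime]
    (Q Λ : Finset (Fin 3 → ZMod p)) (κ k : ℕ),
    RichConfig Q Λ κ → 1 ≤ k → 1 ≤ Λ.card → (∀ z : Fin 3 → ZMod p, z ≠ 0 → deg Λ z ≤ k) →
    (Λ.card * k : ℝ) ≤ (p : ℝ) ^ 2 / 2 → (Λ.card * k : ℝ) ≤ (Q.card : ℝ) ^ 2 →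
    ((∑ q ∈ Q.offDiag, (gridPairs Q Λ q.1 q.2).card : ℕ) : ℝ) ≤
      C * ((Λ.card : ℝ) ^ ((3 : ℝ) / 4) * ((∑ x ∈ Q, √(deg Λ x : ℝ)) *
        ∑ x ∈ Q, (deg Λ x : ℝ) ^ ((3 : ℝ) / 4)) +
        √k * √(Λ.card : ℝ) * (Q.card : ℝ) ^ ((1 : ℝ) / 16) *
          ((∑ x ∈ Q, √(deg Λ x : ℝ)) * ∑ x ∈ Q, √(deg Λ x : ℝ))) := by
  obtain ⟨C, hC, hJ⟩ := card_gridPairs_sq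
  refine ⟨√C, Real.sqrt_pos.mpr hC, ?_⟩
  intro p _ Q Λ κ k h hk hn hdeg hp hN
  set n : ℝ := (Λ.card : ℝ) with hndef
  have hn0 : 0 ≤ n := Nat.cast_nonneg _
  have hn1 : 1 ≤ n := Nat.one_le_cast.mpr hn
  set N : ℝ := (Q.card : ℝ) with hNdef
  have hN0 : 0 ≤ N := Nat.cast_nonneg _
  have hk0 : (0 : ℝ) ≤ k := Nat.cast_nonneg _
  have key : ∀ q ∈ Q.offDiag, ((gridPairs Q Λ q.1 q.2).card : ℝ) ≤ √C * (√(deg Λ q.1 : ℝ) *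
      ((n * deg Λ q.2) ^ ((3 : ℝ) / 4) + √k * √(n * deg Λ q.2) * N ^ ((1 : ℝ) / 16))) := by
    rintro ⟨q₁, q₂⟩ hq
    obtain ⟨h1, h2, h12⟩ := Finset.mem_offDiag.mp hq
    simp only at h1 h2 h12 ⊢
    rcases Nat.eq_zero_or_pos (deg Λ q₂) with h0 | h0
    · rw [gridPairs_empty Q Λ q₁ q₂ h0]
      simp only [Nat.cast_zero]
      positivity
    set M : ℝ := n * deg Λ q₂ with hM
    have hd1 : (1 : ℝ) ≤ deg Λ q₂ := by exact_mod_cast h0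
    have hM1 : 1 ≤ M := by nlinarith
    have hM0 : 0 ≤ M := by linarith
    have hMk : M ≤ n * k := by
      have : (deg Λ q₂ : ℝ) ≤ k := by exact_mod_cast hdeg q₂ (h.point_ne _ h2)
      rw [hM]
      gcongr
    have hsq := hJ p Q Λ κ k M q₁ q₂ h hk hdeg (h.point_cross _ h1 _ h2 h12) hM1 le_rfl
      (hMk.trans hp)
    have hM16 : M ^ ((1 : ℝ) / 16) ≤ (N ^ ((1 : ℝ) / 16)) ^ 2 := by
      calc M ^ ((1 : ℝ) / 16) ≤ (N ^ 2) ^ ((1 : ℝ) / 16) :=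
            Real.rpow_le_rpow hM0 (hMk.trans hN) (by norm_num)
        _ = (N ^ ((1 : ℝ) / 16)) ^ 2 := by
            rw [← Real.rpow_natCast, ← Real.rpow_natCast, ← Real.rpow_mul hN0,
              ← Real.rpow_mul hN0]
            norm_num
    have hM32 : M ^ ((3 : ℝ) / 2) = (M ^ ((3 : ℝ) / 4)) ^ 2 := by
      rw [← Real.rpow_natCast, ← Real.rpow_mul hM0]
      norm_num
    refine le_of_pow_le_pow_left₀ (n := 2) (by norm_num) (by positivity) (hsq.trans ?_)
    rw [mul_pow, mul_pow, Real.sq_sqrt hC.le, Real.sq_sqrt (Nat.cast_nonneg _), hM32]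
    have e1 : (k : ℝ) * M = (√k * √M) ^ 2 := by
      rw [mul_pow, Real.sq_sqrt hk0, Real.sq_sqrt hM0]
    have e2 : (M ^ ((3 : ℝ) / 4)) ^ 2 + k * M * M ^ ((1 : ℝ) / 16) ≤
        (M ^ ((3 : ℝ) / 4) + √k * √M * N ^ ((1 : ℝ) / 16)) ^ 2 := by
      calc _ ≤ (M ^ ((3 : ℝ) / 4)) ^ 2 + k * M * (N ^ ((1 : ℝ) / 16)) ^ 2 := by gcongr
        _ = (M ^ ((3 : ℝ) / 4)) ^ 2 + (√k * √M * N ^ ((1 : ℝ) / 16)) ^ 2 := by rw [e1]; ring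
        _ ≤ _ := by
          have : 0 ≤ M ^ ((3 : ℝ) / 4) * (√k * √M * N ^ ((1 : ℝ) / 16)) := by positivity
          nlinarith
    calc _ = C * (deg Λ q₁ * ((M ^ ((3 : ℝ) / 4)) ^ 2 + k * M * M ^ ((1 : ℝ) / 16))) := by ring
      _ ≤ _ := by gcongr
  rw [Nat.cast_sum]
  refine (Finset.sum_le_sum key).trans ?_
  have hsub : Q.offDiag ⊆ Q ×ˢ Q := by
    intro q hq
    obtain ⟨h1, h2, -⟩ := Finset.mem_offDiag.mp hq
    exact Finset.mem_product.mpr ⟨h1, h2⟩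
  refine (Finset.sum_le_sum_of_subset_of_nonneg hsub fun _ _ _ => by positivity).trans ?_
  rw [← Finset.mul_sum]
  refine mul_le_mul_of_nonneg_left (le_of_eq ?_) (Real.sqrt_nonneg _)
  rw [Finset.sum_mul_sum, Finset.sum_mul_sum, Finset.mul_sum, Finset.mul_sum,
    ← Finset.sum_add_distrib, Finset.sum_product]
  refine Finset.sum_congr rfl fun x _ => ?_
  rw [Finset.mul_sum, Finset.mul_sum, ← Finset.sum_add_distrib]
  refine Finset.sum_congr rfl fun y _ => ?_
  simp only
  rw [Real.mul_rpow hn0 (Nat.cast_nonneg _), Real.sqrt_mul hn0]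
  ring

end Plane

set_option maxHeartbeats 2000000 in
/-- A Szemerédi–Trotter type bound for the number of `κ`-rich lines in the projective plane. -/
theorem rich_lines : ∃ C : ℝ, 0 < C ∧ ∀ (p : ℕ) [Fact p.Prime]
    (Q Λ : Finset (Fin 3 → ZMod p)) (κ : ℕ), RichConfig Q Λ κ → 2 ≤ κ →
    (Q.card : ℝ) ≤ (p : ℝ) ^ ((15 : ℝ) / 13) →
    (Λ.card : ℝ) ≤ C * ((Q.card : ℝ) ^ ((11 : ℝ) / 4) / (κ : ℝ) ^ ((15 : ℝ) / 4) +
      (Q.card : ℝ) / κ) := by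
  obtain ⟨C, hC, hJ⟩ := sum_gridPairs_le
  refine ⟨8 * (36 * C) + 8, by positivity, ?_⟩
  intro p _ Q Λ κ h hκ hp
  set N : ℝ := (Q.card : ℝ) with hN
  set n : ℝ := (Λ.card : ℝ) with hn
  set κ' : ℝ := (κ : ℝ) with hκ'
  have hκ2 : (2 : ℝ) ≤ κ' := Nat.ofNat_le_cast.mpr hκ
  have hκ0 : 0 < κ' := by linarith
  have hN0 : 0 ≤ N := Nat.cast_nonneg _
  have hrhs1 : 0 ≤ N ^ ((11 : ℝ) / 4) / κ' ^ ((15 : ℝ) / 4) := by positivity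
  have hrhs2 : 0 ≤ N / κ' := by positivity
  rcases Nat.eq_zero_or_pos Λ.card with hn0 | hn0
  · rw [hn, hn0, Nat.cast_zero]
    positivity
  have hn1 : 1 ≤ n := Nat.one_le_cast.mpr hn0
  have hκN : κ ≤ Q.card := by
    obtain ⟨u, hu⟩ := Finset.card_pos.mp hn0
    exact (h.rich u hu).trans (Finset.card_filter_le _ _)
  have hκN' : κ' ≤ N := Nat.cast_le.mpr hκN
  have hNpos : 0 < N := by linarith
  set W : ℝ := ∑ x ∈ Q, (deg Λ x : ℝ) with hW
  have hnW : n * κ' ≤ W := by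
    have := h.mul_le_sum_deg
    rw [hW, hn, hκ', ← Nat.cast_sum]
    exact_mod_cast this
  -- it suffices to bound `n κ ^ (15 / 4)` by `N ^ (11 / 4)`, or `n κ` by `N`
  have suff1 : ∀ c : ℝ, c ≤ 8 * (36 * C) + 8 → n * κ' ^ ((15 : ℝ) / 4) ≤ c * N ^ ((11 : ℝ) / 4) →
      n ≤ (8 * (36 * C) + 8) * (N ^ ((11 : ℝ) / 4) / κ' ^ ((15 : ℝ) / 4) + N / κ') := by
    intro c hc hle
    have h1 : n ≤ c * (N ^ ((11 : ℝ) / 4) / κ' ^ ((15 : ℝ) / 4)) := by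
      rw [← mul_div_assoc, le_div_iff₀ (by positivity)]
      exact hle
    nlinarith [mul_le_mul_of_nonneg_right hc hrhs1, mul_nonneg (by positivity : 0 ≤ 8 * (36 * C) + 8) hrhs2]
  by_cases hW6 : W < 6 * N
  · have h1 : n ≤ 6 * (N / κ') := by
      rw [← mul_div_assoc, le_div_iff₀ hκ0]
      linarith
    nlinarith [mul_nonneg hC.le hrhs1, mul_nonneg hC.le hrhs2]
  rw [not_lt] at hW6
  have hWpos : 0 < W := by linarith
  have hκsq : κ' ^ 2 ≤ 2 * N := by
    have h1 : W ^ 2 ≤ N * (W + n ^ 2) := by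
      have := h.sum_deg_sq
      rw [hW, hn, hN, ← Nat.cast_sum]
      exact_mod_cast this
    have h2 : (n * κ') ^ 2 ≤ W ^ 2 := by gcongr
    have h3 : n ^ 2 * κ' ^ 2 ≤ n ^ 2 * (2 * N) := by nlinarith
    exact le_of_mul_le_mul_left h3 (by positivity)
  have hdeg : ∀ z : Fin 3 → ZMod p, z ≠ 0 → deg Λ z ≤ Q.card / (κ - 1) := by
    intro z hz
    rw [Nat.le_div_iff_mul_le (by omega)]
    exact h.deg_mul_le hz
  set k := Q.card / (κ - 1) with hk
  have hk1 : 1 ≤ k := by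
    rw [hk, Nat.le_div_iff_mul_le (by omega)]
    omega
  have hκ1 : ((κ - 1 : ℕ) : ℝ) = κ' - 1 := by rw [Nat.cast_sub (by omega), Nat.cast_one]
  have hkle : (k : ℝ) * κ' ≤ 2 * N := by
    have h1 : k * (κ - 1) ≤ Q.card := Nat.div_mul_le_self _ _
    have h2 : (k : ℝ) * (κ' - 1) ≤ N := by
      rw [← hκ1, hN, ← Nat.cast_mul]
      exact Nat.cast_le.mpr h1
    have hk0 : (0 : ℝ) ≤ k := Nat.cast_nonneg _
    nlinarith
  have hnN : n * κ' ^ 2 ≤ 2 * N ^ 2 := by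
    have h1 : W ≤ N * k := by
      rw [hW, hN, ← nsmul_eq_mul]
      exact Finset.sum_le_card_nsmul _ _ _ fun x hx => by exact_mod_cast hdeg x (h.point_ne x hx)
    nlinarith
  by_cases hκ7 : κ' ^ 7 ≤ 128 * N ^ 3
  · refine suff1 8 (by linarith) ?_
    have h1 : κ' ^ ((7 : ℝ) / 4) ≤ 4 * N ^ ((3 : ℝ) / 4) := by
      refine le_of_pow_le_pow_left₀ (n := 4) (by norm_num) (by positivity) ?_
      rw [mul_pow, ← Real.rpow_mul_natCast hκ0.le, ← Real.rpow_mul_natCast hN0]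
      norm_num
      linarith [pow_pos hNpos 3]
    have e1 : κ' ^ ((15 : ℝ) / 4) = κ' ^ 2 * κ' ^ ((7 : ℝ) / 4) := by
      rw [← Real.rpow_natCast, ← Real.rpow_add hκ0]
      norm_num
    have e2 : N ^ ((11 : ℝ) / 4) = N ^ 2 * N ^ ((3 : ℝ) / 4) := by
      rw [← Real.rpow_natCast, ← Real.rpow_add hNpos]
      norm_num
    calc n * κ' ^ ((15 : ℝ) / 4) = n * κ' ^ 2 * κ' ^ ((7 : ℝ) / 4) := by rw [e1]; ring
      _ ≤ 2 * N ^ 2 * (4 * N ^ ((3 : ℝ) / 4)) := by gcongr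
      _ = _ := by rw [e2]; ring
  rw [not_le] at hκ7
  have hnk : n * k * κ' ^ 3 ≤ 4 * N ^ 3 := by
    have hk0 : (0 : ℝ) ≤ k := Nat.cast_nonneg _
    calc n * k * κ' ^ 3 = n * κ' ^ 2 * (k * κ') := by ring
      _ ≤ 2 * N ^ 2 * (2 * N) := by gcongr
      _ = _ := by ring
  have h21 : (2 : ℝ) ^ 21 * N ^ 9 ≤ κ' ^ 21 := by
    calc (2 : ℝ) ^ 21 * N ^ 9 = (128 * N ^ 3) ^ 3 := by ring
      _ ≤ (κ' ^ 7) ^ 3 := by gcongr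
      _ = κ' ^ 21 := by ring
  have hnkN : n * k ≤ N ^ 2 := by
    have h1 : 4 * N ≤ κ' ^ 3 := by
      refine le_of_pow_le_pow_left₀ (n := 7) (by norm_num) (by positivity) ?_
      have : N ^ 7 ≤ N ^ 9 := pow_le_pow_right₀ (by linarith) (by norm_num)
      calc (4 * N) ^ 7 = 2 ^ 14 * N ^ 7 := by ring
        _ ≤ 2 ^ 21 * N ^ 9 := by gcongr <;> norm_num
        _ ≤ κ' ^ 21 := h21
        _ = _ := by ring
    have h2 : n * k * κ' ^ 3 ≤ N ^ 2 * κ' ^ 3 := by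
      calc _ ≤ 4 * N ^ 3 := hnk
        _ = N ^ 2 * (4 * N) := by ring
        _ ≤ _ := by gcongr
    exact le_of_mul_le_mul_right h2 (by positivity)
  have hp1 : (1 : ℝ) ≤ p := by exact_mod_cast (Fact.out : p.Prime).one_lt.le
  have hnkp : n * k ≤ (p : ℝ) ^ 2 / 2 := by
    have h13 : N ^ 13 ≤ (p : ℝ) ^ 15 := by
      calc N ^ 13 ≤ ((p : ℝ) ^ ((15 : ℝ) / 13)) ^ 13 := by gcongr
        _ = (p : ℝ) ^ 15 := by
          rw [← Real.rpow_mul_natCast (by positivity)]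
          norm_num
    have h12 : N ^ 12 ≤ (p : ℝ) ^ 14 := by
      refine le_of_pow_le_pow_left₀ (n := 13) (by norm_num) (by positivity) ?_
      calc (N ^ 12) ^ 13 = (N ^ 13) ^ 12 := by ring
        _ ≤ ((p : ℝ) ^ 15) ^ 12 := by gcongr
        _ = (p : ℝ) ^ 180 := by ring
        _ ≤ (p : ℝ) ^ 182 := pow_le_pow_right₀ hp1 (by norm_num)
        _ = _ := by ring
    have h1 : 8 * N ^ 3 ≤ κ' ^ 3 * (p : ℝ) ^ 2 := by
      refine le_of_pow_le_pow_left₀ (n := 7) (by norm_num) (by positivity) ?_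
      calc (8 * N ^ 3) ^ 7 = (2 ^ 21 * N ^ 9) * N ^ 12 := by ring
        _ ≤ κ' ^ 21 * (p : ℝ) ^ 14 := by gcongr
        _ = _ := by ring
    have h2 : n * k * κ' ^ 3 ≤ (p : ℝ) ^ 2 / 2 * κ' ^ 3 := by linarith
    exact le_of_mul_le_mul_right h2 (by positivity)
  have hup := hJ p Q Λ κ k h hk1 hn0 hdeg hnkp hnkN
  have hlow : (((∑ x ∈ Q, deg Λ x * ((deg Λ x - 1) * (deg Λ x - 1) - (deg Λ x - 1)) : ℕ)) : ℝ) *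
      ((κ' - 1) * (κ' - 1)) ≤ ((∑ q ∈ Q.offDiag, (gridPairs Q Λ q.1 q.2).card : ℕ) : ℝ) := by
    rw [← hκ1]
    exact_mod_cast h.sum_gridPairs
  have htri := sum_triple_ge Q (deg Λ) (Nat.cast_pos (α := ℝ) |>.mp hNpos) hW6
  rw [← hW, ← hN] at htri
  set S3 := (((∑ x ∈ Q, deg Λ x * ((deg Λ x - 1) * (deg Λ x - 1) - (deg Λ x - 1)) : ℕ)) : ℝ)
  set J := ((∑ q ∈ Q.offDiag, (gridPairs Q Λ q.1 q.2).card : ℕ) : ℝ)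
  have hS3 : 0 ≤ S3 := Nat.cast_nonneg _
  have hmain : κ' ^ 2 * W ^ 3 ≤ 36 * N ^ 2 * J := by
    have h1 : κ' ^ 2 ≤ 4 * ((κ' - 1) * (κ' - 1)) := by
      have h0 : 0 ≤ (κ' - 2) * (3 * κ' - 2) := mul_nonneg (by linarith) (by linarith)
      linarith only [h0]
    calc κ' ^ 2 * W ^ 3 ≤ (4 * ((κ' - 1) * (κ' - 1))) * (9 * N ^ 2 * S3) :=
          mul_le_mul h1 htri (by positivity) ((sq_nonneg κ').trans h1)
      _ = 36 * N ^ 2 * (S3 * ((κ' - 1) * (κ' - 1))) := by ring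
      _ ≤ _ := mul_le_mul_of_nonneg_left hlow (by positivity)
  have hs1 := sum_sqrt_le Q (deg Λ)
  have hs2 := sum_rpow_le Q (deg Λ)
  rw [← hW, ← hN] at hs1 hs2
  -- roots of the quantities involved, so that only integer powers remain
  obtain ⟨x, hx, hxN⟩ : ∃ x : ℝ, 0 < x ∧ x ^ 48 = N :=
    ⟨N ^ ((1 : ℝ) / (48 : ℕ)), by positivity, by
      rw [root_pow hN0 (by norm_num) 48 1 (by norm_num), Real.rpow_one]⟩
  have hroot : ∀ a : ℝ, 0 < a → ∃ y : ℝ, 0 < y ∧ y ^ 4 = a := fun a ha =>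
    ⟨a ^ ((1 : ℝ) / (4 : ℕ)), by positivity, by
      rw [root_pow ha.le (by norm_num) 4 1 (by norm_num), Real.rpow_one]⟩
  obtain ⟨y, hy, hyn⟩ := hroot n (by linarith)
  obtain ⟨z, hz, hzκ⟩ := hroot κ' hκ0
  obtain ⟨w, hw, hwW⟩ := hroot W hWpos
  have hpw : ∀ (a : ℝ), 0 < a → ∀ (m j : ℕ) (r : ℝ), (m : ℝ) * r = j → (a ^ m) ^ r = a ^ j := by
    intro a ha m j r hr
    rw [← Real.rpow_natCast, ← Real.rpow_mul ha.le, hr, Real.rpow_natCast]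
  have hsq1 : √(N * W) = x ^ 24 * w ^ 2 := by
    rw [← hxN, ← hwW]
    rw [show x ^ 48 * w ^ 4 = (x ^ 24 * w ^ 2) ^ 2 by ring, Real.sqrt_sq (by positivity)]
  have hsq2 : √n = y ^ 2 := by
    rw [← hyn, show y ^ 4 = (y ^ 2) ^ 2 by ring, Real.sqrt_sq (by positivity)]
  rw [hsq1] at hs1
  rw [show N ^ ((1 : ℝ) / 4) = x ^ 12 by rw [← hxN]; exact hpw x hx _ _ _ (by norm_num),
    show W ^ ((3 : ℝ) / 4) = w ^ 3 by rw [← hwW]; exact hpw w hw _ _ _ (by norm_num)] at hs2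
  rw [hsq2, show n ^ ((3 : ℝ) / 4) = y ^ 3 by rw [← hyn]; exact hpw y hy _ _ _ (by norm_num),
    show N ^ ((1 : ℝ) / 16) = x ^ 3 by rw [← hxN]; exact hpw x hx _ _ _ (by norm_num)] at hup
  have hup' : J ≤ C * (x ^ 36 * w ^ 5 * y ^ 3 + √k * y ^ 2 * x ^ 3 * x ^ 48 * w ^ 4) := by
    have p1 : 0 ≤ ∑ x ∈ Q, √(deg Λ x : ℝ) := by positivity
    have p2 : 0 ≤ ∑ x ∈ Q, (deg Λ x : ℝ) ^ ((3 : ℝ) / 4) := by positivity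
    calc J ≤ _ := hup
      _ ≤ C * (y ^ 3 * ((x ^ 24 * w ^ 2) * (x ^ 12 * w ^ 3)) +
          √k * y ^ 2 * x ^ 3 * ((x ^ 24 * w ^ 2) * (x ^ 24 * w ^ 2))) := by
        gcongr
      _ = _ := by ring
  have hfin := rich_lines_arith (36 * C) x y z w (√k) (by positivity) hx hy hz ?_ ?_ ?_ ?_
  · refine suff1 (8 * (36 * C) + 2) (by linarith) ?_
    rw [← hyn, show κ' ^ ((15 : ℝ) / 4) = z ^ 15 by
        rw [← hzκ]; exact hpw z hz _ _ _ (by norm_num),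
      show N ^ ((11 : ℝ) / 4) = x ^ 132 by rw [← hxN]; exact hpw x hx _ _ _ (by norm_num)]
    exact hfin
  · refine le_of_pow_le_pow_left₀ (n := 4) (by norm_num) hw.le ?_
    rw [mul_pow, hyn, hzκ, hwW]
    exact hnW
  · refine le_of_pow_le_pow_left₀ (n := 2) (by norm_num) (by positivity) ?_
    calc (√k * z ^ 2) ^ 2 = √k ^ 2 * z ^ 4 := by ring
      _ = k * κ' := by rw [Real.sq_sqrt (Nat.cast_nonneg _), hzκ]
      _ ≤ 2 * N := hkle
      _ ≤ 4 * N := by linarith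
      _ = (2 * x ^ 24) ^ 2 := by rw [← hxN]; ring
  · calc z ^ 8 = (z ^ 4) ^ 2 := by ring
      _ ≤ 2 * N := by rw [hzκ]; exact hκsq
      _ = _ := by rw [hxN]
  · calc z ^ 8 * w ^ 12 = (z ^ 4) ^ 2 * (w ^ 4) ^ 3 := by ring
      _ = κ' ^ 2 * W ^ 3 := by rw [hzκ, hwW]
      _ ≤ 36 * N ^ 2 * J := hmain
      _ ≤ 36 * N ^ 2 * (C * (x ^ 36 * w ^ 5 * y ^ 3 + √k * y ^ 2 * x ^ 3 * x ^ 48 * w ^ 4)) := by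
        gcongr
      _ = _ := by rw [← hxN]; ring

/-! ### Linear systems of cubics -/

/-- A finite family `Γ` of irreducible cubic polynomials inside a linear system `U` of polynomials
of degree at most three, pairwise not proportional, each having at least `k` zeros in `P`. -/
structure CubicFamily {p : ℕ} (P : Finset (Fin 2 → ZMod p))
    (U : Submodule (ZMod p) (MvPolynomial (Fin 2) (ZMod p)))
    (Γ : Finset (MvPolynomial (Fin 2) (ZMod p))) (k : ℕ) : Prop where
  le : U ≤ MvPolynomial.restrictTotalDegree (Fin 2) (ZMod p) 3
  mem : ∀ f ∈ Γ, f ∈ U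
  irr : ∀ f ∈ Γ, Irreducible f
  deg : ∀ f ∈ Γ, f.totalDegree = 3
  indep : ∀ f ∈ Γ, ∀ g ∈ Γ, f ≠ g → ∀ a : ZMod p, a • f ≠ g
  rich : ∀ f ∈ Γ, k ≤ (P.filter fun x => MvPolynomial.eval x f = 0).card

section Cubics

open MvPolynomial Matrix

variable {p : ℕ} [Fact p.Prime]

/-- Bézout for two cubics: an irreducible cubic that divides a polynomial of degree at most three
is proportional to it, and otherwise they have at most nine common zeros. -/
theorem card_common_zeros_le (f g : MvPolynomial (Fin 2) (ZMod p)) (hf : Irreducible f)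
    (hf3 : f.totalDegree = 3) (hg : g.totalDegree ≤ 3) (hfg : ∀ a : ZMod p, a • f ≠ g)
    (S : Finset (Fin 2 → ZMod p)) (hS : ∀ x ∈ S, eval x f = 0 ∧ eval x g = 0) :
    S.card ≤ 9 := by
  have hdvd : ¬ f ∣ g := by
    rintro ⟨h, rfl⟩
    have hh : h ≠ 0 := by
      rintro rfl
      exact hfg 0 (by simp)
    rw [totalDegree_mul_of_isDomain hf.ne_zero hh, hf3] at hg
    have h0 : h.totalDegree = 0 := by omega
    rw [totalDegree_eq_zero_iff_eq_C] at h0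
    refine hfg (coeff 0 h) ?_
    rw [smul_eq_C_mul, ← h0, mul_comm]
  have := bezout_plane f g hf.prime hdvd 3 hg S hS
  rw [hf3] at this
  omega

/-- Passing through a point at which a linear system does not vanish identically imposes exactly
one condition. -/
theorem finrank_inf_ker_eval (U : Submodule (ZMod p) (MvPolynomial (Fin 2) (ZMod p)))
    [FiniteDimensional (ZMod p) U] (x : Fin 2 → ZMod p) (hx : ∃ g ∈ U, eval x g ≠ 0) :
    Module.finrank (ZMod p) (U ⊓ LinearMap.ker (aeval x : _ →ₐ[ZMod p] ZMod p).toLinearMap :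
      Submodule (ZMod p) (MvPolynomial (Fin 2) (ZMod p))) + 1 = Module.finrank (ZMod p) U := by
  set φ := (aeval x : MvPolynomial (Fin 2) (ZMod p) →ₐ[ZMod p] ZMod p).toLinearMap
  have h1 : U ⊓ LinearMap.ker φ = (LinearMap.ker (φ.comp U.subtype)).map U.subtype := by
    rw [LinearMap.ker_comp, Submodule.map_comap_subtype]
  rw [h1, Submodule.finrank_map_subtype_eq]
  refine Module.Dual.finrank_ker_add_one_of_ne_zero (f := φ.comp U.subtype) ?_
  obtain ⟨g, hg, hgx⟩ := hx
  intro h0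
  apply hgx
  have := LinearMap.congr_fun h0 ⟨g, hg⟩
  simpa [φ, aeval_eq_eval] using this

theorem exists_not_proportional (U : Submodule (ZMod p) (MvPolynomial (Fin 2) (ZMod p)))
    (hU : 2 ≤ Module.finrank (ZMod p) U) (f : MvPolynomial (Fin 2) (ZMod p)) :
    ∃ g ∈ U, ∀ a : ZMod p, a • f ≠ g := by
  by_contra! hcon
  have hle : U ≤ Submodule.span (ZMod p) {f} := by
    intro g hg
    obtain ⟨a, ha⟩ := hcon g hg
    exact Submodule.mem_span_singleton.mpr ⟨a, ha⟩
  have h1 := Submodule.finrank_mono hle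
  have h2 := finrank_span_le_card (R := ZMod p) ({f} : Set (MvPolynomial (Fin 2) (ZMod p)))
  simp at h2
  omega

theorem CubicFamily.totalDegree_le {P : Finset (Fin 2 → ZMod p)}
    {U : Submodule (ZMod p) (MvPolynomial (Fin 2) (ZMod p))}
    {Γ : Finset (MvPolynomial (Fin 2) (ZMod p))} {k : ℕ} (h : CubicFamily P U Γ k)
    {g : MvPolynomial (Fin 2) (ZMod p)} (hg : g ∈ U) : g.totalDegree ≤ 3 :=
  (mem_restrictTotalDegree _ _ _).mp (h.le hg)

theorem CubicFamily.finiteDimensional {P : Finset (Fin 2 → ZMod p)}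
    {U : Submodule (ZMod p) (MvPolynomial (Fin 2) (ZMod p))}
    {Γ : Finset (MvPolynomial (Fin 2) (ZMod p))} {k : ℕ} (h : CubicFamily P U Γ k) :
    FiniteDimensional (ZMod p) U := by
  have h3 := finrank_restrictTotalDegree_two (k := ZMod p) 3
  have : FiniteDimensional (ZMod p) (restrictTotalDegree (Fin 2) (ZMod p) 3) :=
    FiniteDimensional.of_finrank_pos (by omega)
  exact Submodule.finiteDimensional_of_le h.le

/-- A member of a family inside a linear system of dimension at least two has at least `k - 9`
zeros in `P` off the base locus of the system. -/
theorem CubicFamily.nonbase {P : Finset (Fin 2 → ZMod p)}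
    {U : Submodule (ZMod p) (MvPolynomial (Fin 2) (ZMod p))}
    {Γ : Finset (MvPolynomial (Fin 2) (ZMod p))} {k : ℕ} (h : CubicFamily P U Γ k)
    (hU : 2 ≤ Module.finrank (ZMod p) U) {f : MvPolynomial (Fin 2) (ZMod p)} (hf : f ∈ Γ) :
    k - 9 ≤ ((P.filter fun x => ∃ g ∈ U, eval x g ≠ 0).filter fun x => eval x f = 0).card := by
  obtain ⟨g, hg, hfg⟩ := exists_not_proportional U hU f
  have h9 := card_common_zeros_le f g (h.irr f hf) (h.deg f hf) (h.totalDegree_le hg) hfg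
    ((P.filter fun x => eval x f = 0).filter fun x => ¬ ∃ g ∈ U, eval x g ≠ 0) (by
      intro x hx
      simp only [Finset.mem_filter] at hx
      refine ⟨hx.1.2, ?_⟩
      by_contra hne
      exact hx.2 ⟨g, hg, hne⟩)
  have h1 := Finset.card_filter_add_card_filter_not (s := P.filter fun x => eval x f = 0)
    (fun x => ∃ g ∈ U, eval x g ≠ 0)
  have h2 := h.rich f hf
  rw [Finset.filter_comm]
  omega

/-- Fixing a point of `P` on the curves lowers the dimension of the linear system by one. -/
theorem CubicFamily.step {P : Finset (Fin 2 → ZMod p)} {k r : ℕ} (hr : 1 ≤ r) (B : ℝ)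
    (hB : 0 ≤ B)
    (hstep : ∀ U Γ, CubicFamily P U Γ k → Module.finrank (ZMod p) U = r → (Γ.card : ℝ) ≤ B)
    {U : Submodule (ZMod p) (MvPolynomial (Fin 2) (ZMod p))}
    {Γ : Finset (MvPolynomial (Fin 2) (ZMod p))} (h : CubicFamily P U Γ k)
    (hU : Module.finrank (ZMod p) U = r + 1) :
    (Γ.card : ℝ) * ((k - 9 : ℕ) : ℝ) ≤ P.card * B := by
  have := h.finiteDimensional
  set P₀ := P.filter fun x => ∃ g ∈ U, eval x g ≠ 0 with hP₀
  have hcount := Finset.sum_card_bipartiteAbove_eq_sum_card_bipartiteBelow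
    (s := Γ) (t := P₀) (fun f x => eval x f = 0)
  have hlow : Γ.card * (k - 9) ≤ ∑ f ∈ Γ, (P₀.bipartiteAbove (fun f x => eval x f = 0) f).card := by
    rw [← smul_eq_mul]
    exact Finset.card_nsmul_le_sum _ _ _ fun f hf => h.nonbase (by omega) hf
  have hup : ((∑ x ∈ P₀, (Γ.bipartiteBelow (fun f x => eval x f = 0) x).card : ℕ) : ℝ) ≤
      P.card * B := by
    rw [Nat.cast_sum]
    calc ∑ x ∈ P₀, ((Γ.bipartiteBelow (fun f x => eval x f = 0) x).card : ℝ)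
        ≤ P₀.card • B := by
          refine Finset.sum_le_card_nsmul _ _ _ fun x hx => ?_
          have hx' := (Finset.mem_filter.mp hx).2
          refine hstep (U ⊓ LinearMap.ker (aeval x : _ →ₐ[ZMod p] ZMod p).toLinearMap) _ ?_ ?_
          · refine ⟨inf_le_left.trans h.le, ?_, ?_, ?_, ?_, ?_⟩
            · intro f hf
              obtain ⟨hf, hfx⟩ := Finset.mem_filter.mp hf
              refine ⟨h.mem f hf, ?_⟩
              simpa [aeval_eq_eval] using hfx
            · exact fun f hf => h.irr f (Finset.mem_filter.mp hf).1
            · exact fun f hf => h.deg f (Finset.mem_filter.mp hf).1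
            · exact fun f hf g hg => h.indep f (Finset.mem_filter.mp hf).1 g
                (Finset.mem_filter.mp hg).1
            · exact fun f hf => h.rich f (Finset.mem_filter.mp hf).1
          · have := finrank_inf_ker_eval U x hx'
            omega
      _ ≤ P.card * B := by
          rw [nsmul_eq_mul]
          have : P₀.card ≤ P.card := Finset.card_filter_le _ _
          gcongr
  calc (Γ.card : ℝ) * ((k - 9 : ℕ) : ℝ) = ((Γ.card * (k - 9) : ℕ) : ℝ) := by push_cast; ring
    _ ≤ ((∑ x ∈ P₀, (Γ.bipartiteBelow (fun f x => eval x f = 0) x).card : ℕ) : ℝ) := by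
        rw [← hcount]
        exact_mod_cast hlow
    _ ≤ _ := hup

/-- A net of cubics maps the plane, away from its base locus, to the projective plane so that
members of the net become lines. The fibres on a given irreducible member have at most nine points,
so a family with `k` points on each curve gives a family of lines with about `k / 9` points on
each line. -/
theorem CubicFamily.exists_richConfig {P : Finset (Fin 2 → ZMod p)}
    {U : Submodule (ZMod p) (MvPolynomial (Fin 2) (ZMod p))}
    {Γ : Finset (MvPolynomial (Fin 2) (ZMod p))} {k : ℕ} (h : CubicFamily P U Γ k)
    (hU : Module.finrank (ZMod p) U = 3) (hk : 11 ≤ k) :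
    ∃ (Q Λ : Finset (Fin 3 → ZMod p)) (κ : ℕ), RichConfig Q Λ κ ∧ 2 ≤ κ ∧ k ≤ 50 * κ ∧
      Q.card ≤ P.card ∧ Λ.card = Γ.card := by
  have := h.finiteDimensional
  let b := Module.finBasisOfFinrankEq (ZMod p) U hU
  have hu' : ∀ f ∈ U, ∃ c : Fin 3 → ZMod p,
      f = ∑ i, c i • (b i : MvPolynomial (Fin 2) (ZMod p)) := by
    intro f hf
    refine ⟨b.repr ⟨f, hf⟩, ?_⟩
    have := congrArg U.subtype (b.sum_repr ⟨f, hf⟩)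
    rw [map_sum] at this
    exact this.symm
  choose! u hu using hu'
  let v : (Fin 2 → ZMod p) → Fin 3 → ZMod p := fun x i =>
    eval x (b i : MvPolynomial (Fin 2) (ZMod p))
  have huv : ∀ f ∈ U, ∀ x, eval x f = u f ⬝ᵥ v x := by
    intro f hf x
    conv_lhs => rw [hu f hf]
    simp [v, dotProduct, smul_eval]
  have hv0 : ∀ x, (∃ g ∈ U, eval x g ≠ 0) ↔ v x ≠ 0 := by
    intro x
    constructor
    · rintro ⟨g, hg, hgx⟩ h0
      rw [huv g hg, h0] at hgx
      simp at hgx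
    · intro hne
      obtain ⟨i, hi⟩ := Function.ne_iff.mp hne
      exact ⟨b i, (b i).2, hi⟩
  -- a normal form for homogeneous coordinates
  let rep : (Fin 3 → ZMod p) → Fin 3 → ZMod p := fun w =>
    if hw : w ≠ 0 then (Projectivization.mk (ZMod p) w hw).rep else 0
  have hrep : ∀ w, w ≠ 0 → ∃ a : ZMod p, a ≠ 0 ∧ rep w = a • w := by
    intro w hw
    obtain ⟨a, ha⟩ := Projectivization.exists_smul_eq_mk_rep (ZMod p) w hw
    refine ⟨a, a.ne_zero, ?_⟩
    simp only [rep, dif_pos hw]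
    rw [← ha]
    rfl
  have hrep_eq : ∀ w w', w ≠ 0 → w' ≠ 0 → (∃ a : ZMod p, a • w = w') → rep w = rep w' := by
    intro w w' hw hw' ha
    simp only [rep, dif_pos hw, dif_pos hw']
    congr 1
    exact ((Projectivization.mk_eq_mk_iff' (ZMod p) w' w hw' hw).mpr ha).symm
  have hcross : ∀ w w' : Fin 3 → ZMod p, w ≠ 0 → w ⨯₃ w' = 0 → ∃ a : ZMod p, a • w = w' := by
    intro w w' hw h0
    by_contra! hne
    exact crossProduct_ne_zero_iff_linearIndependent.mpr
      ((LinearIndependent.pair_iff' hw).mpr hne) h0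
  set P₀ := P.filter fun x => ∃ g ∈ U, eval x g ≠ 0 with hP₀
  have hu0 : ∀ f ∈ Γ, u f ≠ 0 := by
    intro f hf h0
    apply (h.irr f hf).ne_zero
    rw [hu f (h.mem f hf), h0]
    simp
  have hlc : ∀ f ∈ Γ, ∀ g ∈ Γ, f ≠ g → u f ⨯₃ u g ≠ 0 := by
    intro f hf g hg hfg h0
    obtain ⟨a, ha⟩ := hcross _ _ (hu0 f hf) h0
    refine h.indep f hf g hg hfg a ?_
    conv_rhs => rw [hu g (h.mem g hg), ← ha]
    conv_lhs => rw [hu f (h.mem f hf)]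
    rw [Finset.smul_sum]
    simp [mul_smul]
  refine ⟨P₀.image (rep ∘ v), Γ.image u, max 2 ((k + 49) / 50), ⟨?_, ?_, ?_, ?_, ?_⟩,
    le_max_left _ _, by omega, Finset.card_image_le.trans (Finset.card_filter_le _ _), ?_⟩
  · intro q hq
    obtain ⟨x, hx, rfl⟩ := Finset.mem_image.mp hq
    have hvx := (hv0 x).mp (Finset.mem_filter.mp hx).2
    obtain ⟨a, ha, he⟩ := hrep (v x) hvx
    rw [Function.comp_apply, he]
    exact smul_ne_zero ha hvx
  · intro w hw
    obtain ⟨f, hf, rfl⟩ := Finset.mem_image.mp hw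
    exact hu0 f hf
  · intro q hq q' hq' hne h0
    obtain ⟨x, hx, rfl⟩ := Finset.mem_image.mp hq
    obtain ⟨y, hy, rfl⟩ := Finset.mem_image.mp hq'
    have hvx := (hv0 x).mp (Finset.mem_filter.mp hx).2
    have hvy := (hv0 y).mp (Finset.mem_filter.mp hy).2
    obtain ⟨a, ha, he⟩ := hrep (v x) hvx
    obtain ⟨b, hb, he'⟩ := hrep (v y) hvy
    apply hne
    rw [Function.comp_apply, Function.comp_apply] at h0 ⊢
    rw [he, he'] at h0
    refine hrep_eq _ _ hvx hvy (hcross _ _ hvx ?_)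
    simpa [ha, hb] using h0
  · intro w hw w' hw' hne
    obtain ⟨f, hf, rfl⟩ := Finset.mem_image.mp hw
    obtain ⟨g, hg, rfl⟩ := Finset.mem_image.mp hw'
    exact hlc f hf g hg fun hfg => hne (by rw [hfg])
  · intro w hw
    obtain ⟨f, hf, rfl⟩ := Finset.mem_image.mp hw
    set T := P₀.filter fun x => eval x f = 0 with hT
    have hTk : k - 9 ≤ T.card := h.nonbase (by omega) hf
    have hTv : ∀ x ∈ T, v x ≠ 0 := fun x hx =>
      (hv0 x).mp (Finset.mem_filter.mp (Finset.mem_filter.mp hx).1).2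
    have hsub : T.image (rep ∘ v) ⊆
        (P₀.image (rep ∘ v)).filter fun q => u f ⬝ᵥ q = 0 := by
      intro q hq
      obtain ⟨x, hx, rfl⟩ := Finset.mem_image.mp hq
      refine Finset.mem_filter.mpr ⟨Finset.mem_image_of_mem _ (Finset.mem_filter.mp hx).1, ?_⟩
      obtain ⟨a, ha, he⟩ := hrep (v x) (hTv x hx)
      rw [Function.comp_apply, he, dotProduct_smul, ← huv f (h.mem f hf),
        (Finset.mem_filter.mp hx).2, smul_zero]
    -- the zeros of `f` in the base locus and in one fibre lie on a second member of the net
    have hfib : ∀ x₀ ∈ T, ((P.filter fun x => eval x f = 0).filter fun x =>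
        v x = 0 ∨ rep (v x) = rep (v x₀)).card ≤ 9 := by
      intro x₀ hx₀
      have hd := finrank_inf_ker_eval U x₀ ((hv0 x₀).mpr (hTv x₀ hx₀))
      obtain ⟨g, hg, hfg⟩ := exists_not_proportional
        (U ⊓ LinearMap.ker (aeval x₀ : _ →ₐ[ZMod p] ZMod p).toLinearMap) (by omega) f
      obtain ⟨hgU, hgx⟩ := Submodule.mem_inf.mp hg
      have hgx' : eval x₀ g = 0 := by simpa [aeval_eq_eval] using hgx
      refine card_common_zeros_le f g (h.irr f hf) (h.deg f hf) (h.totalDegree_le hgU) hfg _ ?_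
      intro x hx
      simp only [Finset.mem_filter] at hx
      refine ⟨hx.1.2, ?_⟩
      rw [huv g hgU]
      by_cases hvx : v x = 0
      · rw [hvx, dotProduct_zero]
      · obtain ⟨a, ha, he⟩ := hrep (v x) hvx
        obtain ⟨a', ha', he'⟩ := hrep (v x₀) (hTv x₀ hx₀)
        have heq := hx.2.resolve_left hvx
        rw [he, he'] at heq
        have h1 := congrArg (fun q => u g ⬝ᵥ q) heq
        simp only [dotProduct_smul, ← huv g hgU, hgx', smul_eq_mul, mul_zero] at h1
        rw [← huv g hgU]
        exact (mul_eq_zero.mp h1).resolve_left ha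
    have h9 : T.card ≤ 9 * (T.image (rep ∘ v)).card := by
      refine Finset.card_le_mul_card_image T 9 ?_
      intro q hq
      obtain ⟨x₀, hx₀, rfl⟩ := Finset.mem_image.mp hq
      refine (Finset.card_le_card ?_).trans (hfib x₀ hx₀)
      intro x hx
      simp only [Finset.mem_filter, hT, hP₀, Function.comp_apply] at hx ⊢
      exact ⟨⟨hx.1.1.1, hx.1.2⟩, Or.inr hx.2⟩
    have h2 : 2 ≤ (T.image (rep ∘ v)).card := by
      by_contra hlt
      obtain ⟨x₀, hx₀⟩ : T.Nonempty := Finset.card_pos.mp (by omega)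
      have hall : ∀ x ∈ T, rep (v x) = rep (v x₀) := fun x hx =>
        Finset.card_le_one.mp (by omega) _ (Finset.mem_image_of_mem (rep ∘ v) hx) _
          (Finset.mem_image_of_mem (rep ∘ v) hx₀)
      have h1 := hfib x₀ hx₀
      rw [Finset.filter_true_of_mem] at h1
      · have := h.rich f hf
        omega
      · intro x hx
        by_cases hvx : v x = 0
        · exact Or.inl hvx
        · refine Or.inr (hall x ?_)
          obtain ⟨hxP, hxf⟩ := Finset.mem_filter.mp hx
          exact Finset.mem_filter.mpr ⟨Finset.mem_filter.mpr ⟨hxP, (hv0 x).mpr hvx⟩, hxf⟩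
    have h3 := Finset.card_le_card hsub
    omega
  · refine Finset.card_image_of_injOn ?_
    intro f hf g hg hfg
    by_contra hne
    refine hlc f hf g hg hne ?_
    rw [hfg, cross_self]

end Cubics

/-! ### Rich cubic curves -/

/-- The bound for a net of cubics, from the bound for rich lines. -/
theorem card_le_of_net : ∃ C : ℝ, 0 < C ∧ ∀ (p : ℕ) [Fact p.Prime]
    (P : Finset (Fin 2 → ZMod p)) (k : ℕ), (P.card : ℝ) ≤ (p : ℝ) ^ ((15 : ℝ) / 13) → 11 ≤ k →
    ∀ U Γ, CubicFamily P U Γ k → Module.finrank (ZMod p) U = 3 →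
    (Γ.card : ℝ) ≤ C * ((P.card : ℝ) ^ ((11 : ℝ) / 4) / (k : ℝ) ^ ((15 : ℝ) / 4) +
      (P.card : ℝ) / k) := by
  obtain ⟨C, hC, hlines⟩ := rich_lines
  refine ⟨C * 50 ^ 4, by positivity, ?_⟩
  intro p _ P k hP hk U Γ h hU
  obtain ⟨Q, Λ, κ, hQ, hκ, hkκ, hQP, hΛ⟩ := h.exists_richConfig hU hk
  have hQP' : (Q.card : ℝ) ≤ P.card := Nat.cast_le.mpr hQP
  have h1 := hlines p Q Λ κ hQ hκ (hQP'.trans hP)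
  rw [hΛ] at h1
  have hk0 : (0 : ℝ) < k := Nat.cast_pos.mpr (by omega)
  have hκ0 : (0 : ℝ) < κ := Nat.cast_pos.mpr (by omega)
  have hkκ' : (k : ℝ) / 50 ≤ κ := by
    rw [div_le_iff₀ (by norm_num), mul_comm]
    exact_mod_cast hkκ
  have h50 : (50 : ℝ) ^ ((15 : ℝ) / 4) ≤ 50 ^ 4 := by
    rw [← Real.rpow_natCast]
    exact Real.rpow_le_rpow_of_exponent_le (by norm_num) (by norm_num)
  have e1 : (Q.card : ℝ) ^ ((11 : ℝ) / 4) / (κ : ℝ) ^ ((15 : ℝ) / 4) ≤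
      50 ^ 4 * ((P.card : ℝ) ^ ((11 : ℝ) / 4) / (k : ℝ) ^ ((15 : ℝ) / 4)) := by
    calc (Q.card : ℝ) ^ ((11 : ℝ) / 4) / (κ : ℝ) ^ ((15 : ℝ) / 4)
        ≤ (P.card : ℝ) ^ ((11 : ℝ) / 4) / ((k : ℝ) / 50) ^ ((15 : ℝ) / 4) := by gcongr
      _ = 50 ^ ((15 : ℝ) / 4) * ((P.card : ℝ) ^ ((11 : ℝ) / 4) / (k : ℝ) ^ ((15 : ℝ) / 4)) := by
        rw [Real.div_rpow hk0.le (by norm_num)]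
        field_simp
      _ ≤ _ := by gcongr
  have e2 : (Q.card : ℝ) / κ ≤ 50 ^ 4 * ((P.card : ℝ) / k) := by
    calc (Q.card : ℝ) / κ ≤ (P.card : ℝ) / ((k : ℝ) / 50) := by gcongr
      _ = 50 * ((P.card : ℝ) / k) := by field_simp
      _ ≤ _ := by gcongr; norm_num
  calc (Γ.card : ℝ) ≤ _ := h1
    _ ≤ C * (50 ^ 4 * ((P.card : ℝ) ^ ((11 : ℝ) / 4) / (k : ℝ) ^ ((15 : ℝ) / 4)) +
        50 ^ 4 * ((P.card : ℝ) / k)) := by gcongr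
    _ = _ := by ring

/-- Iterating `CubicFamily.step` to pass from nets to linear systems of dimension `3 + j`. -/
theorem card_le_of_finrank {p : ℕ} [Fact p.Prime] {P : Finset (Fin 2 → ZMod p)} {k : ℕ}
    (hk : 11 ≤ k) (B : ℝ) (hB : 0 ≤ B)
    (hnet : ∀ U Γ, CubicFamily P U Γ k → Module.finrank (ZMod p) U = 3 → (Γ.card : ℝ) ≤ B)
    (j : ℕ) : ∀ U Γ, CubicFamily P U Γ k → Module.finrank (ZMod p) U = 3 + j →
    (Γ.card : ℝ) ≤ (P.card / ((k - 9 : ℕ) : ℝ)) ^ j * B := by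
  induction j with
  | zero => simpa using hnet
  | succ j ih =>
    intro U Γ h hU
    have h9 : (0 : ℝ) < ((k - 9 : ℕ) : ℝ) := Nat.cast_pos.mpr (by omega)
    have h1 := h.step (r := 3 + j) (by omega) _ (by positivity) ih (by omega)
    rw [← le_div_iff₀ h9] at h1
    refine h1.trans (le_of_eq ?_)
    ring

/-- The family of chosen equations of the `k`-rich curves. -/
theorem exists_cubicFamily {p : ℕ} [Fact p.Prime] (P : Finset (Fin 2 → ZMod p))
    (C : Finset (Set (Fin 2 → ZMod p))) (hC : ∀ γ ∈ C, IsIrredCubic γ) (k : ℕ) :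
    ∃ Γ, CubicFamily P (MvPolynomial.restrictTotalDegree (Fin 2) (ZMod p) 3) Γ k ∧
      Γ.card = (richCurves P C k).card := by
  unfold IsIrredCubic at hC
  choose! F hirr hdeg hzero using hC
  have hmem : ∀ γ ∈ richCurves P C k, γ ∈ C := fun γ hγ => (Finset.mem_filter.mp hγ).1
  refine ⟨(richCurves P C k).image F, ⟨le_rfl, ?_, ?_, ?_, ?_, ?_⟩, ?_⟩
  · intro f hf
    obtain ⟨γ, hγ, rfl⟩ := Finset.mem_image.mp hf
    rw [MvPolynomial.mem_restrictTotalDegree]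
    exact (hdeg γ (hmem γ hγ)).le
  · intro f hf
    obtain ⟨γ, hγ, rfl⟩ := Finset.mem_image.mp hf
    exact hirr γ (hmem γ hγ)
  · intro f hf
    obtain ⟨γ, hγ, rfl⟩ := Finset.mem_image.mp hf
    exact hdeg γ (hmem γ hγ)
  · intro f hf g hg hne a ha
    obtain ⟨γ, hγ, rfl⟩ := Finset.mem_image.mp hf
    obtain ⟨δ, hδ, rfl⟩ := Finset.mem_image.mp hg
    have ha0 : a ≠ 0 := by
      rintro rfl
      exact (hirr δ (hmem δ hδ)).ne_zero (by rw [← ha, zero_smul])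
    apply hne
    congr 1
    rw [hzero γ (hmem γ hγ), hzero δ (hmem δ hδ)]
    ext x
    simp [zeroSet, ← ha, MvPolynomial.smul_eval, ha0]
  · intro f hf
    obtain ⟨γ, hγ, rfl⟩ := Finset.mem_image.mp hf
    refine (Finset.mem_filter.mp hγ).2.1.trans (Finset.card_le_card ?_)
    intro x hx
    obtain ⟨hxP, hxγ⟩ := Finset.mem_filter.mp hx
    rw [hzero γ (hmem γ hγ)] at hxγ
    exact Finset.mem_filter.mpr ⟨hxP, hxγ⟩
  · refine Finset.card_image_of_injOn ?_
    intro γ hγ δ hδ he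
    rw [hzero γ (hmem γ hγ), hzero δ (hmem δ hδ), he]

theorem rich_curves_bound :
    ∃ c : ℝ, 0 < c ∧ ∀ p : ℕ, p.Prime →
      ∀ (P : Finset (Fin 2 → ZMod p)) (C : Finset (Set (Fin 2 → ZMod p))),
        (P.card : ℝ) ≤ (p : ℝ) ^ ((15 : ℝ) / 13) →
        (∀ γ ∈ C, IsIrredCubic γ) →
        ∀ k : ℕ, 11 ≤ k →
          ((richCurves P C k).card : ℝ) ≤
            c * ((P.card : ℝ) ^ ((39 : ℝ) / 4) / (k : ℝ) ^ ((43 : ℝ) / 4)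
              + (P.card : ℝ) ^ (8 : ℝ) / (k : ℝ) ^ (8 : ℝ)) := by
  obtain ⟨K, hK, hnet⟩ := card_le_of_net
  refine ⟨6 ^ 7 * K, by positivity, ?_⟩
  intro p hp P C hP hC k hk
  have : Fact p.Prime := ⟨hp⟩
  obtain ⟨Γ, hΓ, hcard⟩ := exists_cubicFamily P C hC k
  -- the space of polynomials of degree at most three has dimension ten
  have h10 : Module.finrank (ZMod p) (MvPolynomial.restrictTotalDegree (Fin 2) (ZMod p) 3) =
      3 + 7 := by
    have := finrank_restrictTotalDegree_two (k := ZMod p) 3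
    omega
  have h1 := card_le_of_finrank hk _ (by positivity) (hnet p P k hP hk) 7 _ Γ hΓ h10
  rw [hcard] at h1
  set N : ℝ := (P.card : ℝ) with hN
  have hN0 : 0 ≤ N := Nat.cast_nonneg _
  have hk0 : (0 : ℝ) < k := Nat.cast_pos.mpr (by omega)
  have hk9 : (k : ℝ) / 6 ≤ ((k - 9 : ℕ) : ℝ) := by
    have : k ≤ 6 * (k - 9) := by omega
    have : (k : ℝ) ≤ 6 * ((k - 9 : ℕ) : ℝ) := by exact_mod_cast this
    linarith
  have eN : N ^ 7 * N ^ ((11 : ℝ) / 4) = N ^ ((39 : ℝ) / 4) := by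
    rw [← Real.rpow_natCast, ← Real.rpow_add_of_nonneg hN0 (by norm_num) (by norm_num)]
    norm_num
  have ek : (k : ℝ) ^ 7 * (k : ℝ) ^ ((15 : ℝ) / 4) = (k : ℝ) ^ ((43 : ℝ) / 4) := by
    rw [← Real.rpow_natCast, ← Real.rpow_add hk0]
    norm_num
  have e8 : ∀ x : ℝ, x ^ (8 : ℝ) = x ^ 7 * x := by
    intro x
    rw [← pow_succ, ← Real.rpow_natCast]
    norm_num
  calc ((richCurves P C k).card : ℝ) ≤ _ := h1
    _ ≤ (N / ((k : ℝ) / 6)) ^ 7 *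
        (K * (N ^ ((11 : ℝ) / 4) / (k : ℝ) ^ ((15 : ℝ) / 4) + N / k)) := by
      gcongr
    _ = 6 ^ 7 * K * ((N ^ 7 * N ^ ((11 : ℝ) / 4)) / ((k : ℝ) ^ 7 * (k : ℝ) ^ ((15 : ℝ) / 4)) +
        (N ^ 7 * N) / ((k : ℝ) ^ 7 * k)) := by
      field_simp
    _ = _ := by rw [eN, ek, e8, e8]
end
end

section
/- Let p be a prime, let f ∈ F_p[X,Y] be an irreducible polynomial of total degree 3, and let g ∈ F_p[X,Y] be a nonzero polynomial of total degree at most 2. Then |Z(f) ∩ Z(g)| ≤ 6. In particular, no seven points of an irreducible cubic curve lie on a common conic. -/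
/-!
Bézout's inequality by counting dimensions. Write `R_d` for the space of polynomials in two
variables of total degree at most `d`, so `dim R_d = (d + 1)(d + 2) / 2`. Let `m = deg f`,
`e = deg g`, and let `S` be the set of common zeros.

If `N` is large, evaluation `R_(N + m + e) → K^S` is surjective, so its kernel has codimension
`|S|` (`exists_interpolation_degree`). This kernel contains the image of
`φ : R_(N + e) × R_(N + m) → R_(N + m + e)`, `(a, b) ↦ f a + g b`. As `f` is irreducible (hence
prime) and does not divide `g`, any syzygy `f a + g b = 0` has the form `(a, b) = (-g c, f c)` with
`c ∈ R_N`, so `dim ker φ ≤ dim R_N` (`finrank_ker_syzygy_le`). Therefore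
`|S| ≤ dim R_(N + m + e) - dim R_(N + e) - dim R_(N + m) + dim R_N = m e`.
For `m = 3` and `e ≤ 2` this is at most `6`, and `f ∤ g` holds for degree reasons. This argument
needs neither coordinate changes nor an extension of the base field.
-/

noncomputable section

open MvPolynomial Module

/-- The number of monomials of degree at most `d` in two variables, doubled to avoid division. -/
theorem two_mul_finrank_restrictTotalDegree (K : Type*) [Field K] (d : ℕ) :
    2 * finrank K (restrictTotalDegree (Fin 2) K d) = (d + 1) * (d + 2) := by
  have h1 : finrank K (restrictTotalDegree (Fin 2) K d)
      = Nat.card {n : Fin 2 →₀ ℕ | (n.sum fun _ e => e) ≤ d} :=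
    finrank_eq_nat_card_basis (basisRestrictSupport K _)
  let E : (Fin 2 →₀ ℕ) ≃ ℕ × ℕ := Finsupp.equivFunOnFinite.trans (finTwoArrowEquiv ℕ)
  let T : Finset (ℕ × ℕ) := (Finset.range (d + 1)).biUnion Finset.HasAntidiagonal.antidiagonal
  have h2 : Nat.card {n : Fin 2 →₀ ℕ | (n.sum fun _ e => e) ≤ d} = Nat.card T := by
    refine Nat.card_congr (E.subtypeEquiv fun n => ?_)
    simp [E, T, Finsupp.sum_fintype, Fin.sum_univ_two]
  have h3 : T.card = ∑ i ∈ Finset.range (d + 1), (i + 1) := by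
    rw [Finset.card_biUnion]
    · simp
    · intro i _ j _ hij
      rw [Function.onFun, Finset.disjoint_left]
      rintro ⟨a, b⟩ ha hb
      rw [Finset.HasAntidiagonal.mem_antidiagonal] at ha hb
      exact hij (ha.symm.trans hb)
  rw [h1, h2, Nat.card_eq_fintype_card, Fintype.card_coe, h3]
  clear h1 h2 h3 E T
  induction d with
  | zero => simp
  | succ k ih => rw [Finset.sum_range_succ, mul_add, ih]; ring

/-- Over a finite field, every function on the plane is a polynomial function, and a single degree
bound works for all (finitely many) functions. -/
theorem exists_interpolation_degree (K : Type*) [Field K] [Finite K] :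
    ∃ N : ℕ, ∀ u : (Fin 2 → K) → K, ∃ q : MvPolynomial (Fin 2) K,
      q.totalDegree ≤ N ∧ ∀ x, eval x q = u x := by
  cases nonempty_fintype K
  have h : ∀ u : (Fin 2 → K) → K, ∃ q : MvPolynomial (Fin 2) K, ∀ x, eval x q = u x := by
    intro u
    have hu : u ∈ (restrictDegree (Fin 2) K (Fintype.card K - 1)).map (evalₗ K (Fin 2)) := by
      rw [map_restrict_dom_evalₗ]; trivial
    obtain ⟨q, -, hq⟩ := Submodule.mem_map.1 hu
    exact ⟨q, fun x => congrFun hq x⟩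
  choose q hq using h
  obtain ⟨N, hN⟩ := (Set.finite_range fun u => (q u).totalDegree).bddAbove
  exact ⟨N, fun u => ⟨q u, hN ⟨u, rfl⟩, hq u⟩⟩

/-- The map `(a, b) ↦ f a + g b` with `a` and `b` of bounded degree. -/
def combination {K : Type*} [Field K] (f g : MvPolynomial (Fin 2) K) (r s : ℕ) :
    (restrictTotalDegree (Fin 2) K r × restrictTotalDegree (Fin 2) K s) →ₗ[K]
      MvPolynomial (Fin 2) K :=
  (LinearMap.mulLeft K f ∘ₗ Submodule.subtype _).coprod
    (LinearMap.mulLeft K g ∘ₗ Submodule.subtype _)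

theorem combination_apply {K : Type*} [Field K] (f g : MvPolynomial (Fin 2) K) (r s : ℕ)
    (v : restrictTotalDegree (Fin 2) K r × restrictTotalDegree (Fin 2) K s) :
    combination f g r s v = f * (v.1 : MvPolynomial (Fin 2) K) + g * (v.2 : MvPolynomial _ K) :=
  rfl

/-- Syzygies of `(f, g)` are multiples of the Koszul syzygy `(-g, f)`, and a multiplier `c` is
determined by its product with `f`, which also bounds its degree. -/
theorem finrank_ker_syzygy_le {K : Type*} [Field K] (f g : MvPolynomial (Fin 2) K)
    (hf : Irreducible f) (hfg : ¬ f ∣ g) (N : ℕ) :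
    finrank K (LinearMap.ker (combination f g (N + g.totalDegree) (N + f.totalDegree)))
      ≤ finrank K (restrictTotalDegree (Fin 2) K N) := by
  have key : ∀ v : LinearMap.ker (combination f g (N + g.totalDegree) (N + f.totalDegree)),
      ∃ c : restrictTotalDegree (Fin 2) K N,
        (v.1.2 : MvPolynomial (Fin 2) K) = f * (c : MvPolynomial (Fin 2) K) := by
    rintro ⟨⟨⟨a, ha⟩, ⟨b, hb⟩⟩, hv⟩
    rw [LinearMap.mem_ker, combination_apply] at hv
    simp only at hv ⊢
    have hdvd : f ∣ g * b := ⟨-a, by linear_combination hv⟩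
    obtain ⟨c, rfl⟩ := (hf.prime.dvd_or_dvd hdvd).resolve_left hfg
    refine ⟨⟨c, ?_⟩, rfl⟩
    rw [mem_restrictTotalDegree] at hb ⊢
    by_cases hc : c = 0
    · simp [hc]
    · rw [totalDegree_mul_of_isDomain hf.ne_zero hc] at hb
      omega
  choose c hc using key
  have hinj : ∀ x y : MvPolynomial (Fin 2) K, f * x = f * y → x = y :=
    fun x y h => mul_left_cancel₀ hf.ne_zero h
  let L : LinearMap.ker (combination f g (N + g.totalDegree) (N + f.totalDegree)) →ₗ[K]
      restrictTotalDegree (Fin 2) K N :=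
    { toFun := c
      map_add' := fun v w => Subtype.ext <| hinj _ _ <| by
        rw [← hc]
        simp only [Submodule.coe_add, Prod.snd_add, mul_add, ← hc]
      map_smul' := fun t v => Subtype.ext <| hinj _ _ <| by
        rw [← hc]
        simp only [Submodule.coe_smul, Prod.smul_snd, RingHom.id_apply, mul_smul_comm, ← hc] }
  refine LinearMap.finrank_le_finrank_of_injective (f := L) ?_
  rintro ⟨⟨⟨a, ha⟩, ⟨b, hb⟩⟩, hv⟩ ⟨⟨⟨a', ha'⟩, ⟨b', hb'⟩⟩, hv'⟩ h
  have h0 : c ⟨⟨⟨a, ha⟩, ⟨b, hb⟩⟩, hv⟩ = c ⟨⟨⟨a', ha'⟩, ⟨b', hb'⟩⟩, hv'⟩ := h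
  have hbb : b = b' :=
    (hc ⟨⟨⟨a, ha⟩, ⟨b, hb⟩⟩, hv⟩).trans (h0 ▸ (hc ⟨⟨⟨a', ha'⟩, ⟨b', hb'⟩⟩, hv'⟩).symm)
  subst hbb
  rw [LinearMap.mem_ker, combination_apply] at hv hv'
  have haa : a = a' := hinj _ _ (add_right_cancel (hv.trans hv'.symm))
  subst haa
  rfl

/-- Bézout's inequality for an irreducible plane curve over a finite field. -/
theorem ncard_common_zeros_le {K : Type*} [Field K] [Finite K] (f g : MvPolynomial (Fin 2) K)
    (hf : Irreducible f) (hfg : ¬ f ∣ g) :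
    {x : Fin 2 → K | eval x f = 0 ∧ eval x g = 0}.ncard ≤ f.totalDegree * g.totalDegree := by
  cases nonempty_fintype K
  obtain ⟨N, hN⟩ := exists_interpolation_degree K
  set S := {x : Fin 2 → K | eval x f = 0 ∧ eval x g = 0} with hS
  set m := f.totalDegree with hm
  set e := g.totalDegree with he
  let ev : restrictTotalDegree (Fin 2) K (N + m + e) →ₗ[K] (S → K) :=
    LinearMap.pi (fun x => (aeval (R := K) (x : Fin 2 → K)).toLinearMap ∘ₗ Submodule.subtype _)
  have ev_apply : ∀ q x, ev q x = eval (x : Fin 2 → K) (q : MvPolynomial (Fin 2) K) := by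
    intro q x
    simp [ev, aeval_eq_eval]
  have hsurj : LinearMap.range ev = ⊤ := by
    classical
    rw [LinearMap.range_eq_top]
    intro u
    obtain ⟨q, hq, hqu⟩ := hN (fun x => if hx : x ∈ S then u ⟨x, hx⟩ else 0)
    refine ⟨⟨q, (mem_restrictTotalDegree _ _ _).2 (by omega)⟩, ?_⟩
    ext x
    rw [ev_apply, hqu, dif_pos x.2]
  have hev := ev.finrank_range_add_finrank_ker
  have hcard : finrank K (S → K) = S.ncard := by
    cases nonempty_fintype S
    rw [← Nat.card_coe_set_eq, Module.finrank_fintype_fun_eq_card, Nat.card_eq_fintype_card]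
  rw [hsurj, finrank_top, hcard] at hev
  have hle : LinearMap.range (combination f g (N + e) (N + m))
      ≤ (LinearMap.ker ev).map (Submodule.subtype _) := by
    rintro _ ⟨⟨⟨a, ha⟩, ⟨b, hb⟩⟩, rfl⟩
    rw [combination_apply]
    rw [mem_restrictTotalDegree] at ha hb
    have hdeg : (f * a + g * b).totalDegree ≤ N + m + e := by
      have h1 := totalDegree_mul f a
      have h2 := totalDegree_mul g b
      exact (totalDegree_add _ _).trans (max_le (by omega) (by omega))
    refine ⟨⟨_, (mem_restrictTotalDegree _ _ _).2 hdeg⟩, ?_, rfl⟩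
    rw [SetLike.mem_coe, LinearMap.mem_ker]
    ext x
    rw [ev_apply]
    simp [x.2.1, x.2.2]
  have hrk := Submodule.finrank_mono hle
  rw [Submodule.finrank_map_subtype_eq] at hrk
  have hφ := (combination f g (N + e) (N + m)).finrank_range_add_finrank_ker
  rw [Module.finrank_prod] at hφ
  have hker := finrank_ker_syzygy_le f g hf hfg N
  have d1 := two_mul_finrank_restrictTotalDegree K N
  have d2 := two_mul_finrank_restrictTotalDegree K (N + e)
  have d3 := two_mul_finrank_restrictTotalDegree K (N + m)
  have d4 := two_mul_finrank_restrictTotalDegree K (N + m + e)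
  nlinarith

theorem bezout_cubic_conic
    (p : ℕ) (hp : p.Prime) (f g : MvPolynomial (Fin 2) (ZMod p))
    (hf : Irreducible f) (hfdeg : f.totalDegree = 3)
    (hg : g ≠ 0) (hgdeg : g.totalDegree ≤ 2) :
    (zeroSet f ∩ zeroSet g).ncard ≤ 6 := by
  have : Fact p.Prime := ⟨hp⟩
  have hfg : ¬ f ∣ g := by
    rintro ⟨c, rfl⟩
    rw [totalDegree_mul_of_isDomain hf.ne_zero (right_ne_zero_of_mul hg)] at hgdeg
    omega
  have h := ncard_common_zeros_le f g hf hfg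
  rw [hfdeg] at h
  exact h.trans (by omega)
end
end
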